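/- Let s ∈ (0,1), let F : ℝⁿ×(0,∞) → ℝ be smooth with ∫₀^∞∫_{ℝⁿ} |F(x,z)| dx dz < ∞, and let V : ℝⁿ×[0,∞) → ℝ be smooth with ∫₀^∞∫_{ℝⁿ} |∇̃V(x,z)|² z^{1−2s} dx dz < ∞, V(·,0) ≡ 0, and div_{x,z}(z^{1−2s} ∇̃V) = F on ℝⁿ×(0,∞). Then for every φ ∈ C_c^∞(ℝⁿ), writing Φ(x,z) := (P_z^{(s)} ∗ φ)(x), the limit as ε → 0⁺ and R → ∞ of [ ∫_{ℝⁿ} R^{1−2s} ∂_zV(x,R) φ(x) dx − ∫_{ℝⁿ} ε^{1−2s} ∂_zV(x,ε) φ(x) dx ] exists and equals ∫₀^∞∫_{ℝⁿ} F(x,z) Φ(x,z) dx dz, which in turn equals ∫_{ℝⁿ} ( ∫₀^∞ (P_z^{(s)} ∗ F(·,z))(x) dz ) φ(x) dx. -/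

import Mathlib

open MeasureTheory Filter Set
open scoped Topology ENNReal NNReal

noncomputable section

/-- `ℝⁿ` with the Euclidean norm. -/
abbrev En (n : ℕ) := EuclideanSpace ℝ (Fin n)

/-- The normalizing constant `p(n,s) = Γ(n/2+s)/(π^{n/2} Γ(s))` of the Poisson kernel. -/
def pns (n : ℕ) (s : ℝ) : ℝ :=
  Real.Gamma ((n : ℝ) / 2 + s) / (Real.pi ^ ((n : ℝ) / 2) * Real.Gamma s)

/-- The fractional Poisson kernel `P_z^{(s)}(x) = p(n,s) z^{2s} (|x|² + z²)^{-(n+2s)/2}`. -/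
def Pker (n : ℕ) (s z : ℝ) (x : En n) : ℝ :=
  pns n s * z ^ (2 * s) * (‖x‖ ^ 2 + z ^ 2) ^ (-((n : ℝ) + 2 * s) / 2)

/-- Convolution with the fractional Poisson kernel in the first variable, at fixed `z`. -/
def Pconv (n : ℕ) (s z : ℝ) (f : En n → ℝ) (x : En n) : ℝ :=
  ∫ y, Pker n s z (x - y) * f y

/-- The Caffarelli–Silvestre extension `U(x,z) = (P_z^{(s)} ∗ u)(x)`. -/
def CSext (n : ℕ) (s : ℝ) (u : En n → ℝ) (x : En n) (z : ℝ) : ℝ :=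
  Pconv n s z u x

/-- The constant `C(n,s) = 4^s Γ(n/2+s) / (π^{n/2} |Γ(-s)|)`. -/
def Cns (n : ℕ) (s : ℝ) : ℝ :=
  4 ^ s * Real.Gamma ((n : ℝ) / 2 + s) / (Real.pi ^ ((n : ℝ) / 2) * |Real.Gamma (-s)|)

/-- The fractional Laplacian `(-Δ)^s w(x)` as a principal-value singular integral. -/
def fracLap (n : ℕ) (s : ℝ) (w : En n → ℝ) (x : En n) : ℝ :=
  Cns n s * limUnder (𝓝[>] (0 : ℝ))
    (fun ε : ℝ => ∫ y in {y : En n | ε < ‖x - y‖}, (w x - w y) / ‖x - y‖ ^ ((n : ℝ) + 2 * s))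

/-- `Λ^s w := -(-Δ)^s w`. -/
def Lam (n : ℕ) (s : ℝ) (w : En n → ℝ) (x : En n) : ℝ := - fracLap n s w x

/-- The first-order carré du champ `Γ₁(u,v) = ½(Λ^s(uv) - u Λ^s v - v Λ^s u)`. -/
def Gamma1 (n : ℕ) (s : ℝ) (u v : En n → ℝ) (x : En n) : ℝ :=
  (Lam n s (fun y => u y * v y) x - u x * Lam n s v x - v x * Lam n s u x) / 2

/-- The constant `β_s = 2^{2s-1} Γ(s)/Γ(1-s)`. -/
def betaS (s : ℝ) : ℝ := 2 ^ (2 * s - 1) * Real.Gamma s / Real.Gamma (1 - s)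

/-- Partial derivative in the `i`-th coordinate direction. -/
def pd {n : ℕ} (i : Fin n) (f : En n → ℝ) (x : En n) : ℝ :=
  fderiv ℝ f x (EuclideanSpace.single i 1)

/-- The Laplacian in the `x`-variables. -/
def lapX {n : ℕ} (f : En n → ℝ) (x : En n) : ℝ := ∑ i, pd i (pd i f) x

/-- The degenerate operator `L_s W = div_{x,z}(z^{1-2s} ∇̃W)`, written out as
`z^{1-2s} Δ_x W + ∂_z(z^{1-2s} ∂_z W)`. -/
def LsOp {n : ℕ} (s : ℝ) (W : En n → ℝ → ℝ) (x : En n) (z : ℝ) : ℝ :=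
  z ^ (1 - 2 * s) * lapX (fun y => W y z) x
    + deriv (fun t => t ^ (1 - 2 * s) * deriv (W x) t) z


lemma pns_pos (n : ℕ) {s : ℝ} (hs : 0 < s) : 0 < pns n s := by
  unfold pns
  have h1 : 0 < Real.Gamma ((n : ℝ) / 2 + s) := Real.Gamma_pos_of_pos (by positivity)
  have h2 : 0 < Real.Gamma s := Real.Gamma_pos_of_pos hs
  positivity

lemma Pker_nonneg (n : ℕ) {s : ℝ} (hs : 0 < s) {z : ℝ} (hz : 0 < z) (x : En n) :
    0 ≤ Pker n s z x := by
  unfold Pker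
  have := pns_pos n hs
  positivity

lemma Pker_symm (n : ℕ) (s z : ℝ) (x y : En n) : Pker n s z (x - y) = Pker n s z (y - x) := by
  unfold Pker; rw [norm_sub_rev]

lemma Pker_cont (n : ℕ) (s : ℝ) :
    ContinuousOn (fun p : En n × ℝ => Pker n s p.2 p.1) (univ ×ˢ Ioi 0) := by
  unfold Pker
  intro p hp
  have hp2 : 0 < p.2 := hp.2
  have : ‖p.1‖ ^ 2 + p.2 ^ 2 ≠ 0 := by positivity
  apply ContinuousAt.continuousWithinAt
  apply ContinuousAt.mul
  · exact continuousAt_const.mul (continuousAt_snd.rpow_const (Or.inl hp2.ne'))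
  · exact ContinuousAt.rpow_const (by fun_prop) (Or.inl this)

lemma Pker_cont_x (n : ℕ) (s : ℝ) {z : ℝ} (hz : 0 < z) : Continuous (Pker n s z) := by
  have := (Pker_cont n s).comp (f := fun x : En n => (x, z)) (s := univ) (by fun_prop)
    (fun x _ => ⟨mem_univ _, hz⟩)
  exact continuousOn_univ.mp this

lemma Pker_lintegral (n : ℕ) {s : ℝ} (hs : 0 < s) {z : ℝ} (hz : 0 < z) :
    ∫⁻ x, ENNReal.ofReal (Pker n s z x) = 1 := by
  set m : ℝ := (n : ℝ) / 2 + s with hm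
  have hmpos : 0 < m := by positivity
  have hG : 0 < Real.Gamma m := Real.Gamma_pos_of_pos hmpos
  have hGs : 0 < Real.Gamma s := Real.Gamma_pos_of_pos hs
  -- Gamma representation
  have hInteg : ∀ {a r : ℝ}, 0 < a → 0 < r →
      ∫⁻ t in Ioi (0:ℝ), ENNReal.ofReal (t ^ (a - 1) * Real.exp (-(r * t)))
        = ENNReal.ofReal ((1 / r) ^ a * Real.Gamma a) := by
    intro a r ha hr
    rw [← Real.integral_rpow_mul_exp_neg_mul_Ioi ha hr, ofReal_integral_eq_lintegral_ofReal]
    · by_contra hcon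
      have h0 := Real.integral_rpow_mul_exp_neg_mul_Ioi ha hr
      rw [integral_undef hcon] at h0
      have : 0 < (1 / r) ^ a * Real.Gamma a := by
        have := Real.Gamma_pos_of_pos ha
        positivity
      linarith
    · filter_upwards [ae_restrict_mem measurableSet_Ioi] with t ht
      have : (0:ℝ) < t := ht
      positivity
  have hgauss : ∀ t : ℝ, 0 < t → ∫⁻ x : En n, ENNReal.ofReal (Real.exp (-t * ‖x‖ ^ 2))
      = ENNReal.ofReal ((Real.pi / t) ^ ((n : ℝ) / 2)) := by
    intro t ht
    have h0 := GaussianFourier.integral_rexp_neg_mul_sq_norm (V := En n) ht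
    rw [finrank_euclideanSpace, Fintype.card_fin] at h0
    rw [← h0, ofReal_integral_eq_lintegral_ofReal]
    · by_contra hcon
      rw [integral_undef hcon] at h0
      have : 0 < (Real.pi / t) ^ ((n : ℝ) / 2) := by positivity
      linarith
    · exact ae_of_all _ fun x => by positivity
  have key : ∀ x : En n, ENNReal.ofReal (Pker n s z x) =
      ENNReal.ofReal (pns n s * z ^ (2 * s) / Real.Gamma m) *
        ∫⁻ t in Ioi (0:ℝ), ENNReal.ofReal (t ^ (m - 1) * Real.exp (-((‖x‖ ^ 2 + z ^ 2) * t))) := by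
    intro x
    have hp := pns_pos n hs
    have hρ : 0 < ‖x‖ ^ 2 + z ^ 2 := by positivity
    rw [hInteg hmpos hρ, ← ENNReal.ofReal_mul (by positivity)]
    congr 1
    unfold Pker
    have : -((n : ℝ) + 2 * s) / 2 = -m := by rw [hm]; ring
    rw [this, one_div, Real.inv_rpow hρ.le, Real.rpow_neg hρ.le]
    field_simp
  simp_rw [key]
  rw [lintegral_const_mul' _ _ ENNReal.ofReal_ne_top]
  rw [lintegral_lintegral_swap]
  swap
  · apply Measurable.aemeasurable
    fun_prop
  have e1 : ∀ t ∈ Ioi (0:ℝ), ∫⁻ x : En n,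
      ENNReal.ofReal (t ^ (m - 1) * Real.exp (-((‖x‖ ^ 2 + z ^ 2) * t)))
      = ENNReal.ofReal (Real.pi ^ ((n : ℝ) / 2)) *
        ENNReal.ofReal (t ^ (s - 1) * Real.exp (-(z ^ 2 * t))) := by
    intro t ht
    have ht : 0 < t := ht
    have : ∀ x : En n, ENNReal.ofReal (t ^ (m - 1) * Real.exp (-((‖x‖ ^ 2 + z ^ 2) * t)))
      = ENNReal.ofReal (t ^ (m - 1) * Real.exp (-(z ^ 2 * t))) *
          ENNReal.ofReal (Real.exp (-t * ‖x‖ ^ 2)) := by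
      intro x
      rw [← ENNReal.ofReal_mul (by positivity), mul_assoc, ← Real.exp_add]
      congr 3; ring
    simp_rw [this]
    rw [lintegral_const_mul' _ _ ENNReal.ofReal_ne_top, hgauss t ht,
      ← ENNReal.ofReal_mul (by positivity), ← ENNReal.ofReal_mul (by positivity)]
    congr 1
    rw [Real.div_rpow Real.pi_pos.le ht.le]
    have : t ^ (m - 1) = t ^ (s - 1) * t ^ ((n : ℝ) / 2) := by
      rw [← Real.rpow_add ht]; congr 1; rw [hm]; ring
    rw [this]
    have : t ^ ((n : ℝ) / 2) ≠ 0 := by positivity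
    field_simp
  rw [setLIntegral_congr_fun measurableSet_Ioi e1, lintegral_const_mul' _ _ ENNReal.ofReal_ne_top,
    hInteg hs (by positivity), ← ENNReal.ofReal_mul (by positivity), ← ENNReal.ofReal_mul]
  · rw [← ENNReal.ofReal_one]
    congr 1
    unfold pns
    rw [one_div, Real.inv_rpow (by positivity), ← Real.rpow_natCast z 2, ← Real.rpow_mul hz.le]
    have : z ^ (2 * s) ≠ 0 := by positivity
    push_cast
    rw [← hm]
    field_simp
  · have hp := pns_pos n hs
    positivity

lemma Pker_integrable (n : ℕ) {s : ℝ} (hs : 0 < s) {z : ℝ} (hz : 0 < z) :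
    Integrable (Pker n s z) := by
  refine ⟨(Pker_cont_x n s hz).aestronglyMeasurable, ?_⟩
  rw [hasFiniteIntegral_iff_ofReal (ae_of_all _ (Pker_nonneg n hs hz)), Pker_lintegral n hs hz]
  exact ENNReal.one_lt_top

lemma Pker_integral (n : ℕ) {s : ℝ} (hs : 0 < s) {z : ℝ} (hz : 0 < z) :
    ∫ x, Pker n s z x = 1 := by
  rw [integral_eq_lintegral_of_nonneg_ae (ae_of_all _ (Pker_nonneg n hs hz))
    (Pker_cont_x n s hz).aestronglyMeasurable, Pker_lintegral n hs hz]
  rfl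

/-- integrability of the convolution integrand -/
lemma Pconv_integrand_integrable (n : ℕ) (s : ℝ) {z : ℝ} (hz : 0 < z) {f : En n → ℝ}
    (hf : Continuous f) (hfc : HasCompactSupport f) (x : En n) :
    Integrable (fun y => Pker n s z (x - y) * f y) := by
  apply Continuous.integrable_of_hasCompactSupport
  · exact ((Pker_cont_x n s hz).comp (by fun_prop)).mul hf
  · exact hfc.mul_left

lemma Pconv_abs_le (n : ℕ) {s : ℝ} (hs : 0 < s) {z : ℝ} (hz : 0 < z) {f : En n → ℝ} (x : En n) :
    |Pconv n s z f x| ≤ Pconv n s z (fun y => |f y|) x := by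
  unfold Pconv
  refine (abs_integral_le_integral_abs).trans (le_of_eq ?_)
  congr 1; ext y
  rw [abs_mul, abs_of_nonneg (Pker_nonneg n hs hz _)]

lemma Pconv_le (n : ℕ) {s : ℝ} (hs : 0 < s) {z : ℝ} (hz : 0 < z) {f : En n → ℝ}
    (hf : Continuous f) (hfc : HasCompactSupport f) {M : ℝ} (hM : ∀ y, |f y| ≤ M) (x : En n) :
    Pconv n s z (fun y => |f y|) x ≤ M := by
  have h1 : Integrable (fun y => Pker n s z (x - y)) := (Pker_integrable n hs hz).comp_sub_left x
  unfold Pconv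
  calc _ ≤ ∫ y, Pker n s z (x - y) * M := by
        apply integral_mono (Pconv_integrand_integrable n s hz hf.abs hfc.abs x) (h1.mul_const M)
        intro y
        exact mul_le_mul_of_nonneg_left (hM y) (Pker_nonneg n hs hz _)
    _ = M := by
        rw [integral_mul_const, integral_sub_left_eq_self (Pker n s z) volume x,
          Pker_integral n hs hz, one_mul]

lemma Pconv_ofReal (n : ℕ) {s : ℝ} (hs : 0 < s) {z : ℝ} (hz : 0 < z) {f : En n → ℝ}
    (hf : Continuous f) (hfc : HasCompactSupport f) (x : En n) :
    ENNReal.ofReal (Pconv n s z (fun y => |f y|) x)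
      = ∫⁻ y, ENNReal.ofReal (Pker n s z (x - y)) * ENNReal.ofReal |f y| := by
  unfold Pconv
  rw [ofReal_integral_eq_lintegral_ofReal (Pconv_integrand_integrable n s hz hf.abs hfc.abs x)]
  · congr 1; ext y
    rw [ENNReal.ofReal_mul (Pker_nonneg n hs hz _)]
  · exact ae_of_all _ fun y => mul_nonneg (Pker_nonneg n hs hz _) (abs_nonneg _)

lemma Pconv_lintegral (n : ℕ) {s : ℝ} (hs : 0 < s) {z : ℝ} (hz : 0 < z) {f : En n → ℝ}
    (hf : Continuous f) (hfc : HasCompactSupport f) :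
    ∫⁻ x, ENNReal.ofReal (Pconv n s z (fun y => |f y|) x) = ∫⁻ y, ENNReal.ofReal |f y| := by
  simp_rw [Pconv_ofReal n hs hz hf hfc]
  have hm : Measurable (Pker n s z) := (Pker_cont_x n s hz).measurable
  rw [lintegral_lintegral_swap]
  · congr 1; ext y
    rw [lintegral_mul_const' _ _ ENNReal.ofReal_ne_top,
      lintegral_sub_right_eq_self (fun x => ENNReal.ofReal (Pker n s z x)) y,
      Pker_lintegral n hs hz, one_mul]
  · apply Measurable.aemeasurable
    have := hf.measurable
    fun_prop

/-- approximate identity -/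
lemma Pconv_tendsto (n : ℕ) (hn : 1 ≤ n) {s : ℝ} (hs : 0 < s) {f : En n → ℝ}
    (hf : Continuous f) (hfc : HasCompactSupport f) (x : En n) :
    Tendsto (fun z => Pconv n s z f x) (𝓝[>] 0) (𝓝 (f x)) := by
  have h := tendsto_integral_comp_smul_smul_of_integrable' (μ := (volume : Measure (En n)))
    (φ := Pker n s 1) (Pker_nonneg n hs one_pos) (Pker_integral n hs one_pos) ?_
    (hf.integrable_of_hasCompactSupport hfc) (hf.continuousAt (x := x))
  · have h2 := h.comp (tendsto_inv_nhdsGT_zero (𝕜 := ℝ))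
    refine h2.congr' ?_
    filter_upwards [self_mem_nhdsWithin] with z hz
    have hz : 0 < z := hz
    simp only [Function.comp, Pconv, smul_eq_mul]
    congr 1; ext y
    congr 1
    unfold Pker
    rw [norm_smul, finrank_euclideanSpace, Fintype.card_fin, Real.norm_of_nonneg (by positivity)]
    set N := ‖x - y‖
    have hN : 0 ≤ N := norm_nonneg _
    have : (z⁻¹ * N) ^ 2 + 1 ^ 2 = (z ^ 2)⁻¹ * (N ^ 2 + z ^ 2) := by field_simp
    rw [this, Real.mul_rpow (by positivity) (by positivity), ← Real.rpow_natCast z 2,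
      Real.inv_rpow (by positivity), ← Real.rpow_mul hz.le, ← Real.rpow_neg hz.le,
      Real.one_rpow, ← Real.rpow_natCast, Real.inv_rpow hz.le, ← Real.rpow_neg hz.le]
    have e : z ^ (2 * s) = z ^ (-(n:ℝ)) * z ^ (-(((2:ℕ) : ℝ) * (-((n:ℝ) + 2 * s) / 2))) := by
      rw [← Real.rpow_add hz]; congr 1; push_cast; ring
    rw [e]; ring
  · rw [finrank_euclideanSpace, Fintype.card_fin]
    have h0 : Tendsto (fun x : En n => pns n s * ‖x‖ ^ (-(2 * s))) (Bornology.cobounded (En n))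
        (𝓝 0) := by
      have := (tendsto_rpow_neg_atTop (by positivity : 0 < 2 * s)).comp
        (tendsto_norm_cobounded_atTop (E := En n))
      simpa using this.const_mul (pns n s)
    refine squeeze_zero' ?_ ?_ h0
    · exact Eventually.of_forall fun x => mul_nonneg (by positivity) (Pker_nonneg n hs one_pos x)
    · filter_upwards [(tendsto_norm_cobounded_atTop (E := En n)).eventually_gt_atTop 0] with x hx
      have hp := pns_pos n hs
      unfold Pker
      have e : ‖x‖ ^ (-(2*s)) = ‖x‖ ^ n * (‖x‖ ^ 2) ^ (-((n : ℝ) + 2 * s) / 2) := by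
        rw [← Real.rpow_natCast, ← Real.rpow_natCast, ← Real.rpow_mul hx.le, ← Real.rpow_add hx]
        congr 1; push_cast; ring
      rw [e, Real.one_rpow]
      have : (‖x‖ ^ 2 + 1 ^ 2) ^ (-((n : ℝ) + 2 * s) / 2) ≤ (‖x‖ ^ 2) ^ (-((n : ℝ) + 2 * s) / 2) := by
        apply Real.rpow_le_rpow_of_nonpos (by positivity) (by linarith)
        have : 0 < (n:ℝ) + 2 * s := by positivity
        linarith
      calc _ = pns n s * (‖x‖ ^ n * (‖x‖ ^ 2 + 1 ^ 2) ^ (-((n : ℝ) + 2 * s) / 2)) := by ring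
        _ ≤ _ := by gcongr


/-- smoothness of the extension -/
lemma Pker_contDiffOn (n : ℕ) (s : ℝ) :
    ContDiffOn ℝ (⊤ : ℕ∞) (fun p : En n × ℝ => Pker n s p.2 p.1) (univ ×ˢ Ioi 0) := by
  unfold Pker
  intro p hp
  have hp2 : 0 < p.2 := hp.2
  have : ‖p.1‖ ^ 2 + p.2 ^ 2 ≠ 0 := by positivity
  apply ContDiffAt.contDiffWithinAt
  apply ContDiffAt.mul
  · exact contDiffAt_const.mul (contDiffAt_snd.rpow_const_of_ne hp2.ne')
  · exact ContDiffAt.rpow_const_of_ne ((contDiffAt_fst.norm_sq ℝ).add (contDiffAt_snd.pow 2)) this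

lemma Pconv_contDiffOn (n : ℕ) (s : ℝ) {φ : En n → ℝ} (hφ : ContDiff ℝ (⊤ : ℕ∞) φ)
    (hφc : HasCompactSupport φ) :
    ContDiffOn ℝ (⊤ : ℕ∞) (fun p : En n × ℝ => Pconv n s p.2 φ p.1) (univ ×ˢ Ioi 0) := by
  have hU : IsOpen ((univ : Set (En n)) ×ˢ Ioi (0:ℝ)) := isOpen_univ.prod isOpen_Ioi
  have h := contDiffOn_convolution_right_with_param (μ := (volume : Measure (En n)))
    (f := fun _ : En n => (1:ℝ)) (n := ⊤)
    (ContinuousLinearMap.mul ℝ ℝ) (g := fun (p : En n × ℝ) (y : En n) => Pker n s p.2 (p.1 + y) * φ (-y))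
    hU (hφc.isCompact.neg) ?_ (locallyIntegrable_const _) ?_
  · have h2 := h.comp (f := fun p : En n × ℝ => (p, (0 : En n))) (s := (univ : Set (En n)) ×ˢ Ioi (0:ℝ))
      (by fun_prop) (fun p hp => ⟨hp, mem_univ _⟩)
    refine h2.congr ?_
    intro p hp
    simp only [Function.comp, convolution, Pconv, ContinuousLinearMap.mul_apply', one_mul, zero_add,
      neg_neg, sub_eq_add_neg]
  · intro p y hp hy
    have : φ (-y) = 0 := by
      apply image_eq_zero_of_notMem_tsupport
      intro h; exact hy (by simpa using h)
    simp [this]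
  · have h1 : ContDiffOn ℝ (⊤ : ℕ∞) (fun q : (En n × ℝ) × En n => Pker n s q.1.2 (q.1.1 + q.2))
        (((univ : Set (En n)) ×ˢ Ioi (0:ℝ)) ×ˢ univ) := by
      exact (Pker_contDiffOn n s).comp (f := fun q : (En n × ℝ) × En n => (q.1.1 + q.2, q.1.2))
        (by fun_prop) (fun q hq => ⟨mem_univ _, hq.1.2⟩)
    exact h1.mul (by fun_prop)

/-- partial derivatives of smooth functions -/
lemma pd_contDiff {n : ℕ} (i : Fin n) {f : En n → ℝ} (hf : ContDiff ℝ (⊤ : ℕ∞) f) :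
    ContDiff ℝ (⊤ : ℕ∞) (pd i f) := by
  unfold pd
  exact (hf.fderiv_right (m := (⊤ : ℕ∞)) (by simp)).clm_apply contDiff_const

lemma pd_hcs {n : ℕ} (i : Fin n) {f : En n → ℝ} (hf : HasCompactSupport f) :
    HasCompactSupport (pd i f) := hf.fderiv_apply ℝ _

lemma lapX_contDiff {n : ℕ} {f : En n → ℝ} (hf : ContDiff ℝ (⊤ : ℕ∞) f) :
    ContDiff ℝ (⊤ : ℕ∞) (lapX f) := by
  unfold lapX
  exact ContDiff.sum fun i _ => pd_contDiff i (pd_contDiff i hf)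

lemma lapX_zero_off {n : ℕ} {f : En n → ℝ} {x : En n} (hx : x ∉ tsupport f) : lapX f x = 0 := by
  unfold lapX
  apply Finset.sum_eq_zero
  intro i _
  have h1 : tsupport (pd i f) ⊆ tsupport f := tsupport_fderiv_apply_subset ℝ _
  have h2 : tsupport (pd i (pd i f)) ⊆ tsupport (pd i f) := tsupport_fderiv_apply_subset ℝ _
  exact image_eq_zero_of_notMem_tsupport fun h => hx (h1 (h2 h))

lemma lapX_hcs {n : ℕ} {f : En n → ℝ} (hf : HasCompactSupport f) :
    HasCompactSupport (lapX f) :=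
  HasCompactSupport.intro hf fun _ hx => lapX_zero_off hx

lemma ibp1 {n : ℕ} (i : Fin n) {u v : En n → ℝ} (hu : ContDiff ℝ (⊤ : ℕ∞) u)
    (huc : HasCompactSupport u) (hv : ContDiff ℝ (⊤ : ℕ∞) v) :
    ∫ x, u x * pd i v x = - ∫ x, pd i u x * v x := by
  apply integral_mul_fderiv_eq_neg_fderiv_mul_of_integrable
  · exact ((pd_contDiff i hu).continuous.mul hv.continuous).integrable_of_hasCompactSupport
      (pd_hcs i huc).mul_right
  · exact (hu.continuous.mul (pd_contDiff i hv).continuous).integrable_of_hasCompactSupport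
      huc.mul_right
  · exact (hu.continuous.mul hv.continuous).integrable_of_hasCompactSupport huc.mul_right
  · intro x _; exact (hu.differentiable (by simp)) x
  · intro x _; exact (hv.differentiable (by simp)) x

lemma ibp_lap {n : ℕ} {u v : En n → ℝ} (hu : ContDiff ℝ (⊤ : ℕ∞) u)
    (huc : HasCompactSupport u) (hv : ContDiff ℝ (⊤ : ℕ∞) v) :
    ∫ x, u x * lapX v x = ∫ x, lapX u x * v x := by
  unfold lapX
  simp_rw [Finset.mul_sum, Finset.sum_mul]
  rw [integral_finsetSum, integral_finsetSum]
  · apply Finset.sum_congr rfl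
    intro i _
    rw [ibp1 i hu huc (pd_contDiff i hv), ibp1 i (pd_contDiff i hu) (pd_hcs i huc) hv]
    have := ibp1 i (pd_contDiff i hu) (pd_hcs i huc) hv
    linarith
  · intro i _
    exact ((pd_contDiff i (pd_contDiff i hu)).continuous.mul
      hv.continuous).integrable_of_hasCompactSupport (pd_hcs i (pd_hcs i huc)).mul_right
  · intro i _
    exact (hu.continuous.mul (pd_contDiff i (pd_contDiff i hv)).continuous).integrable_of_hasCompactSupport huc.mul_right

/-- x-derivative of the convolution -/
lemma pd_Pconv {n : ℕ} (i : Fin n) (s : ℝ) {z : ℝ} (hz : 0 < z) {φ : En n → ℝ}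
    (hφ : ContDiff ℝ (⊤ : ℕ∞) φ) (hφc : HasCompactSupport φ) :
    pd i (fun x => Pconv n s z φ x) = fun x => Pconv n s z (pd i φ) x := by
  have e : ∀ f : En n → ℝ, (fun x => Pconv n s z f x)
      = convolution (Pker n s z) f (ContinuousLinearMap.mul ℝ ℝ) volume := by
    intro f; ext x
    simp only [Pconv, convolution, ContinuousLinearMap.mul_apply']
    rw [← integral_sub_left_eq_self _ volume x]
    simp
  ext x
  unfold pd
  rw [e φ]
  have h := hφc.hasFDerivAt_convolution_right (ContinuousLinearMap.mul ℝ ℝ) (μ := volume)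
    (Pker_cont_x n s hz).locallyIntegrable (hφ.of_le (by exact_mod_cast le_top)) x
  rw [h.fderiv]
  have hfi : Integrable (fun t => (((ContinuousLinearMap.mul ℝ ℝ).precompR (En n)) (Pker n s z t))
      (fderiv ℝ φ (x - t))) := by
    have : ConvolutionExistsAt (Pker n s z) (fderiv ℝ φ) x
        ((ContinuousLinearMap.mul ℝ ℝ).precompR (En n)) volume := by
      apply HasCompactSupport.convolutionExists_right
      · exact hφc.fderiv ℝ
      · exact (Pker_cont_x n s hz).locallyIntegrable
      · exact hφ.continuous_fderiv (by simp)
    exact this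
  have e2 := congrFun (e (fun y => fderiv ℝ φ y (EuclideanSpace.single i 1))) x
  refine Eq.trans ?_ e2.symm
  simp only [convolution]
  rw [ContinuousLinearMap.integral_apply hfi]
  rfl

/-- differentiate under the integral sign against a compactly supported weight -/
lemma hasDerivAt_int {n : ℕ} {φ : En n → ℝ} (hφ : Continuous φ) (hφc : HasCompactSupport φ)
    {k k' : ℝ → En n → ℝ} {t : ℝ} (ht : 0 < t)
    (hk : ∀ r, 0 < r → Continuous (k r))
    (hk' : ContinuousOn (fun p : ℝ × En n => k' p.1 p.2) (Ioi 0 ×ˢ univ))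
    (hd : ∀ r, 0 < r → ∀ y, HasDerivAt (fun r => k r y) (k' r y) r) :
    HasDerivAt (fun r => ∫ y, k r y * φ y) (∫ y, k' t y * φ y) t := by
  have hsub : Icc (t/2) (2*t) ⊆ Ioi 0 := fun r hr => lt_of_lt_of_le (by positivity) hr.1
  obtain ⟨M, hM⟩ := ((isCompact_Icc (a := t/2) (b := 2*t)).prod hφc.isCompact).exists_bound_of_continuousOn
    (hk'.mono (prod_mono hsub (subset_univ _)))
  have hk't : Continuous (k' t) := by
    have := hk'.comp (f := fun y : En n => (t, y)) (s := univ) (by fun_prop)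
      (fun x _ => ⟨ht, mem_univ _⟩)
    exact continuousOn_univ.mp this
  refine (hasDerivAt_integral_of_dominated_loc_of_deriv_le (s := Icc (t/2) (2*t))
    (F := fun r y => k r y * φ y) (F' := fun r y => k' r y * φ y)
    (bound := fun y => M * ‖φ y‖) ?_ ?_ ?_ ?_ ?_ ?_ ?_).2
  · exact Icc_mem_nhds (by linarith) (by linarith)
  · filter_upwards [lt_mem_nhds ht] with r hr
    exact ((hk r hr).mul hφ).aestronglyMeasurable
  · exact ((hk t ht).mul hφ).integrable_of_hasCompactSupport hφc.mul_left
  · exact (hk't.mul hφ).aestronglyMeasurable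
  · refine ae_of_all _ fun y r hr => ?_
    rw [norm_mul]
    by_cases hy : y ∈ tsupport φ
    · exact mul_le_mul_of_nonneg_right (hM (r, y) ⟨hr, hy⟩) (norm_nonneg _)
    · simp [image_eq_zero_of_notMem_tsupport hy]
  · exact ((hφ.integrable_of_hasCompactSupport hφc).norm.const_mul M)
  · exact ae_of_all _ fun y r hr => (hd r (hsub hr) y).mul_const _


/-- `z`-derivative of the Poisson kernel -/
def Pk1 (n : ℕ) (s z : ℝ) (x : En n) : ℝ :=
  pns n s * (2 * s * z ^ (2 * s - 1) * (‖x‖ ^ 2 + z ^ 2) ^ (-((n : ℝ) + 2 * s) / 2)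
    - (n + 2 * s) * z ^ (2 * s + 1) * (‖x‖ ^ 2 + z ^ 2) ^ (-((n : ℝ) + 2 * s) / 2 - 1))

/-- `z^{1-2s}` times the `z`-derivative of the Poisson kernel -/
def PJ (n : ℕ) (s z : ℝ) (x : En n) : ℝ :=
  pns n s * (2 * s * (‖x‖ ^ 2 + z ^ 2) ^ (-((n : ℝ) + 2 * s) / 2)
    - (n + 2 * s) * z ^ 2 * (‖x‖ ^ 2 + z ^ 2) ^ (-((n : ℝ) + 2 * s) / 2 - 1))

/-- the `z`-derivative of `PJ` -/
def PJ1 (n : ℕ) (s z : ℝ) (x : En n) : ℝ :=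
  pns n s * (-(2 * s * (n + 2 * s) * z + 2 * (n + 2 * s) * z)
      * (‖x‖ ^ 2 + z ^ 2) ^ (-((n : ℝ) + 2 * s) / 2 - 1)
    + (n + 2 * s) * (n + 2 * s + 2) * z ^ 3 * (‖x‖ ^ 2 + z ^ 2) ^ (-((n : ℝ) + 2 * s) / 2 - 2))

lemma rho_hasDerivAt {n : ℕ} (x : En n) {z : ℝ} (hz : 0 < z) (p : ℝ) :
    HasDerivAt (fun t : ℝ => (‖x‖ ^ 2 + t ^ 2) ^ p) (2 * z * p * (‖x‖ ^ 2 + z ^ 2) ^ (p - 1)) z := by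
  have h : HasDerivAt (fun t : ℝ => ‖x‖ ^ 2 + t ^ 2) (2 * z) z := by
    simpa using (hasDerivAt_pow 2 z).const_add (‖x‖ ^ 2)
  exact h.rpow_const (Or.inl (by positivity))

lemma Pker_hasDerivAt {n : ℕ} (s : ℝ) (x : En n) {z : ℝ} (hz : 0 < z) :
    HasDerivAt (fun t => Pker n s t x) (Pk1 n s z x) z := by
  unfold Pker Pk1
  have h1 := (Real.hasDerivAt_rpow_const (p := 2 * s) (Or.inl hz.ne')).const_mul (pns n s)
  have h2 := rho_hasDerivAt x hz (-((n : ℝ) + 2 * s) / 2)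
  refine (h1.mul h2).congr_deriv ?_
  have : z ^ (2 * s + 1) = z ^ (2 * s) * z := by rw [Real.rpow_add hz, Real.rpow_one]
  rw [this]; ring

lemma PJ_hasDerivAt {n : ℕ} (s : ℝ) (x : En n) {z : ℝ} (hz : 0 < z) :
    HasDerivAt (fun t => PJ n s t x) (PJ1 n s z x) z := by
  unfold PJ PJ1
  have h2 := rho_hasDerivAt x hz (-((n : ℝ) + 2 * s) / 2)
  have h3 := rho_hasDerivAt x hz (-((n : ℝ) + 2 * s) / 2 - 1)
  have h4 := ((hasDerivAt_pow 2 z).const_mul ((n : ℝ) + 2 * s)).mul h3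
  have h5 := ((h2.const_mul (2 * s)).sub h4).const_mul (pns n s)
  refine h5.congr_deriv ?_
  have : -((n : ℝ) + 2 * s) / 2 - 1 - 1 = -((n : ℝ) + 2 * s) / 2 - 2 := by ring
  rw [this]; push_cast; ring

lemma PJ_eq {n : ℕ} (s : ℝ) (x : En n) {z : ℝ} (hz : 0 < z) :
    PJ n s z x = z ^ (1 - 2 * s) * Pk1 n s z x := by
  unfold PJ Pk1
  have e1 : z ^ (1 - 2 * s) * z ^ (2 * s - 1) = 1 := by
    rw [← Real.rpow_add hz]; simp
  have e2 : z ^ (1 - 2 * s) * z ^ (2 * s + 1) = z ^ 2 := by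
    rw [← Real.rpow_add hz, ← Real.rpow_natCast]; congr 1; push_cast; ring
  linear_combination (-(pns n s * (2 * s) * (‖x‖ ^ 2 + z ^ 2) ^ (-((n : ℝ) + 2 * s) / 2))) * e1
    + (pns n s * (n + 2 * s) * (‖x‖ ^ 2 + z ^ 2) ^ (-((n : ℝ) + 2 * s) / 2 - 1)) * e2

lemma Pk1_abs_le {n : ℕ} {s : ℝ} (hs : 0 < s) (x : En n) {z : ℝ} (hz : 0 < z) :
    |Pk1 n s z x| ≤ (n + 4 * s) / z * Pker n s z x := by
  unfold Pk1 Pker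
  have hp := pns_pos n hs
  have hρ : 0 < ‖x‖ ^ 2 + z ^ 2 := by positivity
  set A := (‖x‖ ^ 2 + z ^ 2) ^ (-((n : ℝ) + 2 * s) / 2) with hA
  have hA0 : 0 < A := by positivity
  have e : (‖x‖ ^ 2 + z ^ 2) ^ (-((n : ℝ) + 2 * s) / 2 - 1) = A / (‖x‖ ^ 2 + z ^ 2) := by
    rw [Real.rpow_sub_one hρ.ne']
  have e1 : z ^ (2 * s - 1) = z ^ (2 * s) / z := by rw [Real.rpow_sub_one hz.ne']
  have e2 : z ^ (2 * s + 1) = z ^ (2 * s) * z := by rw [Real.rpow_add hz, Real.rpow_one]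
  rw [e, e1, e2, abs_mul, abs_of_pos hp]
  set Z := z ^ (2 * s)
  have hZ : 0 < Z := by positivity
  have h1 : 2 * s * (Z / z) * A - (n + 2 * s) * (Z * z) * (A / (‖x‖ ^ 2 + z ^ 2))
      = (Z * A / z) * (2 * s - (n + 2 * s) * (z ^ 2 / (‖x‖ ^ 2 + z ^ 2))) := by
    field_simp
  have h2 : z ^ 2 / (‖x‖ ^ 2 + z ^ 2) ≤ 1 := by
    rw [div_le_one hρ]; nlinarith [sq_nonneg ‖x‖]
  have h3 : 0 ≤ z ^ 2 / (‖x‖ ^ 2 + z ^ 2) := by positivity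
  have h4 : |2 * s - (n + 2 * s) * (z ^ 2 / (‖x‖ ^ 2 + z ^ 2))| ≤ n + 4 * s := by
    have hn : (0:ℝ) ≤ n := by positivity
    rw [abs_le]; constructor <;> nlinarith
  rw [h1, abs_mul, abs_of_pos (by positivity)]
  calc _ ≤ pns n s * (Z * A / z * (n + 4 * s)) := by gcongr
    _ = _ := by ring

lemma cont_rho {n : ℕ} (p : ℝ) :
    ContinuousOn (fun q : ℝ × En n => (‖q.2‖ ^ 2 + q.1 ^ 2) ^ p) (Ioi 0 ×ˢ univ) := by
  intro q hq
  have : 0 < q.1 := hq.1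
  apply ContinuousAt.continuousWithinAt
  exact ContinuousAt.rpow_const (by fun_prop) (Or.inl (by positivity))

lemma cont_zp {n : ℕ} (p : ℝ) :
    ContinuousOn (fun q : ℝ × En n => q.1 ^ p) (Ioi 0 ×ˢ univ) := by
  intro q hq
  have : 0 < q.1 := hq.1
  apply ContinuousAt.continuousWithinAt
  exact ContinuousAt.rpow_const (by fun_prop) (Or.inl this.ne')

lemma Pk1_cont (n : ℕ) (s : ℝ) :
    ContinuousOn (fun q : ℝ × En n => Pk1 n s q.1 q.2) (Ioi 0 ×ˢ univ) := by
  unfold Pk1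
  have h1 := cont_rho (n := n) (-((n : ℝ) + 2 * s) / 2)
  have h2 := cont_rho (n := n) (-((n : ℝ) + 2 * s) / 2 - 1)
  have h3 := cont_zp (n := n) (2 * s - 1)
  have h4 := cont_zp (n := n) (2 * s + 1)
  fun_prop

lemma PJ1_cont (n : ℕ) (s : ℝ) :
    ContinuousOn (fun q : ℝ × En n => PJ1 n s q.1 q.2) (Ioi 0 ×ˢ univ) := by
  unfold PJ1
  have h1 := cont_rho (n := n) (-((n : ℝ) + 2 * s) / 2 - 1)
  have h2 := cont_rho (n := n) (-((n : ℝ) + 2 * s) / 2 - 2)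
  fun_prop

lemma PJ_cont (n : ℕ) (s : ℝ) :
    ContinuousOn (fun q : ℝ × En n => PJ n s q.1 q.2) (Ioi 0 ×ˢ univ) := by
  unfold PJ
  have h1 := cont_rho (n := n) (-((n : ℝ) + 2 * s) / 2)
  have h2 := cont_rho (n := n) (-((n : ℝ) + 2 * s) / 2 - 1)
  fun_prop

lemma slice_cont {n : ℕ} {k : ℝ → En n → ℝ}
    (hk : ContinuousOn (fun q : ℝ × En n => k q.1 q.2) (Ioi 0 ×ˢ univ)) {r : ℝ} (hr : 0 < r) :
    Continuous (k r) := by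
  have := hk.comp (f := fun y : En n => (r, y)) (s := univ) (by fun_prop)
    (fun x _ => ⟨hr, mem_univ _⟩)
  exact continuousOn_univ.mp this

lemma pd_rho {n : ℕ} (i : Fin n) (x : En n) {z : ℝ} (hz : 0 < z) (p : ℝ) :
    pd i (fun y => (‖x - y‖ ^ 2 + z ^ 2) ^ p)
      = fun y => -2 * p * (x i - y i) * (‖x - y‖ ^ 2 + z ^ 2) ^ (p - 1) := by
  ext y
  unfold pd
  have h0 : HasFDerivAt (fun y : En n => x - y) (-ContinuousLinearMap.id ℝ (En n)) y :=
    (hasFDerivAt_id y).const_sub x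
  have h1 := (h0.norm_sq.add_const (z ^ 2)).rpow_const (p := p) (Or.inl (by positivity))
  rw [h1.fderiv]
  simp [EuclideanSpace.inner_single_right]
  ring

lemma pd_coord {n : ℕ} (i : Fin n) (x : En n) (y : En n) :
    HasFDerivAt (fun y : En n => x i - y i) (-(EuclideanSpace.proj i : En n →L[ℝ] ℝ)) y :=
  (EuclideanSpace.proj i : En n →L[ℝ] ℝ).hasFDerivAt.const_sub (x i)

lemma pd_mul {n : ℕ} (i : Fin n) {f g : En n → ℝ} {x : En n} (hf : DifferentiableAt ℝ f x)
    (hg : DifferentiableAt ℝ g x) :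
    pd i (fun y => f y * g y) x = pd i f x * g x + f x * pd i g x := by
  unfold pd
  rw [fderiv_fun_mul hf hg]
  simp; ring

lemma pd_const_mul {n : ℕ} (i : Fin n) (c : ℝ) {g : En n → ℝ} {x : En n}
    (hg : DifferentiableAt ℝ g x) :
    pd i (fun y => c * g y) x = c * pd i g x := by
  rw [pd_mul i (differentiableAt_const c) hg]; simp [pd]

lemma rho_contDiff {n : ℕ} (x : En n) {z : ℝ} (hz : 0 < z) (p : ℝ) :
    ContDiff ℝ (⊤ : ℕ∞) (fun y => (‖x - y‖ ^ 2 + z ^ 2) ^ p) := by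
  apply ContDiff.rpow_const_of_ne
  · exact ((contDiff_const.sub contDiff_id).norm_sq ℝ).add contDiff_const
  · intro y; positivity

lemma lap_Pker {n : ℕ} (s : ℝ) (x y : En n) {z : ℝ} (hz : 0 < z) :
    z ^ (1 - 2 * s) * lapX (fun y => Pker n s z (x - y)) y = - PJ1 n s z (x - y) := by
  unfold Pker lapX
  set m := -((n : ℝ) + 2 * s) / 2 with hm
  have hρ : 0 < ‖x - y‖ ^ 2 + z ^ 2 := by positivity
  have hd : ∀ p : ℝ, Differentiable ℝ (fun y : En n => (‖x - y‖ ^ 2 + z ^ 2) ^ p) :=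
    fun p => (rho_contDiff x hz p).differentiable (by simp)
  have e : ∀ i, pd i (pd i fun y => pns n s * z ^ (2 * s) * (‖x - y‖ ^ 2 + z ^ 2) ^ m) y
      = pns n s * z ^ (2 * s) * (-2 * m * (-(‖x - y‖ ^ 2 + z ^ 2) ^ (m - 1)
        + (x i - y i) * (-2 * (m - 1) * (x i - y i) * (‖x - y‖ ^ 2 + z ^ 2) ^ (m - 1 - 1)))) := by
    intro i
    have e1 : (pd i fun y => pns n s * z ^ (2 * s) * (‖x - y‖ ^ 2 + z ^ 2) ^ m)
      = fun y => (pns n s * z ^ (2 * s) * (-2 * m)) *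
        ((x i - y i) * (‖x - y‖ ^ 2 + z ^ 2) ^ (m - 1)) := by
      ext w
      rw [pd_const_mul i _ (hd m w), pd_rho i x hz]; ring
    have hc := (pd_coord i x y)
    rw [e1, pd_const_mul i _ (hc.differentiableAt.fun_mul (hd (m-1) y)), pd_mul i hc.differentiableAt (hd _ y), pd_rho i x hz]
    have : pd i (fun y : En n => x i - y i) y = -1 := by
      unfold pd; rw [hc.fderiv]; simp
    rw [this]; ring
  simp_rw [e]
  have hnorm : ‖x - y‖ ^ 2 = ∑ i, (x i - y i) ^ 2 := by
    rw [EuclideanSpace.norm_sq_eq]; simp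
  have hp1 : (‖x - y‖ ^ 2 + z ^ 2) ^ (m - 1) =
      (‖x - y‖ ^ 2 + z ^ 2) * (‖x - y‖ ^ 2 + z ^ 2) ^ (m - 2) := by
    have : m - 1 = 1 + (m - 2) := by ring
    rw [this, Real.rpow_add hρ, Real.rpow_one]
  have hz1 : z ^ (1 - 2 * s) * z ^ (2 * s) = z := by rw [← Real.rpow_add hz]; simp
  have hm2 : m - 1 - 1 = m - 2 := by ring
  have hsum : ∑ i : Fin n, (pns n s * z ^ (2 * s) * (-2 * m * (-(‖x - y‖ ^ 2 + z ^ 2) ^ (m - 1)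
        + (x i - y i) * (-2 * (m - 1) * (x i - y i) * (‖x - y‖ ^ 2 + z ^ 2) ^ (m - 1 - 1)))))
      = pns n s * z ^ (2 * s) * (2 * m * n * (‖x - y‖ ^ 2 + z ^ 2) ^ (m - 1)
        + 4 * m * (m - 1) * ‖x - y‖ ^ 2 * (‖x - y‖ ^ 2 + z ^ 2) ^ (m - 2)) := by
    rw [hm2]
    set A := (‖x - y‖ ^ 2 + z ^ 2) ^ (m - 1)
    set B := (‖x - y‖ ^ 2 + z ^ 2) ^ (m - 2)
    have : ∀ i : Fin n, (pns n s * z ^ (2 * s) * (-2 * m * (-A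
        + (x i - y i) * (-2 * (m - 1) * (x i - y i) * B))))
        = pns n s * z ^ (2 * s) * (2 * m * A) + pns n s * z ^ (2 * s) * (4 * m * (m - 1) * B) *
          (x i - y i) ^ 2 := by intro i; ring
    simp_rw [this]
    rw [Finset.sum_add_distrib, ← Finset.mul_sum Finset.univ (fun i => (x i - y i) ^ 2), ← hnorm,
      Finset.sum_const, Finset.card_univ, Fintype.card_fin, nsmul_eq_mul]
    ring
  rw [hsum]
  unfold PJ1
  rw [← hm, hp1]
  set B := (‖x - y‖ ^ 2 + z ^ 2) ^ (m - 2)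
  set N := ‖x - y‖ ^ 2
  have hmn : (n : ℝ) = -2 * m - 2 * s := by rw [hm]; ring
  rw [hmn]
  linear_combination (pns n s * (2 * m * (-2 * m - 2 * s) * ((N + z ^ 2) * B)
        + 4 * m * (m - 1) * N * B)) * hz1

lemma Pconv_sum {n : ℕ} (s : ℝ) {z : ℝ} (hz : 0 < z) {f : Fin n → En n → ℝ}
    (hf : ∀ i, Continuous (f i)) (hfc : ∀ i, HasCompactSupport (f i)) (x : En n) :
    Pconv n s z (fun y => ∑ i, f i y) x = ∑ i, Pconv n s z (f i) x := by
  unfold Pconv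
  simp_rw [Finset.mul_sum]
  rw [integral_finsetSum]
  intro i _
  exact Pconv_integrand_integrable n s hz (hf i) (hfc i) x

lemma lapX_Pconv {n : ℕ} (s : ℝ) {z : ℝ} (hz : 0 < z) {φ : En n → ℝ}
    (hφ : ContDiff ℝ (⊤ : ℕ∞) φ) (hφc : HasCompactSupport φ) (x : En n) :
    lapX (fun y => Pconv n s z φ y) x = Pconv n s z (lapX φ) x := by
  have : lapX φ = fun y => ∑ i, pd i (pd i φ) y := rfl
  rw [this, Pconv_sum s hz (fun i => (pd_contDiff i (pd_contDiff i hφ)).continuous)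
    (fun i => pd_hcs i (pd_hcs i hφc))]
  unfold lapX
  apply Finset.sum_congr rfl
  intro i _
  rw [pd_Pconv i s hz hφ hφc, pd_Pconv i s hz (pd_contDiff i hφ) (pd_hcs i hφc)]

lemma Pconv_hasDerivAt {n : ℕ} (s : ℝ) {z : ℝ} (hz : 0 < z) {φ : En n → ℝ}
    (hφ : Continuous φ) (hφc : HasCompactSupport φ) (x : En n) :
    HasDerivAt (fun t => Pconv n s t φ x) (∫ y, Pk1 n s z (x - y) * φ y) z := by
  unfold Pconv
  refine hasDerivAt_int hφ hφc (k := fun t y => Pker n s t (x - y))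
    (k' := fun t y => Pk1 n s t (x - y)) hz ?_ ?_ ?_
  · intro r hr; exact (Pker_cont_x n s hr).comp (by fun_prop)
  · exact (Pk1_cont n s).comp (f := fun q : ℝ × En n => (q.1, x - q.2)) (by fun_prop)
      (fun q hq => ⟨hq.1, mem_univ _⟩)
  · intro r hr y; exact Pker_hasDerivAt s (x - y) hr

lemma Pconv_deriv_le {n : ℕ} {s : ℝ} (hs : 0 < s) {z : ℝ} (hz : 0 < z) {φ : En n → ℝ}
    (hφ : Continuous φ) (hφc : HasCompactSupport φ) (x : En n) :
    |deriv (fun t => Pconv n s t φ x) z| ≤ (n + 4 * s) / z * Pconv n s z (fun y => |φ y|) x := by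
  rw [(Pconv_hasDerivAt s hz hφ hφc x).deriv]
  refine abs_integral_le_integral_abs.trans ?_
  unfold Pconv
  rw [← integral_const_mul]
  apply integral_mono_of_nonneg (ae_of_all _ fun y => abs_nonneg _)
  · exact (Pconv_integrand_integrable n s hz hφ.abs hφc.abs x).const_mul _
  · refine ae_of_all _ fun y => ?_
    simp only [abs_mul]
    rw [← mul_assoc]
    exact mul_le_mul_of_nonneg_right (Pk1_abs_le hs _ hz) (abs_nonneg _)

lemma Pconv_hasDerivAt2 {n : ℕ} (s : ℝ) {z : ℝ} (hz : 0 < z) {φ : En n → ℝ}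
    (hφ : ContDiff ℝ (⊤ : ℕ∞) φ) (hφc : HasCompactSupport φ) (x : En n) :
    HasDerivAt (fun t => t ^ (1 - 2 * s) * deriv (fun r => Pconv n s r φ x) t)
      (-(z ^ (1 - 2 * s) * Pconv n s z (lapX φ) x)) z := by
  have h := hasDerivAt_int hφ.continuous hφc (k := fun t y => PJ n s t (x - y))
    (k' := fun t y => PJ1 n s t (x - y)) hz ?_ ?_ ?_
  · have e : (fun t => t ^ (1 - 2 * s) * deriv (fun r => Pconv n s r φ x) t)
        =ᶠ[𝓝 z] fun t => ∫ y, PJ n s t (x - y) * φ y := by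
      filter_upwards [lt_mem_nhds hz] with t ht
      rw [(Pconv_hasDerivAt s ht hφ.continuous hφc x).deriv, ← integral_const_mul]
      congr 1; ext y
      rw [PJ_eq s _ ht]; ring
    refine (h.congr_of_eventuallyEq e).congr_deriv ?_
    have e2 : ∀ y, PJ1 n s z (x - y) * φ y
        = -(z ^ (1 - 2 * s) * (φ y * lapX (fun y => Pker n s z (x - y)) y)) := by
      intro y
      have := lap_Pker s x y hz
      linear_combination (φ y) * this
    simp_rw [e2]
    rw [integral_neg, integral_const_mul, ibp_lap hφ hφc]
    · unfold Pconv
      simp_rw [mul_comm]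
    · unfold Pker
      exact contDiff_const.mul (rho_contDiff x hz _)
  · intro r hr; exact (slice_cont (PJ_cont n s) hr).comp (by fun_prop)
  · exact (PJ1_cont n s).comp (f := fun q : ℝ × En n => (q.1, x - q.2)) (by fun_prop)
      (fun q hq => ⟨hq.1, mem_univ _⟩)
  · intro r hr y; exact PJ_hasDerivAt s (x - y) hr


lemma Pker_measurable (n : ℕ) (s : ℝ) : Measurable (fun p : En n × ℝ => Pker n s p.2 p.1) := by
  unfold Pker; fun_prop

lemma Pconv_measurable (n : ℕ) (s : ℝ) {f : En n → ℝ} (hf : Measurable f) :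
    Measurable (fun p : En n × ℝ => Pconv n s p.2 f p.1) := by
  unfold Pconv
  have h : Measurable (fun q : (En n × ℝ) × En n => Pker n s q.1.2 (q.1.1 - q.2) * f q.2) := by
    have h1 := (Pker_measurable n s).comp
      (show Measurable (fun q : (En n × ℝ) × En n => (q.1.1 - q.2, q.1.2)) by fun_prop)
    exact h1.mul (hf.comp measurable_snd)
  exact (h.stronglyMeasurable.integral_prod_right).measurable

lemma Pconv_abs_nonneg (n : ℕ) {s : ℝ} (hs : 0 < s) {z : ℝ} (hz : 0 < z) (f : En n → ℝ) (x : En n) :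
    0 ≤ Pconv n s z (fun y => |f y|) x :=
  (abs_nonneg _).trans (Pconv_abs_le n hs hz x)

/-- weights against which all Poisson averages are uniformly integrable -/
def WB {n : ℕ} (w : En n → ℝ≥0∞) : Prop :=
  ∀ f : En n → ℝ, Continuous f → HasCompactSupport f → ∃ B : ℝ≥0, ∀ σ z : ℝ, 0 < σ → 0 < z →
    ∫⁻ x, w x * ENNReal.ofReal (Pconv n σ z (fun y => |f y|) x) ≤ B

lemma WB_of {n : ℕ} (c : ℝ≥0) {e : En n → ℝ≥0∞} (he : ∫⁻ x, e x < ⊤) :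
    WB (fun x => (c : ℝ≥0∞) + e x) := by
  intro f hf hfc
  obtain ⟨M, hM⟩ := hfc.exists_bound_of_continuous hf
  have hM : ∀ y, |f y| ≤ M := hM
  have hI : ∫⁻ y, ENNReal.ofReal |f y| < ⊤ := by
    have := (hf.integrable_of_hasCompactSupport (μ := volume) hfc).2
    rw [hasFiniteIntegral_iff_norm] at this
    exact this
  set K : ℝ≥0∞ := c * (∫⁻ y, ENNReal.ofReal |f y|) + (∫⁻ x, e x) * ENNReal.ofReal M with hK
  have hKt : K ≠ ⊤ := by
    rw [hK]
    exact ENNReal.add_ne_top.2 ⟨ENNReal.mul_ne_top ENNReal.coe_ne_top hI.ne,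
      ENNReal.mul_ne_top he.ne ENNReal.ofReal_ne_top⟩
  refine ⟨K.toNNReal, fun σ z hσ hz => ?_⟩
  rw [ENNReal.coe_toNNReal hKt]
  have hm : Measurable (fun x => Pconv n σ z (fun y => |f y|) x) :=
    (Pconv_measurable n σ hf.abs.measurable).comp (measurable_id.prodMk measurable_const)
  simp_rw [add_mul]
  rw [lintegral_add_left (by fun_prop), lintegral_const_mul' _ _ ENNReal.coe_ne_top,
    Pconv_lintegral n hσ hz hf hfc, hK]
  gcongr
  rw [← lintegral_mul_const' _ _ ENNReal.ofReal_ne_top]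
  gcongr
  exact Pconv_le n hσ hz hf hfc hM _

lemma Pconv_contOn_z {n : ℕ} (s : ℝ) {f : En n → ℝ} (hf : Continuous f) (hfc : HasCompactSupport f)
    (x : En n) : ContinuousOn (fun t => Pconv n s t f x) (Ioi 0) := fun _ ht =>
  (Pconv_hasDerivAt s ht hf hfc x).continuousAt.continuousWithinAt

lemma Pconv_deriv_near {n : ℕ} {s : ℝ} (hs : 0 < s) {φ : En n → ℝ}
    (hφ : ContDiff ℝ (⊤ : ℕ∞) φ) (hφc : HasCompactSupport φ) (x : En n) {z : ℝ} (hz : 0 < z)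
    (hz1 : z ≤ 1) :
    |z ^ (1 - 2 * s) * deriv (fun t => Pconv n s t φ x) z| ≤
      (n + 4 * s) * Pconv n s 1 (fun y => |φ y|) x
        + ∫ t in z..1, t ^ (1 - 2 * s) * Pconv n s t (fun y => |lapX φ y|) x := by
  have hl := (lapX_contDiff hφ).continuous
  have hlc := lapX_hcs hφc
  have hsub : uIcc z 1 ⊆ Ioi 0 := by
    rw [uIcc_of_le hz1]; exact fun t ht => lt_of_lt_of_le hz ht.1
  have hrp : ContinuousOn (fun t : ℝ => t ^ (1 - 2 * s)) (uIcc z 1) := fun t ht =>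
    (Real.continuousAt_rpow_const _ _ (Or.inl (ne_of_gt (hsub ht)))).continuousWithinAt
  have hi : IntervalIntegrable (fun t => -(t ^ (1 - 2 * s) * Pconv n s t (lapX φ) x)) volume z 1 :=
    (hrp.mul ((Pconv_contOn_z s hl hlc x).mono hsub)).neg.intervalIntegrable
  have h := intervalIntegral.integral_eq_sub_of_hasDerivAt
    (fun t ht => Pconv_hasDerivAt2 s (hsub ht) hφ hφc x) hi
  have h1 := Pconv_deriv_le hs one_pos hφ.continuous hφc x
  rw [Real.one_rpow, one_mul] at h
  rw [div_one] at h1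
  have h2 : |∫ t in z..1, -(t ^ (1 - 2 * s) * Pconv n s t (lapX φ) x)| ≤
      ∫ t in z..1, t ^ (1 - 2 * s) * Pconv n s t (fun y => |lapX φ y|) x := by
    refine (intervalIntegral.abs_integral_le_integral_abs hz1).trans ?_
    apply intervalIntegral.integral_mono_on hz1 hi.abs
    · exact (hrp.mul ((Pconv_contOn_z s hl.abs hlc.abs x).mono hsub)).intervalIntegrable
    · intro t ht
      have ht0 : 0 < t := lt_of_lt_of_le hz ht.1
      rw [abs_neg, abs_mul, abs_of_nonneg (by positivity)]
      exact mul_le_mul_of_nonneg_left (Pconv_abs_le n hs ht0 x) (by positivity)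
  set D1 := deriv (fun r => Pconv n s r φ x) 1
  set Dz := z ^ (1 - 2 * s) * deriv (fun t => Pconv n s t φ x) z
  have : Dz = D1 - ∫ t in z..1, -(t ^ (1 - 2 * s) * Pconv n s t (lapX φ) x) := by rw [h]; ring
  rw [this]
  exact (abs_sub _ _).trans (add_le_add h1 h2)

lemma Pconv_deriv_sup {n : ℕ} {s : ℝ} (hs : 0 < s) (hs1 : s < 1) {φ : En n → ℝ}
    (hφ : ContDiff ℝ (⊤ : ℕ∞) φ) (hφc : HasCompactSupport φ) :
    ∃ C : ℝ, 0 ≤ C ∧ ∀ x : En n, ∀ z : ℝ, 0 < z → z ≤ 1 →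
      |z ^ (1 - 2 * s) * deriv (fun t => Pconv n s t φ x) z| ≤ C := by
  have hl := (lapX_contDiff hφ).continuous
  have hlc := lapX_hcs hφc
  obtain ⟨M, hM⟩ := hφc.exists_bound_of_continuous hφ.continuous
  obtain ⟨M', hM'⟩ := hlc.exists_bound_of_continuous hl
  have hM : ∀ y, |φ y| ≤ M := hM
  have hM' : ∀ y, |lapX φ y| ≤ M' := hM'
  have hM0 : 0 ≤ M := (abs_nonneg _).trans (hM 0)
  have hM0' : 0 ≤ M' := (abs_nonneg _).trans (hM' 0)
  refine ⟨(n + 4 * s) * M + M' * (1 / (2 - 2 * s)), ?_, ?_⟩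
  · have : 0 < 2 - 2 * s := by linarith
    positivity
  · intro x z hz hz1
    refine (Pconv_deriv_near hs hφ hφc x hz hz1).trans ?_
    have hsub : uIcc z 1 ⊆ Ioi 0 := by
      rw [uIcc_of_le hz1]; exact fun t ht => lt_of_lt_of_le hz ht.1
    have hrp : ContinuousOn (fun t : ℝ => t ^ (1 - 2 * s)) (uIcc z 1) := fun t ht =>
      (Real.continuousAt_rpow_const _ _ (Or.inl (ne_of_gt (hsub ht)))).continuousWithinAt
    apply add_le_add
    · exact mul_le_mul_of_nonneg_left (Pconv_le n hs one_pos hφ.continuous hφc hM x) (by positivity)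
    · calc _ ≤ ∫ t in z..1, t ^ (1 - 2 * s) * M' := by
            apply intervalIntegral.integral_mono_on hz1
            · exact (hrp.mul ((Pconv_contOn_z s hl.abs hlc.abs x).mono hsub)).intervalIntegrable
            · exact (hrp.mul continuousOn_const).intervalIntegrable
            · intro t ht
              have ht0 : 0 < t := lt_of_lt_of_le hz ht.1
              exact mul_le_mul_of_nonneg_left (Pconv_le n hs ht0 hl hlc hM' x) (by positivity)
        _ = M' * ((1 - z ^ (2 - 2 * s)) / (2 - 2 * s)) := by
            rw [intervalIntegral.integral_mul_const, integral_rpow (Or.inl (by linarith)),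
              Real.one_rpow, mul_comm]
            congr 2 <;> ring_nf
        _ ≤ _ := by
            have : 0 < 2 - 2 * s := by linarith
            have : 0 ≤ z ^ (2 - 2 * s) := by positivity
            gcongr
            linarith

lemma Pconv_sub_le {n : ℕ} (hn : 1 ≤ n) {s : ℝ} (hs : 0 < s) (hs1 : s < 1) {φ : En n → ℝ}
    (hφ : ContDiff ℝ (⊤ : ℕ∞) φ) (hφc : HasCompactSupport φ) :
    ∃ C : ℝ, 0 ≤ C ∧ ∀ x : En n, ∀ z : ℝ, 0 < z → z ≤ 1 →
      |Pconv n s z φ x - φ x| ≤ C * z ^ (2 * s) := by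
  obtain ⟨C, hC0, hC⟩ := Pconv_deriv_sup hs hs1 hφ hφc
  refine ⟨C / (2 * s), by positivity, fun x z hz hz1 => ?_⟩
  have h1 : ∀ t, 0 < t → t < z → |Pconv n s z φ x - Pconv n s t φ x| ≤ C / (2 * s) * z ^ (2 * s) := by
    intro t ht htz
    have hsub : uIcc t z ⊆ Ioi 0 := by
      rw [uIcc_of_le htz.le]; exact fun r hr => lt_of_lt_of_le ht hr.1
    have hd : ∀ r ∈ uIcc t z, HasDerivAt (fun r => Pconv n s r φ x)
        (deriv (fun r => Pconv n s r φ x) r) r := fun r hr =>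
      (Pconv_hasDerivAt s (hsub hr) hφ.continuous hφc x).differentiableAt.hasDerivAt
    have hrp : ∀ p : ℝ, ContinuousOn (fun t : ℝ => t ^ p) (uIcc t z) := fun p r hr =>
      (Real.continuousAt_rpow_const _ _ (Or.inl (ne_of_gt (hsub hr)))).continuousWithinAt
    have hc : ContinuousOn (deriv (fun r => Pconv n s r φ x)) (uIcc t z) := by
      have h2 : ContinuousOn (fun r => r ^ (1 - 2 * s) * deriv (fun r => Pconv n s r φ x) r) (uIcc t z) :=
        fun r hr => (Pconv_hasDerivAt2 s (hsub hr) hφ hφc x).continuousAt.continuousWithinAt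
      refine ((hrp (-(1 - 2 * s))).mul h2).congr fun r hr => ?_
      have : 0 < r := hsub hr
      simp only [Pi.mul_apply]
      rw [← mul_assoc, ← Real.rpow_add this]; simp
    have h := intervalIntegral.integral_eq_sub_of_hasDerivAt hd hc.intervalIntegrable
    rw [← h]
    refine (intervalIntegral.abs_integral_le_integral_abs htz.le).trans ?_
    calc _ ≤ ∫ r in t..z, r ^ (2 * s - 1) * C := by
          apply intervalIntegral.integral_mono_on htz.le hc.intervalIntegrable.abs
          · exact ((hrp _).mul continuousOn_const).intervalIntegrable
          · intro r hr
            have hr0 : 0 < r := lt_of_lt_of_le ht hr.1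
            have := hC x r hr0 (hr.2.trans hz1)
            rw [abs_mul, abs_of_nonneg (by positivity)] at this
            calc _ = r ^ (2 * s - 1) * (r ^ (1 - 2 * s) * |deriv (fun r => Pconv n s r φ x) r|) := by
                  rw [← mul_assoc, ← Real.rpow_add hr0]; simp
              _ ≤ _ := by gcongr
      _ = C / (2 * s) * (z ^ (2 * s) - t ^ (2 * s)) := by
          rw [intervalIntegral.integral_mul_const, integral_rpow (Or.inl (by linarith))]
          rw [sub_add_cancel]; ring
      _ ≤ _ := by
          have : 0 ≤ t ^ (2 * s) := by positivity
          gcongr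
          linarith
  have h2 : Tendsto (fun t => |Pconv n s z φ x - Pconv n s t φ x|) (𝓝[>] 0)
      (𝓝 |Pconv n s z φ x - φ x|) :=
    ((Pconv_tendsto n hn hs hφ.continuous hφc x).const_sub _).abs
  refine le_of_tendsto h2 ?_
  filter_upwards [Ioo_mem_nhdsGT hz] with t ht using h1 t ht.1 ht.2

/-- weighted bounds for `∂_z` of the extension -/
lemma WB_deriv {n : ℕ} {w : En n → ℝ≥0∞} (hw : WB w) {φ : En n → ℝ}
    (hφ : ContDiff ℝ (⊤ : ℕ∞) φ) (hφc : HasCompactSupport φ) {s : ℝ} (hs : 0 < s) :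
    ∃ B : ℝ≥0, ∀ z : ℝ, 0 < z →
      ∫⁻ x, w x * ENNReal.ofReal |deriv (fun t => Pconv n s t φ x) z| ≤ ENNReal.ofReal (B / z) := by
  obtain ⟨B, hB⟩ := hw φ hφ.continuous hφc
  refine ⟨Real.toNNReal (n + 4 * s) * B, fun z hz => ?_⟩
  calc _ ≤ ∫⁻ x, ENNReal.ofReal ((n + 4 * s) / z) * (w x * ENNReal.ofReal (Pconv n s z (fun y => |φ y|) x)) := by
        refine lintegral_mono fun x => ?_
        rw [mul_left_comm, ← ENNReal.ofReal_mul (by positivity)]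
        refine mul_le_mul' le_rfl (ENNReal.ofReal_le_ofReal ?_)
        exact Pconv_deriv_le hs hz hφ.continuous hφc x
    _ ≤ ENNReal.ofReal ((n + 4 * s) / z) * B := by
        rw [lintegral_const_mul' _ _ ENNReal.ofReal_ne_top]
        gcongr
        exact hB s z hs hz
    _ = _ := by
        rw [← ENNReal.ofReal_coe_nnreal, ← ENNReal.ofReal_mul (by positivity)]
        congr 1
        push_cast
        rw [Real.coe_toNNReal _ (by positivity)]; ring

lemma WB_deriv_half {n : ℕ} {w : En n → ℝ≥0∞} (hw : WB w) (hwm : AEMeasurable w) {φ : En n → ℝ}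
    (hφ : ContDiff ℝ (⊤ : ℕ∞) φ) (hφc : HasCompactSupport φ) :
    ∃ B : ℝ≥0, ∀ z : ℝ, 0 < z → z ≤ 1 →
      ∫⁻ x, w x * ENNReal.ofReal |deriv (fun t => Pconv n (1/2) t φ x) z| ≤ B := by
  have hh : (0:ℝ) < 1/2 := by norm_num
  have hl := (lapX_contDiff hφ).continuous
  have hlc := lapX_hcs hφc
  obtain ⟨B, hB⟩ := hw φ hφ.continuous hφc
  obtain ⟨B', hB'⟩ := hw (lapX φ) hl hlc
  refine ⟨Real.toNNReal (n + 2) * B + B', fun z hz hz1 => ?_⟩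
  have hm : Measurable (fun p : En n × ℝ => Pconv n (1/2) p.2 (fun y => |lapX φ y|) p.1) :=
    Pconv_measurable n _ hl.abs.measurable
  have hm1 : Measurable (fun x : En n => Pconv n (1/2) 1 (fun y => |φ y|) x) :=
    (Pconv_measurable n _ hφ.continuous.abs.measurable).comp (measurable_id.prodMk measurable_const)
  have hpt : ∀ x : En n, ENNReal.ofReal |deriv (fun t => Pconv n (1/2) t φ x) z| ≤
      ENNReal.ofReal (n + 2) * ENNReal.ofReal (Pconv n (1/2) 1 (fun y => |φ y|) x)
      + ∫⁻ t in Ioc z 1, ENNReal.ofReal (Pconv n (1/2) t (fun y => |lapX φ y|) x) := by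
    intro x
    have h := Pconv_deriv_near hh hφ hφc x hz hz1
    norm_num at h
    have hsub : uIcc z 1 ⊆ Ioi 0 := by
      rw [uIcc_of_le hz1]; exact fun t ht => lt_of_lt_of_le hz ht.1
    have hi : IntervalIntegrable (fun t => Pconv n (1/2) t (fun y => |lapX φ y|) x) volume z 1 :=
      ((Pconv_contOn_z _ hl.abs hlc.abs x).mono hsub).intervalIntegrable
    rw [← ENNReal.ofReal_mul (by positivity), ← ofReal_integral_eq_lintegral_ofReal hi.1,
      ← ENNReal.ofReal_add]
    · rw [← intervalIntegral.integral_of_le hz1]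
      apply ENNReal.ofReal_le_ofReal
      norm_num
      linarith
    · exact mul_nonneg (by positivity) (Pconv_abs_nonneg n hh one_pos _ _)
    · apply setIntegral_nonneg measurableSet_Ioc
      intro t ht; exact Pconv_abs_nonneg n hh (hz.trans ht.1) _ _
    · filter_upwards [ae_restrict_mem measurableSet_Ioc] with t ht
      exact Pconv_abs_nonneg n hh (hz.trans ht.1) _ _
  calc _ ≤ ∫⁻ x, (ENNReal.ofReal (n + 2) * (w x * ENNReal.ofReal (Pconv n (1/2) 1 (fun y => |φ y|) x))
        + ∫⁻ t in Ioc z 1, w x * ENNReal.ofReal (Pconv n (1/2) t (fun y => |lapX φ y|) x)) := by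
        refine lintegral_mono fun x => ?_
        have hmt : Measurable (fun t => ENNReal.ofReal (Pconv n (1/2) t (fun y => |lapX φ y|) x)) :=
          (hm.comp (measurable_const.prodMk measurable_id)).ennreal_ofReal
        rw [lintegral_const_mul _ hmt, mul_left_comm, ← mul_add]
        refine mul_le_mul' le_rfl ?_
        exact hpt x
    _ = ENNReal.ofReal (n + 2) * (∫⁻ x, w x * ENNReal.ofReal (Pconv n (1/2) 1 (fun y => |φ y|) x))
        + ∫⁻ t in Ioc z 1, ∫⁻ x, w x * ENNReal.ofReal (Pconv n (1/2) t (fun y => |lapX φ y|) x) := by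
        rw [lintegral_add_left' (by fun_prop), lintegral_const_mul' _ _ ENNReal.ofReal_ne_top,
          lintegral_lintegral_swap]
        exact (hwm.comp_fst).mul hm.ennreal_ofReal.aemeasurable
    _ ≤ ENNReal.ofReal (n + 2) * B + ∫⁻ t in Ioc z 1, B' := by
        gcongr ?_ + ?_
        · gcongr
          exact hB _ _ hh one_pos
        · apply setLIntegral_mono measurable_const
          intro t ht
          exact hB' _ _ hh (hz.trans ht.1)
    _ ≤ _ := by
        rw [setLIntegral_const, Real.volume_Ioc]
        push_cast
        gcongr ?_ + ?_
        · exact le_of_eq rfl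
        · calc _ ≤ (B' : ℝ≥0∞) * 1 := by
                gcongr
                rw [← ENNReal.ofReal_one]
                exact ENNReal.ofReal_le_ofReal (by linarith)
            _ = _ := mul_one _


/-- smoothness on a slab `ℝⁿ × I` -/
def Sm {n : ℕ} (I : Set ℝ) (W : En n → ℝ → ℝ) : Prop :=
  ContDiffOn ℝ (⊤ : ℕ∞) (fun p : En n × ℝ => W p.1 p.2) (univ ×ˢ I)

lemma Sm.mono {n : ℕ} {I J : Set ℝ} {W : En n → ℝ → ℝ} (h : Sm I W) (hJ : J ⊆ I) : Sm J W :=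
  ContDiffOn.mono h (prod_mono subset_rfl hJ)

lemma slab_open {n : ℕ} {I : Set ℝ} (hI : IsOpen I) : IsOpen ((univ : Set (En n)) ×ˢ I) :=
  isOpen_univ.prod hI

lemma Sm.contDiffAt {n : ℕ} {I : Set ℝ} (hI : IsOpen I) {W : En n → ℝ → ℝ} (h : Sm I W) (x : En n)
    {z : ℝ} (hz : z ∈ I) : ContDiffAt ℝ (⊤ : ℕ∞) (fun p : En n × ℝ => W p.1 p.2) (x, z) :=
  ContDiffOn.contDiffAt h ((slab_open hI).mem_nhds ⟨mem_univ _, hz⟩)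

lemma Sm.contz {n : ℕ} {I : Set ℝ} (hI : IsOpen I) {W : En n → ℝ → ℝ} (h : Sm I W) (x : En n)
    {z : ℝ} (hz : z ∈ I) : ContDiffAt ℝ (⊤ : ℕ∞) (W x) z :=
  ContDiffAt.comp (f := fun t : ℝ => (x, t)) z (h.contDiffAt hI x hz) (by fun_prop)

lemma Sm.contx {n : ℕ} {I : Set ℝ} (hI : IsOpen I) {W : En n → ℝ → ℝ} (h : Sm I W)
    {z : ℝ} (hz : z ∈ I) : ContDiff ℝ (⊤ : ℕ∞) (fun x => W x z) :=
  contDiff_iff_contDiffAt.2 fun x =>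
    ContDiffAt.comp (f := fun y : En n => (y, z)) x (h.contDiffAt hI x hz) (by fun_prop)

lemma Sm.hasDerivAt {n : ℕ} {I : Set ℝ} (hI : IsOpen I) {W : En n → ℝ → ℝ} (h : Sm I W) (x : En n)
    {z : ℝ} (hz : z ∈ I) : HasDerivAt (W x) (deriv (W x) z) z :=
  ((h.contz hI x hz).differentiableAt (by simp)).hasDerivAt

lemma Sm.dz {n : ℕ} {I : Set ℝ} (hI : IsOpen I) {W : En n → ℝ → ℝ} (h : Sm I W) :
    Sm I (fun x z => deriv (W x) z) := by
  have h1 : ContDiffOn ℝ (⊤ : ℕ∞)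
      (fun p => fderiv ℝ (fun p : En n × ℝ => W p.1 p.2) p ((0 : En n), (1:ℝ))) (univ ×ˢ I) :=
    (ContDiffOn.fderiv_of_isOpen h (slab_open hI) (m := (⊤ : ℕ∞)) (by simp)).clm_apply contDiffOn_const
  refine ContDiffOn.congr h1 fun p hp => ?_
  have hf : HasFDerivAt (fun p : En n × ℝ => W p.1 p.2)
      (fderiv ℝ (fun p : En n × ℝ => W p.1 p.2) p) p :=
    ((h.contDiffAt hI p.1 hp.2).differentiableAt (by simp)).hasFDerivAt
  have h2 : HasDerivAt (fun t : ℝ => (p.1, t)) ((0 : En n), (1:ℝ)) p.2 :=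
    (hasDerivAt_const _ _).prodMk (hasDerivAt_id _)
  exact (hf.comp_hasDerivAt p.2 h2).deriv

lemma Sm.pd {n : ℕ} {I : Set ℝ} (hI : IsOpen I) {W : En n → ℝ → ℝ} (h : Sm I W) (i : Fin n) :
    Sm I (fun x z => pd i (fun y => W y z) x) := by
  have h1 : ContDiffOn ℝ (⊤ : ℕ∞)
      (fun p => fderiv ℝ (fun p : En n × ℝ => W p.1 p.2) p (EuclideanSpace.single i 1, (0:ℝ))) (univ ×ˢ I) :=
    (ContDiffOn.fderiv_of_isOpen h (slab_open hI) (m := (⊤ : ℕ∞)) (by simp)).clm_apply contDiffOn_const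
  refine ContDiffOn.congr h1 fun p hp => ?_
  have hf : HasFDerivAt (fun p : En n × ℝ => W p.1 p.2)
      (fderiv ℝ (fun p : En n × ℝ => W p.1 p.2) p) p :=
    ((h.contDiffAt hI p.1 hp.2).differentiableAt (by simp)).hasFDerivAt
  have h2 : HasFDerivAt (fun y : En n => (y, p.2)) (ContinuousLinearMap.inl ℝ (En n) ℝ) p.1 :=
    hasFDerivAt_prodMk_left p.1 p.2
  have h3 := (HasFDerivAt.comp p.1 (f := fun y : En n => (y, p.2)) hf h2).fderiv
  unfold _root_.pd
  have h4 : (fun y => W y p.2) = (fun p : En n × ℝ => W p.1 p.2) ∘ fun y : En n => (y, p.2) := rfl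
  show fderiv ℝ (fun y => W y p.2) p.1 _ = _
  rw [h4, h3]
  rfl

lemma Sm.lap {n : ℕ} {I : Set ℝ} (hI : IsOpen I) {W : En n → ℝ → ℝ} (h : Sm I W) :
    Sm I (fun x z => lapX (fun y => W y z) x) := by
  unfold lapX
  exact ContDiffOn.sum fun i _ => Sm.pd hI (W := fun x z => _root_.pd i (fun y => W y z) x) (h.pd hI i) i

lemma Sm.mul {n : ℕ} {I : Set ℝ} {W U : En n → ℝ → ℝ} (h : Sm I W) (h' : Sm I U) :
    Sm I (fun x z => W x z * U x z) := ContDiffOn.mul h h'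

lemma Sm.add {n : ℕ} {I : Set ℝ} {W U : En n → ℝ → ℝ} (h : Sm I W) (h' : Sm I U) :
    Sm I (fun x z => W x z + U x z) := ContDiffOn.add h h'

lemma Sm.sub {n : ℕ} {I : Set ℝ} {W U : En n → ℝ → ℝ} (h : Sm I W) (h' : Sm I U) :
    Sm I (fun x z => W x z - U x z) := ContDiffOn.sub h h'

lemma Sm.of_x {n : ℕ} {I : Set ℝ} {f : En n → ℝ} (h : ContDiff ℝ (⊤ : ℕ∞) f) :
    Sm I (fun x _ => f x) := (h.comp contDiff_fst).contDiffOn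

lemma Sm.of_z {n : ℕ} {I : Set ℝ} {f : ℝ → ℝ} (h : ContDiffOn ℝ (⊤ : ℕ∞) f I) :
    Sm I (fun (_ : En n) z => f z) :=
  ContDiffOn.comp h (contDiff_snd.contDiffOn) fun _ hp => hp.2

lemma rpow_contDiffOn {I : Set ℝ} (hI : I ⊆ Ioi 0) (a : ℝ) :
    ContDiffOn ℝ (⊤ : ℕ∞) (fun z : ℝ => z ^ a) I := fun z hz =>
  (Real.contDiffAt_rpow_const_of_ne (ne_of_gt (hI hz))).contDiffWithinAt

lemma Sm.rp {n : ℕ} {I : Set ℝ} (hI : I ⊆ Ioi 0) (a : ℝ) : Sm I (fun (_ : En n) z => z ^ a) :=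
  Sm.of_z (rpow_contDiffOn hI a)

lemma Sm.Ls {n : ℕ} {I : Set ℝ} (hI : IsOpen I) (hI0 : I ⊆ Ioi 0) (s : ℝ) {W : En n → ℝ → ℝ} (h : Sm I W) :
    Sm I (fun x z => LsOp s W x z) := by
  unfold LsOp
  exact ((Sm.rp hI0 _).mul (h.lap hI)).add (Sm.dz hI ((Sm.rp hI0 _).mul (h.dz hI)))

lemma Sm.contOn {n : ℕ} {I : Set ℝ} {W : En n → ℝ → ℝ} (h : Sm I W) :
    ContinuousOn (fun p : En n × ℝ => W p.1 p.2) (univ ×ˢ I) := ContDiffOn.continuousOn h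

lemma Sm.contOnz {n : ℕ} {I : Set ℝ} {W : En n → ℝ → ℝ} (h : Sm I W) (x : En n) :
    ContinuousOn (W x) I :=
  h.contOn.comp (f := fun t : ℝ => (x, t)) (by fun_prop) fun _ ht => ⟨mem_univ _, ht⟩

lemma lapX_mul {n : ℕ} {f g : En n → ℝ} (hf : ContDiff ℝ (⊤ : ℕ∞) f) (hg : ContDiff ℝ (⊤ : ℕ∞) g) (x : En n) :
    lapX (fun y => f y * g y) x = f x * lapX g x + 2 * (∑ i, pd i f x * pd i g x) + g x * lapX f x := by
  unfold lapX
  rw [Finset.mul_sum, Finset.mul_sum, Finset.mul_sum, ← Finset.sum_add_distrib, ← Finset.sum_add_distrib]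
  apply Finset.sum_congr rfl
  intro i _
  have h0 : ∀ {u : En n → ℝ}, ContDiff ℝ (⊤ : ℕ∞) u → Differentiable ℝ u := fun hu => hu.differentiable (by simp)
  have e : pd i (fun y => f y * g y) = fun y => pd i f y * g y + f y * pd i g y := by
    ext y; exact pd_mul i (h0 hf y) (h0 hg y)
  rw [e]
  have : pd i (fun y => pd i f y * g y + f y * pd i g y) x
      = pd i (fun y => pd i f y * g y) x + pd i (fun y => f y * pd i g y) x := by
    conv_lhs => unfold pd
    rw [fderiv_fun_add]
    · rfl
    · exact (h0 ((pd_contDiff i hf).mul hg)) x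
    · exact (h0 (hf.mul (pd_contDiff i hg))) x
  rw [this, pd_mul i (h0 (pd_contDiff i hf) x) (h0 hg x), pd_mul i (h0 hf x) (h0 (pd_contDiff i hg) x)]
  ring

lemma slab_integrable {n : ℕ} {I : Set ℝ} {W : En n → ℝ → ℝ} (h : ContinuousOn (fun p : En n × ℝ => W p.1 p.2) (univ ×ˢ I))
    {α β : ℝ} (hI : Icc α β ⊆ I) {K : Set (En n)} (hK : IsCompact K) (h0 : ∀ x z, x ∉ K → W x z = 0) :
    Integrable (fun p : En n × ℝ => W p.1 p.2) ((volume : Measure (En n)).prod (volume.restrict (Ioc α β))) := by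
  have h1 : IntegrableOn (fun p : En n × ℝ => W p.1 p.2) (K ×ˢ Icc α β) :=
    (h.mono (prod_mono (subset_univ _) hI)).integrableOn_compact (hK.prod isCompact_Icc)
  have h2 : IntegrableOn (fun p : En n × ℝ => W p.1 p.2) (univ ×ˢ Icc α β) := by
    apply h1.of_forall_sdiff_eq_zero (MeasurableSet.univ.prod measurableSet_Icc)
    rintro ⟨x, z⟩ ⟨⟨_, hz⟩, hx⟩
    exact h0 x z fun hxK => hx ⟨hxK, hz⟩
  have h3 := h2.mono_set (prod_mono subset_rfl Ioc_subset_Icc_self : (univ : Set (En n)) ×ˢ Ioc α β ⊆ univ ×ˢ Icc α β)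
  rw [IntegrableOn, Measure.volume_eq_prod, ← Measure.prod_restrict, Measure.restrict_univ] at h3
  exact h3

/-- Green's identity with a cutoff `η`. -/
lemma green {n : ℕ} {s : ℝ} {F V ψ : En n → ℝ → ℝ} {I : Set ℝ} (hI : IsOpen I) (hI0 : I ⊆ Ioi 0)
    (hV : Sm I V) (hψ : Sm I ψ) (heq : ∀ x, ∀ z, 0 < z → LsOp s V x z = F x z)
    {η : En n → ℝ} (hη : ContDiff ℝ (⊤ : ℕ∞) η) (hηc : HasCompactSupport η) {α β : ℝ} (hαβ : α ≤ β)
    (hab : Icc α β ⊆ I) :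
    (∫ x, η x * (β ^ (1 - 2 * s) * (deriv (V x) β * ψ x β - V x β * deriv (ψ x) β)))
      - (∫ x, η x * (α ^ (1 - 2 * s) * (deriv (V x) α * ψ x α - V x α * deriv (ψ x) α)))
    = ∫ z in Ioc α β, ∫ x, (η x * F x z * ψ x z - η x * V x z * LsOp s ψ x z
        - z ^ (1 - 2 * s) * V x z * (2 * (∑ i, pd i η x * pd i (fun y => ψ y z) x) + ψ x z * lapX η x)) := by
  have hVz := hV.dz hI
  have hψz := hψ.dz hI
  have hrp : Sm I (fun (_ : En n) z => z ^ (1 - 2 * s)) := Sm.rp hI0 _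
  set H : En n → ℝ → ℝ := fun x z => z ^ (1 - 2 * s) * (deriv (V x) z * ψ x z - V x z * deriv (ψ x) z) with hH
  have hHs : Sm I H := hrp.mul ((hVz.mul hψ).sub (hV.mul hψz))
  have hHz := hHs.dz hI
  -- formula for the derivative of H
  have hHd : ∀ x, ∀ z ∈ I, deriv (H x) z = F x z * ψ x z - V x z * LsOp s ψ x z
      + z ^ (1 - 2 * s) * (V x z * lapX (fun y => ψ y z) x - lapX (fun y => V y z) x * ψ x z) := by
    intro x z hz
    have h1 := ((hrp.mul hVz).hasDerivAt hI x hz).mul (hψ.hasDerivAt hI x hz)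
    have h2 := ((hrp.mul hψz).hasDerivAt hI x hz).mul (hV.hasDerivAt hI x hz)
    have h3 := (h1.sub h2).deriv
    have e : H x = (((fun t => t ^ (1 - 2 * s) * deriv (V x) t) * ψ x) -
        ((fun t => t ^ (1 - 2 * s) * deriv (ψ x) t) * V x)) := by
      ext t; simp only [hH, Pi.sub_apply, Pi.mul_apply]; ring
    rw [e, h3, ← heq x z (hI0 hz)]
    unfold LsOp
    ring
  -- FTC
  have hftc : ∀ x, H x β - H x α = ∫ z in Ioc α β, deriv (H x) z := by
    intro x
    rw [← intervalIntegral.integral_of_le hαβ]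
    symm
    apply intervalIntegral.integral_eq_sub_of_hasDerivAt
    · intro t ht; rw [uIcc_of_le hαβ] at ht; exact hHs.hasDerivAt hI x (hab ht)
    · apply ContinuousOn.intervalIntegrable
      rw [uIcc_of_le hαβ]; exact (hHz.contOnz x).mono hab
  have hInteg : ∀ t ∈ I, Integrable (fun x => η x * H x t) := fun t ht =>
    (hη.continuous.mul (hHs.contx hI ht).continuous).integrable_of_hasCompactSupport hηc.mul_right
  have h1 : (∫ x, η x * H x β) - (∫ x, η x * H x α) = ∫ x, ∫ z in Ioc α β, η x * deriv (H x) z := by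
    rw [← integral_sub (hInteg β (hab ⟨hαβ, le_rfl⟩)) (hInteg α (hab ⟨le_rfl, hαβ⟩))]
    congr 1; ext x
    rw [integral_const_mul, ← hftc]; ring
  rw [h1, integral_integral_swap]
  · apply setIntegral_congr_fun measurableSet_Ioc
    intro z hz
    have hzI : z ∈ I := hab (Ioc_subset_Icc_self hz)
    have hVx := hV.contx hI hzI
    have hψx := hψ.contx hI hzI
    have hLx := (hψ.Ls hI hI0 s).contx hI hzI
    have hVL := lapX_contDiff hVx
    have hψL := lapX_contDiff hψx
    have hηL := lapX_contDiff hη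
    have hFx : Continuous (fun x => F x z) := by
      have : (fun x => F x z) = fun x => LsOp s V x z := by ext x; exact (heq x z (hI0 hzI)).symm
      rw [this]; exact ((hV.Ls hI hI0 s).contx hI hzI).continuous
    have ib := ibp_lap (hη.mul hψx) hηc.mul_right hVx
    simp_rw [lapX_mul hη hψx] at ib
    have hgr : Continuous (fun x => ∑ i, pd i η x * pd i (fun y => ψ y z) x) :=
      continuous_finsetSum _ fun i _ => (pd_contDiff i hη).continuous.mul (pd_contDiff i hψx).continuous
    have hηLc := lapX_hcs hηc
    have hgrc : HasCompactSupport (fun x => ∑ i, pd i η x * pd i (fun y => ψ y z) x) := by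
      apply HasCompactSupport.intro hηc
      intro x hx
      apply Finset.sum_eq_zero
      intro i _
      have : pd i η x = 0 := image_eq_zero_of_notMem_tsupport fun h =>
        hx (tsupport_fderiv_apply_subset ℝ _ h)
      rw [this, zero_mul]
    have i1 : Integrable (fun x => η x * F x z * ψ x z - η x * V x z * LsOp s ψ x z) := by
      apply Continuous.integrable_of_hasCompactSupport
      · exact ((hη.continuous.mul hFx).mul hψx.continuous).sub ((hη.continuous.mul hVx.continuous).mul hLx.continuous)
      · exact (hηc.mul_right.mul_right).sub (hηc.mul_right.mul_right)
    have i2 : Integrable (fun x => η x * V x z * lapX (fun y => ψ y z) x) := by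
      apply Continuous.integrable_of_hasCompactSupport
      · exact (hη.continuous.mul hVx.continuous).mul hψL.continuous
      · exact (hηc.mul_right.mul_right)
    have i3 : Integrable (fun x => η x * ψ x z * lapX (fun y => V y z) x) := by
      apply Continuous.integrable_of_hasCompactSupport
      · exact (hη.continuous.mul hψx.continuous).mul hVL.continuous
      · exact (hηc.mul_right.mul_right)
    have i4 : Integrable (fun x => V x z * (2 * (∑ i, pd i η x * pd i (fun y => ψ y z) x) + ψ x z * lapX η x)) := by
      apply Continuous.integrable_of_hasCompactSupport
      · exact hVx.continuous.mul ((continuous_const.mul hgr).add (hψx.continuous.mul hηL.continuous))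
      · exact (hgrc.mul_left.add hηLc.mul_left).mul_left
    have e1 : ∫ x, η x * deriv (H x) z = (∫ x, (η x * F x z * ψ x z - η x * V x z * LsOp s ψ x z))
        + z ^ (1 - 2 * s) * ((∫ x, η x * V x z * lapX (fun y => ψ y z) x) - ∫ x, η x * ψ x z * lapX (fun y => V y z) x) := by
      have i5 : Integrable (fun x => z ^ (1 - 2 * s) * (η x * V x z * lapX (fun y => ψ y z) x
          - η x * ψ x z * lapX (fun y => V y z) x)) := (i2.sub i3).const_mul _
      rw [← integral_sub i2 i3, ← integral_const_mul, ← integral_add i1 i5]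
      congr 1; ext x
      rw [hHd x z hzI]; ring
    have e2 : ∫ x, (η x * F x z * ψ x z - η x * V x z * LsOp s ψ x z
        - z ^ (1 - 2 * s) * V x z * (2 * (∑ i, pd i η x * pd i (fun y => ψ y z) x) + ψ x z * lapX η x))
        = (∫ x, (η x * F x z * ψ x z - η x * V x z * LsOp s ψ x z))
          - z ^ (1 - 2 * s) * ∫ x, V x z * (2 * (∑ i, pd i η x * pd i (fun y => ψ y z) x) + ψ x z * lapX η x) := by
      rw [← integral_const_mul, ← integral_sub i1 (i4.const_mul _)]
      congr 1; ext x; ring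
    have e3 : ∫ x, η x * ψ x z * lapX (fun y => V y z) x = (∫ x, η x * V x z * lapX (fun y => ψ y z) x)
        + ∫ x, V x z * (2 * (∑ i, pd i η x * pd i (fun y => ψ y z) x) + ψ x z * lapX η x) := by
      rw [ib, ← integral_add i2 i4]
      congr 1; ext x; ring
    simp only
    rw [e1, e2, e3]; ring
  · exact slab_integrable (W := fun x z => η x * deriv (H x) z) ((Sm.of_x hη).mul hHz).contOn hab hηc.isCompact
      fun x z hx => by rw [image_eq_zero_of_notMem_tsupport hx, zero_mul]


/-- the energy density in `x` -/
def eV {n : ℕ} (s : ℝ) (V : En n → ℝ → ℝ) (x : En n) : ℝ≥0∞ :=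
  ∫⁻ z in Ioi (0:ℝ), ENNReal.ofReal ((deriv (V x) z) ^ 2 * z ^ (1 - 2 * s))

lemma slab_meas {n : ℕ} {I : Set ℝ} :
    (volume : Measure (En n × ℝ)).restrict (univ ×ˢ I) = (volume : Measure (En n)).prod (volume.restrict I) := by
  rw [Measure.volume_eq_prod, ← Measure.prod_restrict, Measure.restrict_univ]

lemma eV_fin {n : ℕ} {s : ℝ} {V : En n → ℝ → ℝ} (hV : Sm (Ioi 0) V)
    (hVen : ∫⁻ p in (univ : Set (En n)) ×ˢ Ioi (0 : ℝ),
      ENNReal.ofReal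
        (((∑ i, (pd i (fun y => V y p.2) p.1) ^ 2) + (deriv (V p.1) p.2) ^ 2)
          * p.2 ^ (1 - 2 * s)) < ⊤) :
    AEMeasurable (eV s V) ∧ ∫⁻ x, eV s V x < ⊤ := by
  have hc : ContinuousOn (fun p : En n × ℝ => (deriv (V p.1) p.2) ^ 2 * p.2 ^ (1 - 2 * s)) (univ ×ˢ Ioi 0) := by
    have h1 := (hV.dz isOpen_Ioi)
    have h2 : Sm (Ioi 0) (fun (_ : En n) z => z ^ (1 - 2 * s)) := Sm.rp subset_rfl _
    have h3 := ((h1.mul h1).mul h2).contOn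
    refine h3.congr fun p _ => ?_
    simp only; ring
  have hm : AEMeasurable (fun p : En n × ℝ => ENNReal.ofReal ((deriv (V p.1) p.2) ^ 2 * p.2 ^ (1 - 2 * s)))
      ((volume : Measure (En n)).prod (volume.restrict (Ioi 0))) := by
    rw [← slab_meas]
    exact (hc.aemeasurable (slab_open isOpen_Ioi).measurableSet).ennreal_ofReal
  refine ⟨hm.lintegral_prod_right', ?_⟩
  unfold eV
  rw [← lintegral_prod _ hm, ← slab_meas]
  refine lt_of_le_of_lt ?_ hVen
  apply setLIntegral_mono' (slab_open isOpen_Ioi).measurableSet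
  intro p hp
  have : 0 < p.2 := hp.2
  apply ENNReal.ofReal_le_ofReal
  apply mul_le_mul_of_nonneg_right _ (by positivity)
  have : 0 ≤ ∑ i, (pd i (fun y => V y p.2) p.1) ^ 2 := Finset.sum_nonneg fun i _ => sq_nonneg _
  linarith

lemma V_tendsto0 {n : ℕ} {V : En n → ℝ → ℝ} (hV : Sm (Ici 0) V) (hV0 : ∀ x, V x 0 = 0) (x : En n) :
    Tendsto (V x) (𝓝[>] 0) (𝓝 0) := by
  have h := (hV.contOnz x) 0 (by simp)
  rw [ContinuousWithinAt, hV0] at h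
  exact h.mono_left (nhdsWithin_mono _ Ioi_subset_Ici_self)

lemma V_bound {n : ℕ} {s : ℝ} (hs : 0 < s) {V : En n → ℝ → ℝ} (hV : Sm (Ici 0) V) (hV0 : ∀ x, V x 0 = 0)
    (x : En n) {z : ℝ} (hz : 0 < z) :
    ENNReal.ofReal |V x z| ≤ ENNReal.ofReal (z ^ s) * (((Real.toNNReal (1 / (2 * s)) : ℝ≥0) : ℝ≥0∞) + eV s V x) := by
  have hV' := hV.mono Ioi_subset_Ici_self
  have h1 : ∀ ε, 0 < ε → ε < z → ENNReal.ofReal |V x z - V x ε| ≤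
      ENNReal.ofReal (z ^ s) * (((Real.toNNReal (1 / (2 * s)) : ℝ≥0) : ℝ≥0∞) + eV s V x) := by
    intro ε hε hεz
    have hsub : Icc ε z ⊆ Ioi 0 := fun t ht => lt_of_lt_of_le hε ht.1
    have hFTC : ∫ t in ε..z, deriv (V x) t = V x z - V x ε := by
      apply intervalIntegral.integral_eq_sub_of_hasDerivAt
      · intro t ht; rw [uIcc_of_le hεz.le] at ht; exact hV'.hasDerivAt isOpen_Ioi x (hsub ht)
      · apply ContinuousOn.intervalIntegrable
        rw [uIcc_of_le hεz.le]; exact ((hV'.dz isOpen_Ioi).contOnz x).mono hsub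
    have hi : IntervalIntegrable (fun t => z ^ (-s) * t ^ (2 * s - 1)) volume ε z := by
      apply ContinuousOn.intervalIntegrable
      rw [uIcc_of_le hεz.le]
      exact continuousOn_const.mul ((rpow_contDiffOn subset_rfl _).continuousOn.mono hsub)
    rw [← hFTC, intervalIntegral.integral_of_le hεz.le]
    calc ENNReal.ofReal |∫ t in Ioc ε z, deriv (V x) t|
        ≤ ∫⁻ t in Ioc ε z, ENNReal.ofReal |deriv (V x) t| := by
          have := enorm_integral_le_lintegral_enorm (μ := volume.restrict (Ioc ε z)) (fun t => deriv (V x) t)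
          simpa only [Real.enorm_eq_ofReal_abs] using this
      _ ≤ ∫⁻ t in Ioc ε z, (ENNReal.ofReal (z ^ (-s) * t ^ (2 * s - 1))
            + ENNReal.ofReal (z ^ s) * ENNReal.ofReal ((deriv (V x) t) ^ 2 * t ^ (1 - 2 * s))) := by
          apply setLIntegral_mono' measurableSet_Ioc
          intro t ht
          have ht0 : 0 < t := hε.trans ht.1
          rw [← ENNReal.ofReal_mul (by positivity), ← ENNReal.ofReal_add (by positivity) (by positivity)]
          apply ENNReal.ofReal_le_ofReal
          set d := |deriv (V x) t|
          have hd : (deriv (V x) t) ^ 2 = d ^ 2 := (sq_abs _).symm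
          have hd0 : 0 ≤ d := abs_nonneg _
          have e1 : t ^ (2 * s - 1) = (t ^ (1 - 2 * s))⁻¹ := by
            rw [← Real.rpow_neg ht0.le]; congr 1; ring
          have e2 : z ^ (-s) = (z ^ s)⁻¹ := Real.rpow_neg hz.le _
          rw [hd, e1, e2]
          have p1 : 0 < t ^ (1 - 2 * s) := by positivity
          have p2 : 0 < z ^ s := by positivity
          set A := t ^ (1 - 2 * s)
          set B := z ^ s
          have : B⁻¹ * A⁻¹ + B * (d ^ 2 * A) - d = B⁻¹ * A⁻¹ * ((A * B * d - 1/2) ^ 2 + 3/4) := by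
            field_simp; ring
          have h3 : 0 ≤ B⁻¹ * A⁻¹ * ((A * B * d - 1/2) ^ 2 + 3/4) := by positivity
          linarith
      _ = (∫⁻ t in Ioc ε z, ENNReal.ofReal (z ^ (-s) * t ^ (2 * s - 1)))
            + ENNReal.ofReal (z ^ s) * ∫⁻ t in Ioc ε z, ENNReal.ofReal ((deriv (V x) t) ^ 2 * t ^ (1 - 2 * s)) := by
          rw [lintegral_add_left (by fun_prop), lintegral_const_mul' _ _ ENNReal.ofReal_ne_top]
      _ ≤ ENNReal.ofReal (z ^ s * (1 / (2 * s))) + ENNReal.ofReal (z ^ s) * eV s V x := by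
          gcongr ?_ + _ * ?_
          · rw [← ofReal_integral_eq_lintegral_ofReal hi.1]
            · apply ENNReal.ofReal_le_ofReal
              rw [← intervalIntegral.integral_of_le hεz.le, intervalIntegral.integral_const_mul,
                integral_rpow (Or.inl (by linarith)), sub_add_cancel]
              have h4 : z ^ (2 * s) = z ^ s * z ^ s := by rw [← Real.rpow_add hz]; congr 1; ring
              have h5 : 0 ≤ ε ^ (2 * s) := by positivity
              have p2 : 0 < z ^ s := by positivity
              rw [Real.rpow_neg hz.le]
              calc (z ^ s)⁻¹ * ((z ^ (2 * s) - ε ^ (2 * s)) / (2 * s)) ≤ (z ^ s)⁻¹ * (z ^ (2 * s) / (2 * s)) := by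
                    gcongr; linarith
                _ = _ := by rw [h4]; field_simp
            · filter_upwards [ae_restrict_mem measurableSet_Ioc] with t ht
              have : 0 < t := hε.trans ht.1
              show 0 ≤ z ^ (-s) * t ^ (2 * s - 1)
              positivity
          · exact lintegral_mono_set fun t ht => hε.trans ht.1
      _ = _ := by
          rw [ENNReal.ofReal_mul (by positivity), mul_add]; rfl
  have h2 : Tendsto (fun ε => ENNReal.ofReal |V x z - V x ε|) (𝓝[>] 0) (𝓝 (ENNReal.ofReal |V x z|)) := by
    have := (V_tendsto0 hV hV0 x).const_sub (V x z)
    rw [sub_zero] at this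
    exact (ENNReal.continuous_ofReal.tendsto _).comp this.abs
  refine le_of_tendsto h2 ?_
  filter_upwards [Ioo_mem_nhdsGT hz] with ε hε using h1 ε hε.1 hε.2

lemma V_near {n : ℕ} {V : En n → ℝ → ℝ} (hV : Sm (Ici 0) V) (hV0 : ∀ x, V x 0 = 0)
    {K : Set (En n)} (hK : IsCompact K) :
    ∃ C : ℝ, 0 ≤ C ∧ ∀ x ∈ K, ∀ z : ℝ, 0 < z → z ≤ 1 → |deriv (V x) z| ≤ C ∧ |V x z| ≤ C * z := by
  have hV' := hV.mono Ioi_subset_Ici_self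
  set f : En n × ℝ → ℝ := fun p => V p.1 p.2
  set S : Set (En n × ℝ) := univ ×ˢ Ici 0
  have hu : UniqueDiffOn ℝ S := uniqueDiffOn_univ.prod (uniqueDiffOn_Ici 0)
  have hc : ContinuousOn (fun p => fderivWithin ℝ f S p ((0 : En n), (1:ℝ))) S :=
    (ContDiffOn.continuousOn_fderivWithin hV hu (by simp)).clm_apply continuousOn_const
  obtain ⟨C, hC⟩ := (hK.prod (isCompact_Icc (a := (0:ℝ)) (b := 1))).exists_bound_of_continuousOn
    (hc.mono (prod_mono (subset_univ _) Icc_subset_Ici_self))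
  have hd : ∀ x ∈ K, ∀ z : ℝ, 0 < z → z ≤ 1 → |deriv (V x) z| ≤ |C| := by
    intro x hx z hz hz1
    refine le_trans ?_ (le_abs_self C)
    have hS : S ∈ 𝓝 (x, z) := prod_mem_nhds univ_mem (Ici_mem_nhds hz)
    have h := hC (x, z) ⟨hx, hz.le, hz1⟩
    rw [fderivWithin_of_mem_nhds hS] at h
    have hf : HasFDerivAt f (fderiv ℝ f (x, z)) (x, z) :=
      ((hV'.contDiffAt isOpen_Ioi x hz).differentiableAt (by simp)).hasFDerivAt
    have h2 : HasDerivAt (fun t : ℝ => (x, t)) ((0 : En n), (1:ℝ)) z :=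
      (hasDerivAt_const _ _).prodMk (hasDerivAt_id _)
    have h3 : deriv (V x) z = _ := (hf.comp_hasDerivAt z h2).deriv
    rw [h3]; exact h
  refine ⟨|C|, abs_nonneg _, fun x hx z hz hz1 => ⟨hd x hx z hz hz1, ?_⟩⟩
  have h1 : ∀ ε, 0 < ε → ε < z → |V x z - V x ε| ≤ |C| * z := by
    intro ε hε hεz
    have := Convex.norm_image_sub_le_of_norm_hasDerivWithin_le (f := V x) (f' := deriv (V x)) (s := Icc ε z)
      (x := ε) (y := z) (C := |C|)
      (fun t ht => (hV'.hasDerivAt isOpen_Ioi x (lt_of_lt_of_le hε ht.1)).hasDerivWithinAt)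
      (fun t ht => hd x hx t (lt_of_lt_of_le hε ht.1) (ht.2.trans hz1)) (convex_Icc _ _)
      (left_mem_Icc.2 hεz.le) (right_mem_Icc.2 hεz.le)
    refine this.trans (mul_le_mul_of_nonneg_left ?_ (abs_nonneg _))
    rw [Real.norm_eq_abs, abs_of_pos (by linarith)]; linarith
  have h2 : Tendsto (fun ε => |V x z - V x ε|) (𝓝[>] 0) (𝓝 |V x z|) := by
    have := (V_tendsto0 hV hV0 x).const_sub (V x z)
    rw [sub_zero] at this
    exact this.abs
  refine le_of_tendsto h2 ?_
  filter_upwards [Ioo_mem_nhdsGT hz] with ε hε using h1 ε hε.1 hε.2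


lemma pd_scale {n : ℕ} (i : Fin n) {f : En n → ℝ} (hf : Differentiable ℝ f) (c : ℝ) (x : En n) :
    pd i (fun y => f (c • y)) x = c * pd i f (c • x) := by
  unfold pd
  have h1 : HasFDerivAt (fun y : En n => c • y) (c • ContinuousLinearMap.id ℝ (En n)) x :=
    (hasFDerivAt_id x).const_smul c
  have h2 := (HasFDerivAt.comp x (f := fun y : En n => c • y) (hf (c • x)).hasFDerivAt h1).fderiv
  have h3 : (fun y => f (c • y)) = f ∘ fun y : En n => c • y := rfl
  rw [h3, h2]
  simp

lemma lapX_scale {n : ℕ} {f : En n → ℝ} (hf : ContDiff ℝ (⊤ : ℕ∞) f) (c : ℝ) (x : En n) :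
    lapX (fun y => f (c • y)) x = c ^ 2 * lapX f (c • x) := by
  unfold lapX
  rw [Finset.mul_sum]
  apply Finset.sum_congr rfl
  intro i _
  have h1 : pd i (fun y => f (c • y)) = fun y => c * pd i f (c • y) := by
    ext y; exact pd_scale i (hf.differentiable (by simp)) c y
  have hp := (pd_contDiff i hf).differentiable (by simp)
  rw [h1, pd_const_mul i c (g := fun y => pd i f (c • y)) (hp.comp (by fun_prop) x), pd_scale i hp]
  ring

/-- Green's identity with the cutoff `f(x/j)`, with all errors estimated. -/
lemma cutgreen {n : ℕ} {f : En n → ℝ} (hf : ContDiff ℝ (⊤ : ℕ∞) f) (hfc : HasCompactSupport f)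
    (hf1 : ∀ x, |f x| ≤ 1) :
    ∃ C : ℝ, 0 ≤ C ∧ ∀ (s : ℝ) (F V ψ : En n → ℝ → ℝ) (I : Set ℝ) (w : En n → ℝ≥0∞) (α β j : ℝ)
      (N : ℝ≥0) (E : ℝ → ℝ≥0∞), s < 1 → IsOpen I → I ⊆ Ioi 0 → Sm (Ioi 0) V → Sm (Ioi 0) F → Sm I ψ →
      (∀ x, ∀ z, 0 < z → LsOp s V x z = F x z) → AEMeasurable w →
      (∀ x, ∀ z, 0 < z → ENNReal.ofReal |V x z| ≤ ENNReal.ofReal (z ^ s) * w x) →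
      α ≤ β → Icc α β ⊆ I → 1 ≤ j →
      (∀ z ∈ Ioc α β, ∫⁻ x, w x * ENNReal.ofReal |LsOp s ψ x z| ≤ E z) →
      (∀ z ∈ Ioc α β, ∫⁻ x, w x * ENNReal.ofReal |ψ x z| ≤ N) →
      (∀ z ∈ Ioc α β, ∀ i, ∫⁻ x, w x * ENNReal.ofReal |pd i (fun y => ψ y z) x| ≤ N) →
      ENNReal.ofReal |(∫ x, f (j⁻¹ • x) * (β ^ (1 - 2 * s) * (deriv (V x) β * ψ x β - V x β * deriv (ψ x) β)))
      - (∫ x, f (j⁻¹ • x) * (α ^ (1 - 2 * s) * (deriv (V x) α * ψ x α - V x α * deriv (ψ x) α)))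
      - ∫ z in Ioc α β, ∫ x, f (j⁻¹ • x) * F x z * ψ x z|
      ≤ (∫⁻ z in Ioc α β, ENNReal.ofReal (z ^ s) * E z) + ENNReal.ofReal (C * N * β ^ (2 - s) / j) := by
  -- bounds on derivatives of f
  have hpb : ∃ C1 : ℝ, 0 ≤ C1 ∧ ∀ i x, |pd i f x| ≤ C1 := by
    have : ∀ i, ∃ C1 : ℝ, ∀ x, |pd i f x| ≤ C1 := fun i =>
      (pd_hcs i hfc).exists_bound_of_continuous (pd_contDiff i hf).continuous
    choose c hc using this
    refine ⟨∑ i, |c i|, Finset.sum_nonneg fun i _ => abs_nonneg _, fun i x => ?_⟩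
    exact (hc i x).trans ((le_abs_self _).trans (Finset.single_le_sum (f := fun i => |c i|) (fun i _ => abs_nonneg _) (Finset.mem_univ i)))
  obtain ⟨C1, hC10, hC1⟩ := hpb
  obtain ⟨C2, hC2⟩ := (lapX_hcs hfc).exists_bound_of_continuous (lapX_contDiff hf).continuous
  have hC2 : ∀ x, |lapX f x| ≤ C2 := hC2
  have hC20 : 0 ≤ C2 := (abs_nonneg _).trans (hC2 0)
  refine ⟨2 * C1 * n + C2, by positivity, ?_⟩
  intro s F V ψ I w α β j N E hs1 hI hI0 hV hF hψ heq hwm hw hαβ hab hj h1 h2 h3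
  have hj0 : 0 < j := by linarith
  have hα : 0 < α := hI0 (hab ⟨le_rfl, hαβ⟩)
  have hβ : 0 < β := lt_of_lt_of_le hα hαβ
  set η : En n → ℝ := fun x => f (j⁻¹ • x) with hη
  have hηs : ContDiff ℝ (⊤ : ℕ∞) η := hf.comp (by fun_prop)
  have hηc : HasCompactSupport η := by
    have := hfc.comp_homeomorph (Homeomorph.smulOfNeZero (α := En n) (j⁻¹) (by positivity))
    exact this
  have hη1 : ∀ x, |η x| ≤ 1 := fun x => hf1 _
  have hηp : ∀ i x, |pd i η x| ≤ C1 / j := by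
    intro i x
    rw [hη, pd_scale i (hf.differentiable (by simp)), abs_mul, abs_of_pos (by positivity), div_eq_inv_mul]
    exact mul_le_mul_of_nonneg_left (hC1 _ _) (by positivity)
  have hηl : ∀ x, |lapX η x| ≤ C2 / j := by
    intro x
    rw [hη, lapX_scale hf, abs_mul, abs_of_pos (by positivity), div_eq_inv_mul]
    refine mul_le_mul ?_ (hC2 _) (abs_nonneg _) (by positivity)
    have : j⁻¹ ≤ 1 := inv_le_one_of_one_le₀ hj
    nlinarith [inv_pos.2 hj0]
  have hVI := hV.mono hI0
  have hg := green hI hI0 hVI hψ heq hηs hηc hαβ hab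
  rw [hg]
  set A1 : En n → ℝ → ℝ := fun x z => η x * F x z * ψ x z with hA1
  set A2 : En n → ℝ → ℝ := fun x z => η x * V x z * LsOp s ψ x z
        + z ^ (1 - 2 * s) * V x z * (2 * (∑ i, pd i η x * pd i (fun y => ψ y z) x) + ψ x z * lapX η x) with hA2
  have hz0 : ∀ x, x ∉ tsupport η → η x = 0 ∧ lapX η x = 0 ∧ ∀ i, pd i η x = 0 := fun x hx =>
    ⟨image_eq_zero_of_notMem_tsupport hx, lapX_zero_off hx, fun i =>
      image_eq_zero_of_notMem_tsupport fun h => hx (tsupport_fderiv_apply_subset ℝ _ h)⟩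
  have hA1s : Sm I A1 := ((Sm.of_x hηs).mul (hF.mono hI0)).mul hψ
  have hgs : Sm I (fun x z => ∑ i, pd i η x * pd i (fun y => ψ y z) x) :=
    ContDiffOn.sum fun i _ => Sm.mul (Sm.of_x (pd_contDiff i hηs)) (hψ.pd hI i)
  have h2s : Sm I (fun (_ : En n) (_ : ℝ) => (2:ℝ)) := contDiffOn_const
  have hA2s : Sm I A2 := (((Sm.of_x hηs).mul hVI).mul (hψ.Ls hI hI0 s)).add
    (((Sm.rp hI0 _).mul hVI).mul ((h2s.mul hgs).add (hψ.mul (Sm.of_x (lapX_contDiff hηs)))))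
  have i1 := slab_integrable hA1s.contOn hab hηc.isCompact
    (fun x z hx => by simp only [hA1]; rw [(hz0 x hx).1]; ring)
  have i2 := slab_integrable hA2s.contOn hab hηc.isCompact
    (fun x z hx => by
      simp only [hA2]; rw [(hz0 x hx).1, (hz0 x hx).2.1]; simp only [(hz0 x hx).2.2]; simp)
  have e0 : ∀ z ∈ Ioc α β, ∫ x, (η x * F x z * ψ x z - η x * V x z * LsOp s ψ x z
        - z ^ (1 - 2 * s) * V x z * (2 * (∑ i, pd i η x * pd i (fun y => ψ y z) x) + ψ x z * lapX η x))
        = (∫ x, A1 x z) - ∫ x, A2 x z := by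
    intro z hz
    have hzI := hab (Ioc_subset_Icc_self hz)
    rw [← integral_sub]
    · congr 1; ext x; simp only [hA1, hA2]; ring
    · apply ((hA1s.contx hI hzI).continuous).integrable_of_hasCompactSupport
      exact HasCompactSupport.intro hηc fun x hx => by simp only [hA1]; rw [(hz0 x hx).1]; ring
    · apply ((hA2s.contx hI hzI).continuous).integrable_of_hasCompactSupport
      exact HasCompactSupport.intro hηc fun x hx => by
        simp only [hA2]; rw [(hz0 x hx).1, (hz0 x hx).2.1]; simp only [(hz0 x hx).2.2]; simp
  rw [setIntegral_congr_fun measurableSet_Ioc e0, integral_sub i1.integral_prod_right i2.integral_prod_right]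
  rw [show ∀ a b : ℝ, a - b - a = -b by intros; ring, abs_neg]
  have key : ∀ z ∈ Ioc α β, ∫⁻ x, ENNReal.ofReal |A2 x z| ≤
      ENNReal.ofReal (z ^ s) * E z + ENNReal.ofReal (β ^ (1 - s) * ((2 * C1 * n + C2) * N / j)) := by
    intro z hz
    have hz0' : 0 < z := hα.trans hz.1
    have hzI := hab (Ioc_subset_Icc_self hz)
    have m1 : Continuous (fun x => LsOp s ψ x z) := ((hψ.Ls hI hI0 s).contx hI hzI).continuous
    have m2 : Continuous (fun x => ψ x z) := (hψ.contx hI hzI).continuous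
    have m3 : ∀ i, Continuous (fun x => pd i (fun y => ψ y z) x) := fun i => ((hψ.pd hI i).contx hI hzI).continuous
    have pt : ∀ x, ENNReal.ofReal |A2 x z| ≤ ENNReal.ofReal (z ^ s) * (w x * ENNReal.ofReal |LsOp s ψ x z|)
        + ENNReal.ofReal (β ^ (1 - s)) * ((∑ i, ENNReal.ofReal (2 * C1 / j) * (w x * ENNReal.ofReal |pd i (fun y => ψ y z) x|))
          + ENNReal.ofReal (C2 / j) * (w x * ENNReal.ofReal |ψ x z|)) := by
      intro x
      have hre : |A2 x z| ≤ |V x z| * |LsOp s ψ x z| + z ^ (1 - 2 * s) * (|V x z| *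
          ((∑ i, (2 * C1 / j) * |pd i (fun y => ψ y z) x|) + (C2 / j) * |ψ x z|)) := by
        simp only [hA2]
        refine (abs_add_le _ _).trans (add_le_add ?_ ?_)
        · rw [abs_mul, abs_mul]
          refine mul_le_mul_of_nonneg_right ?_ (abs_nonneg _)
          exact mul_le_of_le_one_left (abs_nonneg _) (hη1 x)
        · rw [abs_mul, abs_mul, abs_of_pos (a := z ^ (1 - 2 * s)) (by positivity), mul_assoc]
          refine mul_le_mul_of_nonneg_left (mul_le_mul_of_nonneg_left ?_ (abs_nonneg _)) (by positivity)
          refine (abs_add_le _ _).trans (add_le_add ?_ ?_)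
          · rw [abs_mul, abs_of_pos (by norm_num : (0:ℝ) < 2)]
            refine (mul_le_mul_of_nonneg_left (Finset.abs_sum_le_sum_abs _ _) (by norm_num)).trans ?_
            rw [Finset.mul_sum]
            apply Finset.sum_le_sum
            intro i _
            rw [abs_mul]
            calc 2 * (|pd i η x| * |pd i (fun y => ψ y z) x|) ≤ 2 * (C1 / j * |pd i (fun y => ψ y z) x|) := by
                  gcongr; exact hηp i x
              _ = _ := by ring
          · rw [abs_mul, mul_comm]
            exact mul_le_mul_of_nonneg_right (hηl x) (abs_nonneg _)
      refine (ENNReal.ofReal_le_ofReal hre).trans ?_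
      have hsn : 0 ≤ ∑ i, (2 * C1 / j) * |pd i (fun y => ψ y z) x| := Finset.sum_nonneg fun i _ => by positivity
      rw [ENNReal.ofReal_add (by positivity) (by positivity), ENNReal.ofReal_mul (abs_nonneg _)]
      refine add_le_add ?_ ?_
      · rw [← mul_assoc]
        exact mul_le_mul' (hw x z hz0') le_rfl
      · rw [← mul_assoc, ENNReal.ofReal_mul (by positivity), ENNReal.ofReal_mul (by positivity),
          ENNReal.ofReal_add hsn (by positivity), ENNReal.ofReal_sum_of_nonneg (fun i _ => by positivity)]
        simp_rw [ENNReal.ofReal_mul (show 0 ≤ 2 * C1 / j by positivity), ENNReal.ofReal_mul (show 0 ≤ C2 / j by positivity)]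
        have e1 : (∑ i, ENNReal.ofReal (2 * C1 / j) * (w x * ENNReal.ofReal |pd i (fun y => ψ y z) x|))
          + ENNReal.ofReal (C2 / j) * (w x * ENNReal.ofReal |ψ x z|)
          = w x * ((∑ i, ENNReal.ofReal (2 * C1 / j) * ENNReal.ofReal |pd i (fun y => ψ y z) x|)
          + ENNReal.ofReal (C2 / j) * ENNReal.ofReal |ψ x z|) := by
          rw [mul_add, Finset.mul_sum]
          congr 1
          · apply Finset.sum_congr rfl; intro i _; ring
          · ring
        rw [e1, ← mul_assoc]
        refine mul_le_mul' ?_ le_rfl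
        calc ENNReal.ofReal (z ^ (1 - 2 * s)) * ENNReal.ofReal |V x z|
            ≤ ENNReal.ofReal (z ^ (1 - 2 * s)) * (ENNReal.ofReal (z ^ s) * w x) := by gcongr; exact hw x z hz0'
          _ = ENNReal.ofReal (z ^ (1 - s)) * w x := by
              rw [← mul_assoc, ← ENNReal.ofReal_mul (by positivity), ← Real.rpow_add hz0']
              congr 3; ring
          _ ≤ _ := by
              gcongr
              exact hz.2
    refine (lintegral_mono pt).trans ?_
    have ml : ∀ {u : En n → ℝ}, Continuous u → AEMeasurable (fun x => w x * ENNReal.ofReal |u x|) := fun hu =>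
      hwm.mul hu.abs.measurable.ennreal_ofReal.aemeasurable
    rw [lintegral_add_left' ((ml m1).const_mul _), lintegral_const_mul' _ _ ENNReal.ofReal_ne_top,
      lintegral_const_mul' _ _ ENNReal.ofReal_ne_top,
      lintegral_add_right' _ ((ml m2).const_mul _), lintegral_finsetSum' _ (fun i _ => (ml (m3 i)).const_mul _),
      lintegral_const_mul' _ _ ENNReal.ofReal_ne_top]
    simp_rw [lintegral_const_mul' _ _ ENNReal.ofReal_ne_top]
    refine add_le_add (mul_le_mul' le_rfl (h1 z hz)) ?_
    rw [ENNReal.ofReal_mul (by positivity)]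
    refine mul_le_mul' le_rfl ?_
    calc _ ≤ (∑ i : Fin n, ENNReal.ofReal (2 * C1 / j) * N) + ENNReal.ofReal (C2 / j) * N := by
          refine add_le_add (Finset.sum_le_sum fun i _ => mul_le_mul' le_rfl (h3 z hz i)) (mul_le_mul' le_rfl (h2 z hz))
      _ = _ := by
          rw [Finset.sum_const, Finset.card_univ, Fintype.card_fin, nsmul_eq_mul, ← ENNReal.ofReal_coe_nnreal,
            ← ENNReal.ofReal_mul (by positivity), ← ENNReal.ofReal_mul (by positivity), ← ENNReal.ofReal_natCast,
            ← ENNReal.ofReal_mul (by positivity), ← ENNReal.ofReal_add (by positivity) (by positivity)]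
          congr 1; ring
  calc ENNReal.ofReal |∫ z in Ioc α β, ∫ x, A2 x z|
      ≤ ∫⁻ z in Ioc α β, ENNReal.ofReal |∫ x, A2 x z| := by
        have := enorm_integral_le_lintegral_enorm (μ := volume.restrict (Ioc α β)) (fun z => ∫ x, A2 x z)
        simpa only [Real.enorm_eq_ofReal_abs] using this
    _ ≤ ∫⁻ z in Ioc α β, ∫⁻ x, ENNReal.ofReal |A2 x z| := by
        refine lintegral_mono fun z => ?_
        have := enorm_integral_le_lintegral_enorm (μ := (volume : Measure (En n))) (fun x => A2 x z)
        simpa only [Real.enorm_eq_ofReal_abs] using this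
    _ ≤ ∫⁻ z in Ioc α β, (ENNReal.ofReal (z ^ s) * E z + ENNReal.ofReal (β ^ (1 - s) * ((2 * C1 * n + C2) * N / j))) :=
        setLIntegral_mono' measurableSet_Ioc key
    _ ≤ _ := by
        rw [lintegral_add_right _ measurable_const]
        refine add_le_add le_rfl ?_
        rw [setLIntegral_const, Real.volume_Ioc, ← ENNReal.ofReal_mul (by positivity)]
        apply ENNReal.ofReal_le_ofReal
        have e : β ^ (2 - s) = β ^ (1 - s) * β := by
          rw [← Real.rpow_add_one hβ.ne']; congr 1; ring
        rw [e]
        calc _ ≤ β ^ (1 - s) * ((2 * C1 * n + C2) * N / j) * β := by gcongr; linarith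
          _ = _ := by ring


/-- smooth cutoff: one on `(-∞,1]`, zero on `[2,∞)` -/
def th (x : ℝ) : ℝ := Real.smoothTransition (2 - x)

lemma th_contDiff : ContDiff ℝ (⊤ : ℕ∞) th :=
  Real.smoothTransition.contDiff.comp (by fun_prop)

lemma th_one {x : ℝ} (hx : x ≤ 1) : th x = 1 := Real.smoothTransition.one_of_one_le (by linarith)

lemma th_zero {x : ℝ} (hx : 2 ≤ x) : th x = 0 := Real.smoothTransition.zero_of_nonpos (by linarith)

lemma th_abs (x : ℝ) : |th x| ≤ 1 := by
  rw [th, abs_of_nonneg (Real.smoothTransition.nonneg _)]; exact Real.smoothTransition.le_one _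

/-- scaled and reflected cutoff `th (e (z - R) / L)` -/
def tau (e R L z : ℝ) : ℝ := th (e * (z - R) / L)

lemma tau_contDiff (e R L : ℝ) : ContDiff ℝ (⊤ : ℕ∞) (tau e R L) :=
  th_contDiff.comp (by fun_prop)

lemma deriv_contDiff {f : ℝ → ℝ} (hf : ContDiff ℝ (⊤ : ℕ∞) f) : ContDiff ℝ (⊤ : ℕ∞) (deriv f) :=
  (contDiff_infty_iff_deriv.1 hf).2

lemma deriv_tau (e R L z : ℝ) : deriv (tau e R L) z = e / L * deriv th (e * (z - R) / L) := by
  have h1 : HasDerivAt (fun z => e * (z - R) / L) (e / L) z := by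
    have := (((hasDerivAt_id z).sub_const R).const_mul e).div_const L
    simpa using this
  have h2 := (th_contDiff.differentiable (by simp) (e * (z - R) / L)).hasDerivAt.comp z h1
  have h3 : deriv (tau e R L) z = _ := h2.deriv
  rw [h3]; ring

lemma deriv2_tau (e R L z : ℝ) : deriv (deriv (tau e R L)) z = (e / L) ^ 2 * deriv (deriv th) (e * (z - R) / L) := by
  have h0 : deriv (tau e R L) = fun z => e / L * deriv th (e * (z - R) / L) := funext (deriv_tau e R L)
  have h1 : HasDerivAt (fun z => e * (z - R) / L) (e / L) z := by
    have := (((hasDerivAt_id z).sub_const R).const_mul e).div_const L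
    simpa using this
  have h2 := ((deriv_contDiff th_contDiff).differentiable (by simp) (e * (z - R) / L)).hasDerivAt.comp z h1
  have h3 := (h2.const_mul (e / L)).deriv
  rw [h0]
  have h4 : deriv (fun z => e / L * deriv th (e * (z - R) / L)) z = _ := h3
  rw [h4]; ring

lemma dth_zero {x : ℝ} (hx : x < 1) : deriv th x = 0 ∧ deriv (deriv th) x = 0 := by
  have h : th =ᶠ[𝓝 x] fun _ => 1 := by
    filter_upwards [gt_mem_nhds hx] with y hy using th_one hy.le
  have h1 : deriv th =ᶠ[𝓝 x] fun _ => 0 := by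
    have := h.deriv
    filter_upwards [this] with y hy
    rw [hy]; simp
  exact ⟨h1.self_of_nhds, by rw [h1.deriv_eq]; simp⟩

lemma dth_zero' {x : ℝ} (hx : 2 < x) : deriv th x = 0 ∧ deriv (deriv th) x = 0 := by
  have h : th =ᶠ[𝓝 x] fun _ => 0 := by
    filter_upwards [lt_mem_nhds hx] with y hy using th_zero hy.le
  have h1 : deriv th =ᶠ[𝓝 x] fun _ => 0 := by
    have := h.deriv
    filter_upwards [this] with y hy
    rw [hy]; simp
  exact ⟨h1.self_of_nhds, by rw [h1.deriv_eq]; simp⟩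

lemma dth_bound : ∃ C : ℝ, 0 ≤ C ∧ ∀ x, |deriv th x| ≤ C ∧ |deriv (deriv th) x| ≤ C := by
  have c1 := (deriv_contDiff th_contDiff)
  have c2 := (deriv_contDiff c1)
  obtain ⟨A, hA⟩ := (isCompact_Icc (a := (1:ℝ)) (b := 2)).exists_bound_of_continuousOn c1.continuous.continuousOn
  obtain ⟨B, hB⟩ := (isCompact_Icc (a := (1:ℝ)) (b := 2)).exists_bound_of_continuousOn c2.continuous.continuousOn
  refine ⟨|A| + |B|, by positivity, fun x => ?_⟩
  by_cases h1 : x < 1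
  · rw [(dth_zero h1).1, (dth_zero h1).2, abs_zero]; constructor <;> positivity
  by_cases h2 : 2 < x
  · rw [(dth_zero' h2).1, (dth_zero' h2).2, abs_zero]; constructor <;> positivity
  push Not at h1 h2
  have hA' := hA x ⟨h1, h2⟩
  have hB' := hB x ⟨h1, h2⟩
  rw [Real.norm_eq_abs] at hA' hB'
  constructor
  · linarith [le_abs_self A, abs_nonneg B]
  · linarith [le_abs_self B, abs_nonneg A]

lemma deriv_cut {n : ℕ} {I : Set ℝ} (hI : IsOpen I) {Ψ : En n → ℝ → ℝ} (hΨ : Sm I Ψ)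
    {τ : ℝ → ℝ} (hτ : ContDiff ℝ (⊤ : ℕ∞) τ) (x : En n) {z : ℝ} (hz : z ∈ I) :
    deriv (fun t => τ t * Ψ x t) z = deriv τ z * Ψ x z + τ z * deriv (Ψ x) z :=
  (((hτ.differentiable (by simp)) z).hasDerivAt.mul (hΨ.hasDerivAt hI x hz)).deriv

lemma Ls_cut {n : ℕ} {s : ℝ} {I : Set ℝ} (hI : IsOpen I) (hI0 : I ⊆ Ioi 0) {Ψ : En n → ℝ → ℝ} (hΨ : Sm I Ψ)
    {τ : ℝ → ℝ} (hτ : ContDiff ℝ (⊤ : ℕ∞) τ) (x : En n) {z : ℝ} (hz : z ∈ I) :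
    LsOp s (fun x z => τ z * Ψ x z) x z = τ z * LsOp s Ψ x z
      + z ^ (1 - 2 * s) * (2 * deriv τ z * deriv (Ψ x) z + deriv (deriv τ) z * Ψ x z)
      + (1 - 2 * s) * z ^ (1 - 2 * s - 1) * deriv τ z * Ψ x z := by
  have hz0 : 0 < z := hI0 hz
  unfold LsOp
  have hx := hΨ.contx hI hz
  have e1 : lapX (fun y => τ z * Ψ y z) x = τ z * lapX (fun y => Ψ y z) x := by
    rw [lapX_mul contDiff_const hx]
    have p0 : ∀ (c : ℝ) (i : Fin n), pd i (fun _ : En n => c) = fun _ => 0 := by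
      intro c i; ext y; simp [pd]
    have l0 : lapX (fun _ : En n => τ z) x = 0 := by simp [lapX, p0]
    rw [l0]; simp [p0]
  have e2 : (fun t => t ^ (1 - 2 * s) * deriv (fun r => τ r * Ψ x r) t) =ᶠ[𝓝 z]
      fun t => τ t * (t ^ (1 - 2 * s) * deriv (Ψ x) t) + (t ^ (1 - 2 * s) * deriv τ t) * Ψ x t := by
    filter_upwards [hI.mem_nhds hz] with t ht
    rw [deriv_cut hI hΨ hτ x ht]; ring
  have hrpΨ : Sm I (fun x t => t ^ (1 - 2 * s) * deriv (Ψ x) t) := (Sm.rp hI0 _).mul (hΨ.dz hI)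
  have d1 := ((hτ.differentiable (by simp)) z).hasDerivAt.mul (hrpΨ.hasDerivAt hI x hz)
  have d2 := (((Real.hasDerivAt_rpow_const (p := 1 - 2 * s) (Or.inl hz0.ne')).mul
    (((deriv_contDiff hτ).differentiable (by simp)) z).hasDerivAt)).mul (hΨ.hasDerivAt hI x hz)
  have d3 := (d1.add d2).deriv
  have e3 : deriv (fun t => τ t * (t ^ (1 - 2 * s) * deriv (Ψ x) t) + (t ^ (1 - 2 * s) * deriv τ t) * Ψ x t) z = _ := d3
  rw [e2.deriv_eq, e3, e1]
  simp only [Pi.mul_apply]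
  ring

lemma lin2 {n : ℕ} {w : En n → ℝ≥0∞} (hwm : AEMeasurable w) {L u v : En n → ℝ} {c1 c2 : ℝ} (h1 : 0 ≤ c1) (h2 : 0 ≤ c2)
    (hu : Continuous u) (h : ∀ x, |L x| ≤ c1 * |u x| + c2 * |v x|) :
    ∫⁻ x, w x * ENNReal.ofReal |L x| ≤ ENNReal.ofReal c1 * (∫⁻ x, w x * ENNReal.ofReal |u x|)
      + ENNReal.ofReal c2 * ∫⁻ x, w x * ENNReal.ofReal |v x| := by
  have hm : AEMeasurable (fun x => ENNReal.ofReal c1 * (w x * ENNReal.ofReal |u x|)) :=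
    (hwm.mul hu.abs.measurable.ennreal_ofReal.aemeasurable).const_mul _
  rw [← lintegral_const_mul' _ _ ENNReal.ofReal_ne_top, ← lintegral_const_mul' _ _ ENNReal.ofReal_ne_top,
    ← lintegral_add_left' hm]
  refine lintegral_mono fun x => ?_
  calc _ ≤ w x * (ENNReal.ofReal (c1 * |u x| + c2 * |v x|)) := mul_le_mul' le_rfl (ENNReal.ofReal_le_ofReal (h x))
    _ = _ := by
      rw [ENNReal.ofReal_add (by positivity) (by positivity), ENNReal.ofReal_mul h1, ENNReal.ofReal_mul h2]
      ring

lemma WB_all {n : ℕ} {w : En n → ℝ≥0∞} (hw : WB w) {φ : En n → ℝ}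
    (hφ : ContDiff ℝ (⊤ : ℕ∞) φ) (hφc : HasCompactSupport φ) :
    ∃ N : ℝ≥0, ∀ σ z : ℝ, 0 < σ → 0 < z →
      ∫⁻ x, w x * ENNReal.ofReal |Pconv n σ z φ x| ≤ N ∧
      ∀ i, ∫⁻ x, w x * ENNReal.ofReal |pd i (fun y => Pconv n σ z φ y) x| ≤ N := by
  obtain ⟨B, hB⟩ := hw φ hφ.continuous hφc
  have := fun i => hw (pd i φ) (pd_contDiff i hφ).continuous (pd_hcs i hφc)
  choose B' hB' using this
  refine ⟨B + ∑ i, B' i, fun σ z hσ hz => ⟨?_, fun i => ?_⟩⟩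
  · calc _ ≤ ∫⁻ x, w x * ENNReal.ofReal (Pconv n σ z (fun y => |φ y|) x) :=
          lintegral_mono fun x => mul_le_mul' le_rfl (ENNReal.ofReal_le_ofReal (Pconv_abs_le n hσ hz x))
      _ ≤ B := hB σ z hσ hz
      _ ≤ _ := by exact_mod_cast le_self_add
  · calc _ ≤ ∫⁻ x, w x * ENNReal.ofReal (Pconv n σ z (fun y => |pd i φ y|) x) := by
          refine lintegral_mono fun x => mul_le_mul' le_rfl (ENNReal.ofReal_le_ofReal ?_)
          rw [pd_Pconv i σ hz hφ hφc]
          exact Pconv_abs_le n hσ hz x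
      _ ≤ B' i := hB' i σ z hσ hz
      _ ≤ _ := by
          have h1 : B' i ≤ ∑ i, B' i := Finset.single_le_sum (f := B') (fun _ _ => zero_le) (Finset.mem_univ i)
          exact_mod_cast h1.trans le_add_self

/-- a smooth bump -/
lemma bump_exists (n : ℕ) : ∃ f : En n → ℝ, ContDiff ℝ (⊤ : ℕ∞) f ∧ HasCompactSupport f ∧ (∀ x, |f x| ≤ 1) ∧
    ∀ x, ‖x‖ ≤ 1 → f x = 1 := by
  let b : ContDiffBump (0 : En n) := ⟨1, 2, by norm_num, by norm_num⟩
  refine ⟨b, b.contDiff, b.hasCompactSupport, fun x => ?_, fun x hx => ?_⟩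
  · rw [abs_of_nonneg b.nonneg]; exact b.le_one
  · exact b.one_of_mem_closedBall (by simpa [b] using hx)


/-- bundle of the standing assumptions -/
structure Hyp (n : ℕ) (s : ℝ) (F V : En n → ℝ → ℝ) (w : En n → ℝ≥0∞) : Prop where
  hn : 1 ≤ n
  hs0 : 0 < s
  hs1 : s < 1
  hV : Sm (Ici 0) V
  hF : Sm (Ioi 0) F
  hV0 : ∀ x, V x 0 = 0
  heq : ∀ x, ∀ z, 0 < z → LsOp s V x z = F x z
  hwm : AEMeasurable w
  hw : WB w
  hVw : ∀ x, ∀ z, 0 < z → ENNReal.ofReal |V x z| ≤ ENNReal.ofReal (z ^ s) * w x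
  hFi : Integrable (fun p : En n × ℝ => F p.1 p.2) ((volume : Measure (En n)).prod (volume.restrict (Ioi 0)))

lemma Hyp.hV' {n : ℕ} {s : ℝ} {F V : En n → ℝ → ℝ} {w : En n → ℝ≥0∞} (H : Hyp n s F V w) : Sm (Ioi 0) V :=
  H.hV.mono Ioi_subset_Ici_self

lemma Sm_Pconv {n : ℕ} (s : ℝ) {φ : En n → ℝ} (hφ : ContDiff ℝ (⊤ : ℕ∞) φ) (hφc : HasCompactSupport φ) :
    Sm (Ioi 0) (fun x z => Pconv n s z φ x) := Pconv_contDiffOn n s hφ hφc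

lemma Ls_Phi {n : ℕ} (s : ℝ) {φ : En n → ℝ} (hφ : ContDiff ℝ (⊤ : ℕ∞) φ) (hφc : HasCompactSupport φ)
    (x : En n) {z : ℝ} (hz : 0 < z) : LsOp s (fun x z => Pconv n s z φ x) x z = 0 := by
  unfold LsOp
  rw [lapX_Pconv s hz hφ hφc x, (Pconv_hasDerivAt2 s hz hφ hφc x).deriv]
  ring

lemma lint_const_bound {h : ℝ → ℝ≥0∞} {α β : ℝ} {c : ℝ≥0∞} (hc : ∀ z ∈ Ioc α β, h z ≤ c) :
    ∫⁻ z in Ioc α β, h z ≤ c * ENNReal.ofReal (β - α) := by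
  calc _ ≤ ∫⁻ z in Ioc α β, c := setLIntegral_mono measurable_const hc
    _ = _ := by rw [setLIntegral_const, Real.volume_Ioc]

lemma bnd_Ls1 {n : ℕ} {s : ℝ} {F V : En n → ℝ → ℝ} {w : En n → ℝ≥0∞} (H : Hyp n s F V w) {φ : En n → ℝ}
    (hφ : ContDiff ℝ (⊤ : ℕ∞) φ) (hφc : HasCompactSupport φ) :
    ∃ D : ℝ, 0 ≤ D ∧ ∀ k z : ℝ, 1 ≤ k → 0 < z →
      ∫⁻ x, w x * ENNReal.ofReal |LsOp s (fun x z => tau 1 0 k z * Pconv n s z φ x) x z|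
        ≤ ENNReal.ofReal (z ^ (1 - 2 * s) * (D / k ^ 2)) := by
  obtain ⟨T, hT, hth⟩ := dth_bound
  obtain ⟨N, hN⟩ := WB_all H.hw hφ hφc
  obtain ⟨B, hB⟩ := WB_deriv H.hw hφ hφc H.hs0
  refine ⟨T * (2 * B + N + |1 - 2 * s| * N), by positivity, fun k z hk hz => ?_⟩
  have hΦ := Sm_Pconv s hφ hφc
  have hk0 : 0 < k := by linarith
  have hL : ∀ x, LsOp s (fun x z => tau 1 0 k z * Pconv n s z φ x) x z =
      z ^ (1 - 2 * s) * (2 * (1 / k * deriv th (1 * (z - 0) / k)) * deriv (fun t => Pconv n s t φ x) z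
        + (1 / k) ^ 2 * deriv (deriv th) (1 * (z - 0) / k) * Pconv n s z φ x)
      + (1 - 2 * s) * z ^ (1 - 2 * s - 1) * (1 / k * deriv th (1 * (z - 0) / k)) * Pconv n s z φ x := by
    intro x
    rw [Ls_cut isOpen_Ioi subset_rfl hΦ (tau_contDiff 1 0 k) x hz, Ls_Phi s hφ hφc x hz, deriv_tau, deriv2_tau]
    ring
  rcases lt_or_ge (1 * (z - 0) / k) 1 with h | h
  · have h0 := dth_zero h
    have : ∀ x, LsOp s (fun x z => tau 1 0 k z * Pconv n s z φ x) x z = 0 := by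
      intro x; rw [hL, h0.1, h0.2]; ring
    simp [this]
  have hzk : k ≤ z := by
    rw [le_div_iff₀ hk0] at h; linarith
  obtain ⟨t1, t2⟩ := hth (1 * (z - 0) / k)
  set a := 1 - 2 * s
  set p := deriv th (1 * (z - 0) / k)
  set q := deriv (deriv th) (1 * (z - 0) / k)
  have hza : 0 < z ^ a := Real.rpow_pos_of_pos hz a
  have hza1 : z ^ (a - 1) ≤ z ^ a / k := by
    rw [Real.rpow_sub_one hz.ne']
    gcongr
  have hza0 : 0 < z ^ (a - 1) := Real.rpow_pos_of_pos hz _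
  have key := lin2 (L := fun x => LsOp s (fun x z => tau 1 0 k z * Pconv n s z φ x) x z)
    (u := fun x => deriv (fun t => Pconv n s t φ x) z) (v := fun x => Pconv n s z φ x)
    (c1 := z ^ a * (2 * T / k)) (c2 := z ^ a * (T / k ^ 2) + |a| * (z ^ a / k) * (T / k)) H.hwm (by positivity) (by positivity)
    ((hΦ.dz isOpen_Ioi).contx isOpen_Ioi hz).continuous (by
      intro x
      rw [hL x]
      set u := deriv (fun t => Pconv n s t φ x) z
      set v := Pconv n s z φ x
      calc _ = |z ^ a * (2 * (1 / k * p)) * u + (z ^ a * ((1 / k) ^ 2 * q)) * v + (a * z ^ (a - 1) * (1 / k * p)) * v| := by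
            congr 1; ring
        _ ≤ |z ^ a * (2 * (1 / k * p)) * u| + |(z ^ a * ((1 / k) ^ 2 * q)) * v| + |(a * z ^ (a - 1) * (1 / k * p)) * v| :=
            (abs_add_le _ _).trans (add_le_add (abs_add_le _ _) le_rfl)
        _ = z ^ a * (2 * (1 / k * |p|)) * |u| + (z ^ a * ((1 / k) ^ 2 * |q|)) * |v|
            + (|a| * z ^ (a - 1) * (1 / k * |p|)) * |v| := by
            simp only [abs_mul, abs_of_pos hza, abs_of_pos hza0, abs_of_pos (by positivity : (0:ℝ) < 1 / k),
              abs_of_pos (by positivity : (0:ℝ) < (1 / k) ^ 2), abs_two]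
        _ ≤ z ^ a * (2 * (1 / k * T)) * |u| + (z ^ a * ((1 / k) ^ 2 * T)) * |v|
            + (|a| * (z ^ a / k) * (1 / k * T)) * |v| := by gcongr
        _ = _ := by ring)
  refine key.trans ?_
  obtain ⟨hN1, -⟩ := hN s z H.hs0 hz
  calc _ ≤ ENNReal.ofReal (z ^ a * (2 * T / k)) * ENNReal.ofReal (B / z)
        + ENNReal.ofReal (z ^ a * (T / k ^ 2) + |a| * (z ^ a / k) * (T / k)) * ENNReal.ofReal N := by
        rw [ENNReal.ofReal_coe_nnreal]
        gcongr
        exact hB z hz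
    _ = ENNReal.ofReal (z ^ a * (2 * T / k) * (B / z) + (z ^ a * (T / k ^ 2) + |a| * (z ^ a / k) * (T / k)) * N) := by
        rw [← ENNReal.ofReal_mul (by positivity), ← ENNReal.ofReal_mul (by positivity), ← ENNReal.ofReal_add (by positivity) (by positivity)]
    _ ≤ _ := by
        apply ENNReal.ofReal_le_ofReal
        calc _ ≤ z ^ a * (2 * T / k) * (B / k) + (z ^ a * (T / k ^ 2) + |a| * (z ^ a / k) * (T / k)) * N := by gcongr
          _ = _ := by field_simp; ring

lemma tau_one {e R L z : ℝ} (hL : 0 < L) (h : e * (z - R) ≤ L) : tau e R L z = 1 :=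
  th_one (by rw [div_le_one hL]; exact h)

lemma tau_zero {e R L z : ℝ} (hL : 0 < L) (h : 2 * L ≤ e * (z - R)) : tau e R L z = 0 :=
  th_zero (by rw [le_div_iff₀ hL]; exact h)

lemma tau_abs (e R L z : ℝ) : |tau e R L z| ≤ 1 := th_abs _

lemma dtau_zero {e R L z : ℝ} (hL : 0 < L) (h : e * (z - R) < L) : deriv (tau e R L) z = 0 := by
  rw [deriv_tau, (dth_zero (by rw [div_lt_one hL]; exact h)).1, mul_zero]

lemma dtau_zero' {e R L z : ℝ} (hL : 0 < L) (h : 2 * L < e * (z - R)) : deriv (tau e R L) z = 0 := by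
  rw [deriv_tau, (dth_zero' (by rw [lt_div_iff₀ hL]; exact h)).1, mul_zero]

lemma w_cut {n : ℕ} {w : En n → ℝ≥0∞} {c : ℝ} (hc : |c| ≤ 1) {u : En n → ℝ} {N : ℝ≥0∞}
    (h : ∫⁻ x, w x * ENNReal.ofReal |u x| ≤ N) : ∫⁻ x, w x * ENNReal.ofReal |c * u x| ≤ N := by
  refine le_trans (lintegral_mono fun x => ?_) h
  refine mul_le_mul' le_rfl (ENNReal.ofReal_le_ofReal ?_)
  rw [abs_mul]
  exact mul_le_of_le_one_left (abs_nonneg _) hc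

lemma est1 {n : ℕ} {s : ℝ} {F V : En n → ℝ → ℝ} {w : En n → ℝ≥0∞} (H : Hyp n s F V w) {φ f : En n → ℝ}
    (hφ : ContDiff ℝ (⊤ : ℕ∞) φ) (hφc : HasCompactSupport φ)
    (hf : ContDiff ℝ (⊤ : ℕ∞) f) (hfc : HasCompactSupport f) (hf1 : ∀ x, |f x| ≤ 1) :
    ∃ D C : ℝ, 0 ≤ D ∧ 0 ≤ C ∧ ∀ k j α : ℝ, 1 ≤ k → 1 ≤ j → 0 < α → α < k →
      |(∫ x, f (j⁻¹ • x) * (α ^ (1 - 2 * s) * (deriv (V x) α * Pconv n s α φ x - V x α * deriv (fun t => Pconv n s t φ x) α)))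
      + ∫ z in Ioc α (3 * k), ∫ x, f (j⁻¹ • x) * F x z * (tau 1 0 k z * Pconv n s z φ x)|
      ≤ D * k ^ (-s) + C * (3 * k) ^ (2 - s) / j := by
  obtain ⟨C, hC, hcg⟩ := cutgreen hf hfc hf1
  obtain ⟨D, hD, hLs⟩ := bnd_Ls1 H hφ hφc
  obtain ⟨N, hN⟩ := WB_all H.hw hφ hφc
  refine ⟨3 ^ (2 - s) * D, C * N, by positivity, by positivity, fun k j α hk hj hα hαk => ?_⟩
  have hk0 : 0 < k := by linarith
  have hs1 := H.hs1
  have hΦ := Sm_Pconv s hφ hφc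
  have hψ : Sm (Ioi 0) (fun x z => tau 1 0 k z * Pconv n s z φ x) := (Sm.of_z (tau_contDiff 1 0 k).contDiffOn).mul hΦ
  have main := hcg s F V (fun x z => tau 1 0 k z * Pconv n s z φ x) (Ioi 0) w α (3 * k) j N
    (fun z => ENNReal.ofReal (z ^ (1 - 2 * s) * (D / k ^ 2))) H.hs1 isOpen_Ioi subset_rfl H.hV' H.hF hψ H.heq H.hwm H.hVw
    (by linarith) (fun z hz => hα.trans_le hz.1) hj (fun z hz => hLs k z hk (hα.trans hz.1))
    (fun z hz => w_cut (tau_abs _ _ _ _) (hN s z H.hs0 (hα.trans hz.1)).1)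
    (fun z hz i => by
      have : ∀ x, pd i (fun y => tau 1 0 k z * Pconv n s z φ y) x = tau 1 0 k z * pd i (fun y => Pconv n s z φ y) x := by
        intro x
        exact pd_const_mul i _ ((hΦ.contx isOpen_Ioi (hα.trans hz.1)).differentiable (by simp) x)
      simp only [this]
      exact w_cut (tau_abs _ _ _ _) ((hN s z H.hs0 (hα.trans hz.1)).2 i))
  have e1 : ∀ x, deriv (fun t => tau 1 0 k t * Pconv n s t φ x) α = deriv (fun t => Pconv n s t φ x) α := by
    intro x
    have := deriv_cut isOpen_Ioi hΦ (tau_contDiff 1 0 k) x hα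
    rw [this, dtau_zero hk0 (by linarith), tau_one hk0 (by linarith)]; ring
  have e2 : ∀ x, deriv (fun t => tau 1 0 k t * Pconv n s t φ x) (3 * k) = 0 := by
    intro x
    have := deriv_cut isOpen_Ioi hΦ (tau_contDiff 1 0 k) x (by simp; linarith : 3 * k ∈ Ioi 0)
    rw [this, dtau_zero' hk0 (by linarith), tau_zero hk0 (by linarith)]; ring
  have e3 : tau 1 0 k α = 1 := tau_one hk0 (by linarith)
  have e4 : tau 1 0 k (3 * k) = 0 := tau_zero hk0 (by linarith)
  simp only [e1, e2, e3, e4] at main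
  simp only [zero_mul, mul_zero, sub_zero, integral_zero, one_mul, zero_sub, ← neg_add', abs_neg] at main
  have herr : (∫⁻ z in Ioc α (3 * k), ENNReal.ofReal (z ^ s) * ENNReal.ofReal (z ^ (1 - 2 * s) * (D / k ^ 2)))
      ≤ ENNReal.ofReal (3 ^ (2 - s) * D * k ^ (-s)) := by
    calc _ ≤ ENNReal.ofReal ((3 * k) ^ (1 - s) * (D / k ^ 2)) * ENNReal.ofReal (3 * k - α) := by
          apply lint_const_bound
          intro z hz
          have hz0 : 0 < z := hα.trans hz.1
          rw [← ENNReal.ofReal_mul (by positivity), ← mul_assoc, ← Real.rpow_add hz0]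
          apply ENNReal.ofReal_le_ofReal
          rw [show s + (1 - 2 * s) = 1 - s by ring]
          gcongr
          exact hz.2
      _ = ENNReal.ofReal ((3 * k) ^ (1 - s) * (D / k ^ 2) * (3 * k - α)) := by
          rw [← ENNReal.ofReal_mul (by positivity)]
      _ ≤ _ := by
          apply ENNReal.ofReal_le_ofReal
          calc _ ≤ (3 * k) ^ (1 - s) * (D / k ^ 2) * (3 * k) := by gcongr; linarith
            _ = (3 * k) ^ (2 - s) * (D / k ^ 2) := by
              rw [show 2 - s = (1 - s) + 1 by ring, Real.rpow_add_one (by positivity)]; ring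
            _ = _ := by
              rw [Real.mul_rpow (by norm_num) hk0.le, show 2 - s = (-s) + 2 by ring, Real.rpow_add hk0]
              norm_num
              field_simp
  have := main.trans (add_le_add herr le_rfl)
  rw [← ENNReal.ofReal_add (by positivity) (by positivity)] at this
  exact (ENNReal.ofReal_le_ofReal_iff (by positivity)).1 this


lemma scale_hcs {n : ℕ} {f : En n → ℝ} (hfc : HasCompactSupport f) {j : ℝ} (hj : 1 ≤ j) :
    HasCompactSupport (fun x => f (j⁻¹ • x)) :=
  hfc.comp_homeomorph (Homeomorph.smulOfNeZero (j⁻¹) (by positivity))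

lemma scale_cont {n : ℕ} {f : En n → ℝ} (hf : ContDiff ℝ (⊤ : ℕ∞) f) (j : ℝ) :
    ContDiff ℝ (⊤ : ℕ∞) (fun x => f (j⁻¹ • x)) := hf.comp (by fun_prop)

/-- bounded by `c` and vanishing off `K` gives an integral bound -/
lemma int_le_of_K {n : ℕ} {h : En n → ℝ} {K : Set (En n)} (hK : IsCompact K) {c : ℝ}
    (h0 : ∀ x ∉ K, h x = 0) (hb : ∀ x ∈ K, |h x| ≤ c) : |∫ x, h x| ≤ c * volume.real K := by
  rw [← setIntegral_eq_integral_of_forall_compl_eq_zero (s := K) h0]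
  exact norm_setIntegral_le_of_norm_le_const (f := h) hK.measure_lt_top hb

lemma lim_G {n : ℕ} {s : ℝ} {F V : En n → ℝ → ℝ} {w : En n → ℝ≥0∞} (H : Hyp n s F V w) {φ f : En n → ℝ}
    (hφ : ContDiff ℝ (⊤ : ℕ∞) φ) (hφc : HasCompactSupport φ)
    (hf : ContDiff ℝ (⊤ : ℕ∞) f) (hfc : HasCompactSupport f) (hf1 : ∀ x, |f x| ≤ 1) {j : ℝ} (hj : 1 ≤ j)
    (hjφ : ∀ x, f (j⁻¹ • x) * φ x = φ x) :
    Tendsto (fun α => (∫ x, f (j⁻¹ • x) * (α ^ (1 - 2 * s) * (deriv (V x) α * Pconv n s α φ x - V x α * deriv (fun t => Pconv n s t φ x) α)))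
      - ∫ x, α ^ (1 - 2 * s) * deriv (V x) α * φ x) (𝓝[>] 0) (𝓝 0) := by
  have hcs := scale_hcs hfc hj
  obtain ⟨C, hC, hV⟩ := V_near H.hV H.hV0 hcs.isCompact
  obtain ⟨C1, hC1, h1⟩ := Pconv_sub_le H.hn H.hs0 H.hs1 hφ hφc
  obtain ⟨C2, hC2, h2⟩ := Pconv_deriv_sup (n := n) H.hs0 H.hs1 hφ hφc
  set K := tsupport (fun x => f (j⁻¹ • x))
  have hΦ := Sm_Pconv s hφ hφc
  have bound : ∀ α : ℝ, 0 < α → α ≤ 1 → |(∫ x, f (j⁻¹ • x) * (α ^ (1 - 2 * s) * (deriv (V x) α * Pconv n s α φ x - V x α * deriv (fun t => Pconv n s t φ x) α)))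
      - ∫ x, α ^ (1 - 2 * s) * deriv (V x) α * φ x| ≤ ((C * C1 + C * C2) * volume.real K) * α := by
    intro α hα hα1
    have c1 := (H.hV'.contx isOpen_Ioi hα).continuous
    have c2 := ((H.hV'.dz isOpen_Ioi).contx isOpen_Ioi hα).continuous
    have c3 := (hΦ.contx isOpen_Ioi hα).continuous
    have c4 := ((hΦ.dz isOpen_Ioi).contx isOpen_Ioi hα).continuous
    have c5 := (scale_cont hf j).continuous
    have c6 := hφ.continuous
    rw [← integral_sub]
    rotate_left
    · exact Continuous.integrable_of_hasCompactSupport (by fun_prop) hcs.mul_right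
    · exact Continuous.integrable_of_hasCompactSupport (by fun_prop) hφc.mul_left
    have := int_le_of_K (h := fun x => f (j⁻¹ • x) * (α ^ (1 - 2 * s) * (deriv (V x) α * Pconv n s α φ x - V x α * deriv (fun t => Pconv n s t φ x) α))
       - α ^ (1 - 2 * s) * deriv (V x) α * φ x) hcs.isCompact (c := (C * C1 + C * C2) * α) (fun x hx => by
        have e : f (j⁻¹ • x) = 0 := image_eq_zero_of_notMem_tsupport (f := fun x => f (j⁻¹ • x)) hx
        have e' : φ x = 0 := by rw [← hjφ x, e, zero_mul]
        simp [e, e']) (fun x hx => by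
        obtain ⟨v1, v2⟩ := hV x hx α hα hα1
        have p1 := h1 x α hα hα1
        have p2 := h2 x α hα hα1
        have e : f (j⁻¹ • x) * (α ^ (1 - 2 * s) * (deriv (V x) α * Pconv n s α φ x - V x α * deriv (fun t => Pconv n s t φ x) α))
            - α ^ (1 - 2 * s) * deriv (V x) α * φ x = f (j⁻¹ • x) * (α ^ (1 - 2 * s) * deriv (V x) α * (Pconv n s α φ x - φ x)
              - V x α * (α ^ (1 - 2 * s) * deriv (fun t => Pconv n s t φ x) α)) := by
          conv_lhs => rw [← hjφ x]
          ring
        simp only [e]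
        rw [abs_mul]
        have ha : 0 < α ^ (1 - 2 * s) := Real.rpow_pos_of_pos hα _
        calc _ ≤ 1 * (|α ^ (1 - 2 * s) * deriv (V x) α * (Pconv n s α φ x - φ x)|
              + |V x α * (α ^ (1 - 2 * s) * deriv (fun t => Pconv n s t φ x) α)|) :=
              mul_le_mul (hf1 _) (abs_sub _ _) (abs_nonneg _) zero_le_one
          _ ≤ α ^ (1 - 2 * s) * C * (C1 * α ^ (2 * s)) + C * α * C2 := by
              rw [one_mul, abs_mul, abs_mul, abs_mul (V x α), abs_of_pos ha]
              gcongr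
          _ = C * C1 * (α ^ (1 - 2 * s) * α ^ (2 * s)) + C * α * C2 := by ring
          _ = _ := by rw [← Real.rpow_add hα, show 1 - 2 * s + 2 * s = 1 by ring, Real.rpow_one]; ring)
    calc _ ≤ _ := this
      _ = _ := by ring
  rw [tendsto_zero_iff_norm_tendsto_zero]
  have t0 : Tendsto (fun α : ℝ => ((C * C1 + C * C2) * volume.real K) * α) (𝓝[>] 0) (𝓝 0) := by
    have : Tendsto (fun α : ℝ => ((C * C1 + C * C2) * volume.real K) * α) (𝓝 0) (𝓝 (((C * C1 + C * C2) * volume.real K) * 0)) :=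
      (continuous_const.mul continuous_id).tendsto 0
    rw [mul_zero] at this
    exact this.mono_left nhdsWithin_le_nhds
  refine tendsto_of_tendsto_of_tendsto_of_le_of_le' tendsto_const_nhds t0 (Eventually.of_forall fun _ => norm_nonneg _) ?_
  filter_upwards [Ioc_mem_nhdsGT (zero_lt_one' ℝ)] with α hα using bound α hα.1 hα.2

lemma phi_bdd {n : ℕ} {φ : En n → ℝ} (hφ : ContDiff ℝ (⊤ : ℕ∞) φ) (hφc : HasCompactSupport φ) :
    ∃ M : ℝ, 0 ≤ M ∧ ∀ σ z : ℝ, 0 < σ → 0 < z → ∀ x, |Pconv n σ z φ x| ≤ M := by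
  obtain ⟨M, hM⟩ := hφc.exists_bound_of_continuous hφ.continuous
  refine ⟨|M|, abs_nonneg _, fun σ z hσ hz x => ?_⟩
  refine (Pconv_abs_le n hσ hz x).trans (Pconv_le n hσ hz hφ.continuous hφc (fun y => ?_) x)
  exact (hM y).trans (le_abs_self M)

/-- integrability of `F` times something bounded and continuous -/
lemma Hyp.mul_int {n : ℕ} {s : ℝ} {F V : En n → ℝ → ℝ} {w : En n → ℝ≥0∞} (H : Hyp n s F V w)
    {u : En n → ℝ → ℝ} {I : Set ℝ} (hI : MeasurableSet I) (hI0 : I ⊆ Ioi 0) (hu : ContinuousOn (fun p : En n × ℝ => u p.1 p.2) (univ ×ˢ I)) {M : ℝ}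
    (hM : ∀ x, ∀ z ∈ I, |u x z| ≤ M) :
    Integrable (fun p : En n × ℝ => F p.1 p.2 * u p.1 p.2) ((volume : Measure (En n)).prod (volume.restrict I)) := by
  have h1 : Integrable (fun p : En n × ℝ => F p.1 p.2) ((volume : Measure (En n)).prod (volume.restrict I)) := by
    refine H.hFi.mono_measure (Measure.prod_mono le_rfl (Measure.restrict_mono hI0 le_rfl))
  rw [← slab_meas] at h1 ⊢
  refine h1.mul_bdd (c := M) (hu.aestronglyMeasurable (MeasurableSet.univ.prod hI)) ?_
  filter_upwards [ae_restrict_mem (MeasurableSet.univ.prod hI)] with p hp using hM _ _ hp.2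


lemma lim_I {n : ℕ} {s : ℝ} {F V : En n → ℝ → ℝ} {w : En n → ℝ≥0∞} (H : Hyp n s F V w) {φ f : En n → ℝ}
    (hφ : ContDiff ℝ (⊤ : ℕ∞) φ) (hφc : HasCompactSupport φ)
    (hf : ContDiff ℝ (⊤ : ℕ∞) f) (hf1 : ∀ x, |f x| ≤ 1) {j k : ℝ} (hk : 1 ≤ k) :
    Tendsto (fun α => ∫ z in Ioc α (3 * k), ∫ x, f (j⁻¹ • x) * F x z * (tau 1 0 k z * Pconv n s z φ x)) (𝓝[>] 0)
      (𝓝 (∫ p, F p.1 p.2 * (f (j⁻¹ • p.1) * tau 1 0 k p.2 * Pconv n s p.2 φ p.1) ∂((volume : Measure (En n)).prod (volume.restrict (Ioi 0))))) := by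
  obtain ⟨M, hM, hb⟩ := phi_bdd hφ hφc
  have hk0 : 0 < k := by linarith
  have hi := H.mul_int (u := fun x z => f (j⁻¹ • x) * tau 1 0 k z * Pconv n s z φ x) measurableSet_Ioi subset_rfl
    (((Sm.of_x (scale_cont hf j)).mul (Sm.of_z (tau_contDiff 1 0 k).contDiffOn)).mul (Sm_Pconv s hφ hφc)).contOn (M := 1 * 1 * M)
    (fun x z hz => by
      rw [abs_mul, abs_mul]
      gcongr
      · exact hf1 _
      · exact tau_abs _ _ _ _
      · exact hb s z H.hs0 hz x)
  rw [integral_prod_symm _ hi]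
  have hh := hi.integral_prod_right
  have e : ∀ z, (∫ x, f (j⁻¹ • x) * F x z * (tau 1 0 k z * Pconv n s z φ x))
      = ∫ x, F x z * (f (j⁻¹ • x) * tau 1 0 k z * Pconv n s z φ x) := by
    intro z; congr 1; ext x; ring
  simp only [e]
  set h : ℝ → ℝ := fun z => ∫ x, F x z * (f (j⁻¹ • x) * tau 1 0 k z * Pconv n s z φ x) with hdef
  have hI : IntegrableOn h (Ioi 0) := hh
  have hz : ∀ z, 3 * k < z → h z = 0 := by
    intro z hz
    rw [hdef]; simp only []
    rw [tau_zero hk0 (by linarith)]; simp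
  have e2 : ∫ z in Ioi 0, h z = ∫ z in Ioc 0 (3 * k), h z := by
    refine (setIntegral_eq_of_subset_of_forall_diff_eq_zero measurableSet_Ioi Ioc_subset_Ioi_self ?_)
    intro z hz'
    apply hz
    by_contra hc
    exact hz'.2 ⟨hz'.1, not_lt.1 hc⟩
  have hInteg : IntegrableOn h (uIcc 0 (3 * k)) := by
    rw [uIcc_of_le (by linarith), integrableOn_Icc_iff_integrableOn_Ioc]
    exact hI.mono_set Ioc_subset_Ioi_self
  have hc := intervalIntegral.continuousOn_primitive_interval_left (a := 0) (b := 3 * k) (by rwa [uIcc_comm] at *)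
  have ht := (hc 0 left_mem_uIcc).tendsto
  show Tendsto _ _ (𝓝 (∫ z in Ioi 0, h z))
  rw [e2, ← intervalIntegral.integral_of_le (by linarith)]
  rw [uIcc_of_le (by linarith)] at ht
  have ht' := ht.mono_left (nhdsWithin_mono 0 (Ioc_subset_Icc_self (a := 0) (b := 3 * k)))
  rw [nhdsWithin_Ioc_eq_nhdsGT (by linarith)] at ht'
  refine ht'.congr' ?_
  filter_upwards [Ioc_mem_nhdsGT (show (0:ℝ) < 3 * k by linarith)] with α hα
  rw [intervalIntegral.integral_of_le hα.2]

lemma lim_A {n : ℕ} {s : ℝ} {F V : En n → ℝ → ℝ} {w : En n → ℝ≥0∞} (H : Hyp n s F V w) {φ f : En n → ℝ}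
    (hφ : ContDiff ℝ (⊤ : ℕ∞) φ) (hφc : HasCompactSupport φ)
    (hf : ContDiff ℝ (⊤ : ℕ∞) f) (hf1 : ∀ x, |f x| ≤ 1) (hf2 : ∀ x, ‖x‖ ≤ 1 → f x = 1) {J : ℕ → ℝ} (hJ : ∀ k : ℕ, (k:ℝ) ≤ J k) :
    Tendsto (fun k : ℕ => ∫ p, F p.1 p.2 * (f ((J k)⁻¹ • p.1) * tau 1 0 k p.2 * Pconv n s p.2 φ p.1) ∂((volume : Measure (En n)).prod (volume.restrict (Ioi 0))))
      atTop (𝓝 (∫ p, F p.1 p.2 * Pconv n s p.2 φ p.1 ∂((volume : Measure (En n)).prod (volume.restrict (Ioi 0))))) := by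
  obtain ⟨M, hM, hb⟩ := phi_bdd hφ hφc
  have hmem : ∀ᵐ p ∂((volume : Measure (En n)).prod (volume.restrict (Ioi (0:ℝ)))), p.2 ∈ Ioi (0:ℝ) := by
    rw [← slab_meas]
    filter_upwards [ae_restrict_mem (MeasurableSet.univ.prod measurableSet_Ioi)] with p hp using hp.2
  refine tendsto_integral_of_dominated_convergence (fun p => |F p.1 p.2| * M) (fun k => ?_) (H.hFi.abs.mul_const M) (fun k => ?_) ?_
  · have := H.mul_int (u := fun x z => f ((J k)⁻¹ • x) * tau 1 0 k z * Pconv n s z φ x) measurableSet_Ioi subset_rfl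
      (((Sm.of_x (scale_cont hf _)).mul (Sm.of_z (tau_contDiff 1 0 k).contDiffOn)).mul (Sm_Pconv s hφ hφc)).contOn (M := 1 * 1 * M)
      (fun x z hz => by
        rw [abs_mul, abs_mul]
        gcongr
        · exact hf1 _
        · exact tau_abs _ _ _ _
        · exact hb s z H.hs0 hz x)
    exact this.aestronglyMeasurable
  · filter_upwards [hmem] with p hp
    rw [Real.norm_eq_abs, abs_mul, abs_mul, abs_mul]
    have : |f ((J k)⁻¹ • p.1)| * |tau 1 0 k p.2| * |Pconv n s p.2 φ p.1| ≤ 1 * 1 * M := by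
      gcongr
      · exact hf1 _
      · exact tau_abs _ _ _ _
      · exact hb s _ H.hs0 hp _
    gcongr
    linarith
  · refine Eventually.of_forall fun p => tendsto_const_nhds.congr' ?_
    obtain ⟨k0, hk0⟩ := exists_nat_ge (max (max ‖p.1‖ |p.2|) 1)
    filter_upwards [eventually_ge_atTop k0] with k hk
    have hk' : max (max ‖p.1‖ |p.2|) 1 ≤ k := hk0.trans (by exact_mod_cast hk)
    have a1 : ‖p.1‖ ≤ k := (le_max_left _ _).trans ((le_max_left _ _).trans hk')
    have a2 : |p.2| ≤ k := (le_max_right _ _).trans ((le_max_left _ _).trans hk')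
    have a3 : (1:ℝ) ≤ k := (le_max_right _ _).trans hk'
    have hJ' := hJ k
    rw [hf2, tau_one (by linarith) (by linarith [le_abs_self p.2]), one_mul, one_mul]
    rw [norm_smul, norm_inv, Real.norm_eq_abs, abs_of_pos (by linarith), inv_mul_le_iff₀ (by linarith)]
    linarith

lemma part1 {n : ℕ} {s : ℝ} {F V : En n → ℝ → ℝ} {w : En n → ℝ≥0∞} (H : Hyp n s F V w) {φ : En n → ℝ}
    (hφ : ContDiff ℝ (⊤ : ℕ∞) φ) (hφc : HasCompactSupport φ) :
    Tendsto (fun α => ∫ x, α ^ (1 - 2 * s) * deriv (V x) α * φ x) (𝓝[>] 0)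
      (𝓝 (-∫ p, F p.1 p.2 * Pconv n s p.2 φ p.1 ∂((volume : Measure (En n)).prod (volume.restrict (Ioi 0))))) := by
  obtain ⟨f, hf, hfc, hf1, hf2⟩ := bump_exists n
  obtain ⟨D, C, hD, hC, hest⟩ := est1 H hφ hφc hf hfc hf1
  obtain ⟨r, hr⟩ := hφc.isCompact.isBounded.exists_norm_le
  set J : ℕ → ℝ := fun k => (k:ℝ) + k * (C * (3 * k) ^ (2 - s)) with hJdef
  have hJ : ∀ k : ℕ, (k:ℝ) ≤ J k := fun k => by
    have : 0 ≤ (k:ℝ) * (C * (3 * k) ^ (2 - s)) := by positivity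
    simp only [hJdef]; linarith
  have hA := lim_A H hφ hφc hf hf1 hf2 hJ
  have hδ : Tendsto (fun k : ℕ => D * (k:ℝ) ^ (-s) + 1 / (k:ℝ)) atTop (𝓝 0) := by
    have t1 := ((tendsto_rpow_neg_atTop H.hs0).comp tendsto_natCast_atTop_atTop).const_mul D
    have t2 := t1.add (tendsto_one_div_atTop_nhds_zero_nat (𝕜 := ℝ))
    simpa using t2
  set Ainf := ∫ p, F p.1 p.2 * Pconv n s p.2 φ p.1 ∂((volume : Measure (En n)).prod (volume.restrict (Ioi 0)))
  rw [Metric.tendsto_nhds]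
  intro ε hε
  obtain ⟨k, h1, h2, h3⟩ := ((Metric.tendsto_nhds.1 hA (ε / 4) (by linarith)).and
    ((Metric.tendsto_nhds.1 hδ (ε / 4) (by linarith)).and (eventually_ge_atTop (⌈|r|⌉₊ + 1)))).exists
  have hk : |r| + 1 ≤ k := by
    have : (⌈|r|⌉₊ : ℝ) + 1 ≤ k := by exact_mod_cast h3
    linarith [Nat.le_ceil |r|]
  have hk1 : (1:ℝ) ≤ k := by linarith [abs_nonneg r]
  have hJk := hJ k
  have hj1 : 1 ≤ J k := hk1.trans hJk
  have hjφ : ∀ x, f ((J k)⁻¹ • x) * φ x = φ x := by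
    intro x
    by_cases hx : x ∈ tsupport φ
    · rw [hf2, one_mul]
      rw [norm_smul, norm_inv, Real.norm_eq_abs, abs_of_pos (by linarith), inv_mul_le_iff₀ (by linarith)]
      linarith [hr x hx, le_abs_self r]
    · rw [image_eq_zero_of_notMem_tsupport hx, mul_zero]
  have tG := Metric.tendsto_nhds.1 (lim_G H hφ hφc hf hfc hf1 hj1 hjφ) (ε / 4) (by linarith)
  have tI := Metric.tendsto_nhds.1 (lim_I H hφ hφc hf hf1 (j := J k) hk1) (ε / 4) (by linarith)
  have hjerr : C * (3 * (k:ℝ)) ^ (2 - s) / J k ≤ 1 / k := by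
    rw [div_le_div_iff₀ (by linarith) (by linarith)]
    simp only [hJdef]
    nlinarith
  filter_upwards [tG, tI, Ioo_mem_nhdsGT (show (0:ℝ) < k by linarith)] with α g1 g2 g3
  have h5 := hest k (J k) α hk1 hj1 g3.1 g3.2
  rw [Real.dist_eq] at *
  set X := ∫ x, f ((J k)⁻¹ • x) * (α ^ (1 - 2 * s) * (deriv (V x) α * Pconv n s α φ x - V x α * deriv (fun t => Pconv n s t φ x) α))
  set Y := ∫ z in Ioc α (3 * (k:ℝ)), ∫ x, f ((J k)⁻¹ • x) * F x z * (tau 1 0 k z * Pconv n s z φ x)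
  rw [sub_zero] at *
  have h6 := (le_abs_self _).trans_lt h2
  rw [abs_lt] at *
  rw [abs_le] at h5
  constructor <;> linarith [h5.1, h5.2]


/-- half-space on which the shifted harmonic extension lives -/
def Ie (e R : ℝ) : Set ℝ := {z | 0 < z ∧ 0 < e * (z - R)}

lemma Ie_open (e R : ℝ) : IsOpen (Ie e R) :=
  (isOpen_lt continuous_const continuous_id).inter
    (isOpen_lt continuous_const (by fun_prop : Continuous fun z : ℝ => e * (z - R)))

lemma Ie_pos (e R : ℝ) : Ie e R ⊆ Ioi 0 := fun _ hz => hz.1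

lemma Sm_shift {n : ℕ} (e R : ℝ) {W : En n → ℝ → ℝ} (h : Sm (Ioi 0) W) :
    Sm (Ie e R) (fun x z => W x (e * (z - R))) := by
  refine ContDiffOn.comp (g := fun p : En n × ℝ => W p.1 p.2) (f := fun p : En n × ℝ => (p.1, e * (p.2 - R))) (t := univ ×ˢ Ioi 0) h ?_ ?_
  · exact ContDiff.contDiffOn (by fun_prop)
  · intro p hp
    exact ⟨mem_univ _, hp.2.2⟩

lemma deriv_shift {n : ℕ} {e R : ℝ} {W : En n → ℝ → ℝ} (h : Sm (Ioi 0) W) (x : En n) {z : ℝ} (hz : 0 < e * (z - R)) :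
    HasDerivAt (fun t => W x (e * (t - R))) (e * deriv (W x) (e * (z - R))) z := by
  have h1 : HasDerivAt (fun z => e * (z - R)) e z := by
    simpa using ((hasDerivAt_id z).sub_const R).const_mul e
  have := (h.hasDerivAt isOpen_Ioi x hz).comp z h1
  rw [mul_comm]; exact this

lemma Pconv_half_dd {n : ℕ} {φ : En n → ℝ} (hφ : ContDiff ℝ (⊤ : ℕ∞) φ) (hφc : HasCompactSupport φ) (x : En n) {r : ℝ} (hr : 0 < r) :
    deriv (fun t => deriv (fun r => Pconv n (1/2) r φ x) t) r = - Pconv n (1/2) r (lapX φ) x := by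
  have := (Pconv_hasDerivAt2 (1/2) hr hφ hφc x).deriv
  norm_num at this ⊢
  exact this

lemma Ls_H {n : ℕ} (s : ℝ) {e R : ℝ} (he : e ^ 2 = 1) {φ : En n → ℝ} (hφ : ContDiff ℝ (⊤ : ℕ∞) φ) (hφc : HasCompactSupport φ)
    (x : En n) {z : ℝ} (hz : z ∈ Ie e R) : LsOp s (fun x z => Pconv n (1/2) (e * (z - R)) φ x) x z =
      (1 - 2 * s) * z ^ (1 - 2 * s - 1) * (e * deriv (fun t => Pconv n (1/2) t φ x) (e * (z - R))) := by
  have hH := Sm_Pconv (1/2) hφ hφc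
  unfold LsOp
  rw [lapX_Pconv (1/2) hz.2 hφ hφc x]
  have e1 : (fun t => t ^ (1 - 2 * s) * deriv (fun z => Pconv n (1/2) (e * (z - R)) φ x) t) =ᶠ[𝓝 z]
      fun t => t ^ (1 - 2 * s) * (e * deriv (fun r => Pconv n (1/2) r φ x) (e * (t - R))) := by
    filter_upwards [(Ie_open e R).mem_nhds hz] with t ht
    rw [(deriv_shift hH x ht.2).deriv]
  have d1 := Real.hasDerivAt_rpow_const (x := z) (p := 1 - 2 * s) (Or.inl hz.1.ne')
  have d2 := (deriv_shift (hH.dz isOpen_Ioi) x hz.2).const_mul e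
  have d3 := (d1.mul d2).deriv
  have d4 : deriv (fun t => t ^ (1 - 2 * s) * (e * deriv (fun r => Pconv n (1/2) r φ x) (e * (t - R)))) z = _ := d3
  rw [e1.deriv_eq, d4]
  have d5 := Pconv_half_dd hφ hφc x hz.2
  rw [d5]
  linear_combination (-z ^ (1 - 2 * s) * Pconv n (1/2) (e * (z - R)) (lapX φ) x) * he

lemma WB_dH {n : ℕ} {s : ℝ} {F V : En n → ℝ → ℝ} {w : En n → ℝ≥0∞} (H : Hyp n s F V w) {φ : En n → ℝ}
    (hφ : ContDiff ℝ (⊤ : ℕ∞) φ) (hφc : HasCompactSupport φ) :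
    ∃ B : ℝ, 0 ≤ B ∧ ∀ r : ℝ, 0 < r →
      ∫⁻ x, w x * ENNReal.ofReal |deriv (fun t => Pconv n (1/2) t φ x) r| ≤ ENNReal.ofReal (B * r ^ (s / 2 - 1)) := by
  obtain ⟨B1, h1⟩ := WB_deriv H.hw hφ hφc (s := 1/2) (by norm_num)
  obtain ⟨B2, h2⟩ := WB_deriv_half H.hw H.hwm hφ hφc
  have hs0 := H.hs0
  have hs1 := H.hs1
  refine ⟨B1 + B2, by positivity, fun r hr => ?_⟩
  rcases le_total r 1 with h | h
  · refine (h2 r hr h).trans ?_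
    rw [← ENNReal.ofReal_coe_nnreal]
    apply ENNReal.ofReal_le_ofReal
    have : 1 ≤ r ^ (s / 2 - 1) := Real.one_le_rpow_of_pos_of_le_one_of_nonpos hr h (by linarith)
    nlinarith [B1.2, B2.2]
  · refine (h1 r hr).trans (ENNReal.ofReal_le_ofReal ?_)
    have : r⁻¹ ≤ r ^ (s / 2 - 1) := by
      rw [← Real.rpow_neg_one]
      exact Real.rpow_le_rpow_of_exponent_le h (by linarith)
    have h0 : 0 < r⁻¹ := by positivity
    rw [div_eq_mul_inv]
    nlinarith [B1.2, B2.2]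

lemma bnd_Ls2 {n : ℕ} {s : ℝ} {F V : En n → ℝ → ℝ} {w : En n → ℝ≥0∞} (H : Hyp n s F V w) {φ : En n → ℝ}
    (hφ : ContDiff ℝ (⊤ : ℕ∞) φ) (hφc : HasCompactSupport φ) :
    ∃ D : ℝ, 0 ≤ D ∧ ∀ e R z : ℝ, |e| = 1 → 1 ≤ R → R / 2 ≤ z → 0 < e * (z - R) →
      ∫⁻ x, w x * ENNReal.ofReal |LsOp s (fun x z => tau e R (R / 8) z * Pconv n (1/2) (e * (z - R)) φ x) x z|
        ≤ ENNReal.ofReal (z ^ (1 - 2 * s) * (D / R * (e * (z - R)) ^ (s / 2 - 1) + D / R ^ 2)) := by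
  obtain ⟨T, hT, hth⟩ := dth_bound
  obtain ⟨N, hN⟩ := WB_all H.hw hφ hφc
  obtain ⟨B, hB0, hB⟩ := WB_dH H hφ hφc
  refine ⟨(2 * |1 - 2 * s| + 16 * T) * B + (64 * T + 16 * |1 - 2 * s| * T) * N, by positivity, fun e R z he hR hzR hez => ?_⟩
  have hR0 : 0 < R := by linarith
  have hz : 0 < z := by linarith
  have hH := Sm_Pconv (1/2) hφ hφc
  have hΨ := Sm_shift e R hH
  have he2 : e ^ 2 = 1 := by rw [← sq_abs, he]; norm_num
  have hzI : z ∈ Ie e R := ⟨hz, hez⟩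
  set y := e * (z - R) / (R / 8)
  obtain ⟨t1, t2⟩ := hth y
  set a := 1 - 2 * s
  set p := deriv th y
  set q := deriv (deriv th) y
  set ρ := e * (z - R)
  have hL : ∀ x, LsOp s (fun x z => tau e R (R / 8) z * Pconv n (1/2) (e * (z - R)) φ x) x z =
      tau e R (R / 8) z * (a * z ^ (a - 1) * (e * deriv (fun t => Pconv n (1/2) t φ x) ρ)) +
      z ^ a * (2 * (e / (R / 8) * p) * (e * deriv (fun t => Pconv n (1/2) t φ x) ρ)
        + (e / (R / 8)) ^ 2 * q * Pconv n (1/2) ρ φ x)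
      + a * z ^ (a - 1) * (e / (R / 8) * p) * Pconv n (1/2) ρ φ x := by
    intro x
    rw [Ls_cut (Ie_open e R) (Ie_pos e R) hΨ (tau_contDiff e R (R / 8)) x hzI, Ls_H s he2 hφ hφc x hzI, deriv_tau, deriv2_tau,
      (deriv_shift hH x hez).deriv]
  have hza : 0 < z ^ a := Real.rpow_pos_of_pos hz a
  have hza1 : z ^ (a - 1) ≤ z ^ a * (2 / R) := by
    rw [Real.rpow_sub_one hz.ne', div_eq_mul_inv]
    gcongr
    rw [inv_le_comm₀ hz (by positivity), inv_div]; exact hzR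
  have hza0 : 0 < z ^ (a - 1) := Real.rpow_pos_of_pos hz _
  have key := lin2 (L := fun x => LsOp s (fun x z => tau e R (R / 8) z * Pconv n (1/2) (e * (z - R)) φ x) x z)
    (u := fun x => deriv (fun t => Pconv n (1/2) t φ x) ρ) (v := fun x => Pconv n (1/2) ρ φ x)
    (c1 := z ^ a * ((2 * |a| + 16 * T) / R)) (c2 := z ^ a * ((64 * T + 16 * |a| * T) / R ^ 2)) H.hwm (by positivity) (by positivity)
    ((hH.dz isOpen_Ioi).contx isOpen_Ioi hez).continuous (by
      intro x
      rw [hL x]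
      set u := deriv (fun t => Pconv n (1/2) t φ x) ρ
      set v := Pconv n (1/2) ρ φ x
      set τ := tau e R (R / 8) z
      have hτ : |τ| ≤ 1 := tau_abs _ _ _ _
      calc _ = |τ * (a * z ^ (a - 1) * (e * u)) + z ^ a * (2 * (e * p)) * (e * u) * (8 / R) + z ^ a * (e * (e * q)) * v * (8 / R) ^ 2
              + a * z ^ (a - 1) * (e * p) * v * (8 / R)| := by
            congr 1; field_simp; ring
        _ ≤ |τ * (a * z ^ (a - 1) * (e * u))| + |z ^ a * (2 * (e * p)) * (e * u) * (8 / R)| + |z ^ a * (e * (e * q)) * v * (8 / R) ^ 2|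
              + |a * z ^ (a - 1) * (e * p) * v * (8 / R)| :=
            (abs_add_le _ _).trans (add_le_add ((abs_add_le _ _).trans (add_le_add (abs_add_le _ _) le_rfl)) le_rfl)
        _ = |τ| * (|a| * z ^ (a - 1) * |u|) + z ^ a * (2 * |p|) * |u| * (8 / R) + z ^ a * |q| * |v| * (8 / R) ^ 2
              + |a| * z ^ (a - 1) * |p| * |v| * (8 / R) := by
            simp only [abs_mul, abs_of_pos hza, abs_of_pos hza0, he, one_mul, abs_of_pos (by positivity : (0:ℝ) < 8 / R),
              abs_of_pos (by positivity : (0:ℝ) < (8 / R) ^ 2), abs_two]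
        _ ≤ 1 * (|a| * (z ^ a * (2 / R)) * |u|) + z ^ a * (2 * T) * |u| * (8 / R) + z ^ a * T * |v| * (8 / R) ^ 2
              + |a| * (z ^ a * (2 / R)) * T * |v| * (8 / R) := by gcongr
        _ = _ := by field_simp; ring)
  refine key.trans ?_
  obtain ⟨hN1, -⟩ := hN (1/2) ρ (by norm_num) hez
  have hρ : 0 < ρ ^ (s / 2 - 1) := Real.rpow_pos_of_pos hez _
  calc _ ≤ ENNReal.ofReal (z ^ a * ((2 * |a| + 16 * T) / R)) * ENNReal.ofReal (B * ρ ^ (s / 2 - 1))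
        + ENNReal.ofReal (z ^ a * ((64 * T + 16 * |a| * T) / R ^ 2)) * ENNReal.ofReal N := by
        rw [ENNReal.ofReal_coe_nnreal]
        gcongr
        exact hB _ hez
    _ = ENNReal.ofReal (z ^ a * (((2 * |a| + 16 * T) * B) / R * ρ ^ (s / 2 - 1) + ((64 * T + 16 * |a| * T) * N) / R ^ 2)) := by
        rw [← ENNReal.ofReal_mul (by positivity), ← ENNReal.ofReal_mul (by positivity), ← ENNReal.ofReal_add (by positivity) (by positivity)]
        congr 1; ring
    _ ≤ _ := by
        apply ENNReal.ofReal_le_ofReal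
        have h1 : 0 ≤ (2 * |a| + 16 * T) * B := by positivity
        have h2 : 0 ≤ (64 * T + 16 * |a| * T) * N := by positivity
        gcongr <;> linarith

lemma pow_int {e R α β p : ℝ} (he : |e| = 1) (hR : 0 < R) (hp : 0 < p) (hαβ : α ≤ β) (h1 : R / 2 ≤ α) (h2 : β ≤ 3 * R / 2)
    (hz : ∀ z ∈ Icc α β, 0 < e * (z - R)) :
    ∫⁻ z in Ioc α β, ENNReal.ofReal ((e * (z - R)) ^ (p - 1)) ≤ ENNReal.ofReal (R ^ p / p) := by
  have he2 : e * e = 1 := by rw [← pow_two, ← sq_abs, he]; norm_num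
  have hc : ContinuousOn (fun z => (e * (z - R)) ^ (p - 1)) (Icc α β) := by
    refine ContinuousOn.rpow_const (by fun_prop) fun z hz' => Or.inl (hz z hz').ne'
  have hi : IntervalIntegrable (fun z => (e * (z - R)) ^ (p - 1)) volume α β := by
    apply ContinuousOn.intervalIntegrable; rwa [uIcc_of_le hαβ]
  have hd : ∀ z ∈ uIcc α β, HasDerivAt (fun z => e * (e * (z - R)) ^ p / p) ((e * (z - R)) ^ (p - 1)) z := by
    intro z hz'
    rw [uIcc_of_le hαβ] at hz'
    have h1 : HasDerivAt (fun z => e * (z - R)) e z := by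
      simpa using ((hasDerivAt_id z).sub_const R).const_mul e
    have h2 := ((h1.rpow_const (p := p) (Or.inl (hz z hz').ne')).const_mul e).div_const p
    have h3 : e * (e * p * (e * (z - R)) ^ (p - 1)) / p = (e * (z - R)) ^ (p - 1) := by
      rw [div_eq_iff hp.ne']
      linear_combination ((e * (z - R)) ^ (p - 1) * p) * he2
    exact h3 ▸ h2
  have hI := intervalIntegral.integral_eq_sub_of_hasDerivAt hd hi
  rw [intervalIntegral.integral_of_le hαβ] at hI
  rw [← ofReal_integral_eq_lintegral_ofReal ((intervalIntegrable_iff_integrableOn_Ioc_of_le hαβ).1 hi), hI]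
  · apply ENNReal.ofReal_le_ofReal
    have b : ∀ z ∈ Icc α β, 0 ≤ (e * (z - R)) ^ p ∧ (e * (z - R)) ^ p ≤ R ^ p := by
      intro z hz'
      have h0 := hz z hz'
      refine ⟨by positivity, Real.rpow_le_rpow h0.le ?_ hp.le⟩
      calc e * (z - R) ≤ |e * (z - R)| := le_abs_self _
        _ = |z - R| := by rw [abs_mul, he, one_mul]
        _ ≤ R := by rw [abs_le]; constructor <;> linarith [hz'.1, hz'.2]
    rw [← sub_div]
    gcongr
    have b1 := b α ⟨le_rfl, hαβ⟩
    have b2 := b β ⟨hαβ, le_rfl⟩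
    rcases eq_or_eq_neg_of_abs_eq he with h | h <;> subst h <;> linarith [b1.1, b1.2, b2.1, b2.2]
  · filter_upwards [ae_restrict_mem measurableSet_Ioc] with z hz'
    have := hz z ⟨hz'.1.le, hz'.2⟩
    simp only [Pi.zero_apply]; positivity


/-- the cut-off shifted harmonic extension -/
def psE {n : ℕ} (e R : ℝ) (φ : En n → ℝ) (x : En n) (z : ℝ) : ℝ := tau e R (R / 8) z * Pconv n (1/2) (e * (z - R)) φ x

/-- localized flux -/
def GE {n : ℕ} (s : ℝ) (V : En n → ℝ → ℝ) (f : En n → ℝ) (j e R : ℝ) (φ : En n → ℝ) (z : ℝ) : ℝ :=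
  ∫ x, f (j⁻¹ • x) * (z ^ (1 - 2 * s) * (deriv (V x) z * psE e R φ x z - V x z * deriv (psE e R φ x) z))

lemma est2 {n : ℕ} {s : ℝ} {F V : En n → ℝ → ℝ} {w : En n → ℝ≥0∞} (H : Hyp n s F V w) {φ f : En n → ℝ}
    (hφ : ContDiff ℝ (⊤ : ℕ∞) φ) (hφc : HasCompactSupport φ)
    (hf : ContDiff ℝ (⊤ : ℕ∞) f) (hfc : HasCompactSupport f) (hf1 : ∀ x, |f x| ≤ 1) :
    ∃ D C : ℝ, 0 ≤ D ∧ 0 ≤ C ∧ ∀ e R j α β : ℝ, |e| = 1 → 1 ≤ R → 1 ≤ j → α ≤ β → R / 2 ≤ α → β ≤ 3 * R / 2 →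
      (∀ z ∈ Icc α β, 0 < e * (z - R)) →
      |GE s V f j e R φ β - GE s V f j e R φ α - ∫ z in Ioc α β, ∫ x, f (j⁻¹ • x) * F x z * psE e R φ x z|
      ≤ D * R ^ (-(s / 2)) + C * (2 * R) ^ (2 - s) / j := by
  obtain ⟨C, hC, hcg⟩ := cutgreen hf hfc hf1
  obtain ⟨D, hD, hLs⟩ := bnd_Ls2 H hφ hφc
  obtain ⟨N, hN⟩ := WB_all H.hw hφ hφc
  have hs0 := H.hs0
  have hs1 := H.hs1
  refine ⟨2 ^ (1 - s) * (D * (2 / s) + D), C * N, by positivity, by positivity, fun e R j α β he hR hj hαβ h1 h2 hz => ?_⟩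
  have hR0 : 0 < R := by linarith
  have hH := Sm_Pconv (1/2) hφ hφc
  have hΨ := Sm_shift e R hH
  have hψ : Sm (Ie e R) (psE e R φ) := (Sm.of_z (tau_contDiff e R (R / 8)).contDiffOn).mul hΨ
  have hα0 : 0 < α := by linarith
  have hIc : ∀ z ∈ Ioc α β, z ∈ Icc α β := fun z hz => ⟨hz.1.le, hz.2⟩
  have main := hcg s F V (psE e R φ) (Ie e R) w α β j N
    (fun z => ENNReal.ofReal (z ^ (1 - 2 * s) * (D / R * (e * (z - R)) ^ (s / 2 - 1) + D / R ^ 2))) H.hs1 (Ie_open e R) (Ie_pos e R) H.hV' H.hF hψ H.heq H.hwm H.hVw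
    hαβ (fun z hz' => ⟨hα0.trans_le hz'.1, hz z hz'⟩) hj (fun z hz' => hLs e R z he hR (h1.trans hz'.1.le) (hz z (hIc z hz')))
    (fun z hz' => w_cut (tau_abs _ _ _ _) (hN (1/2) _ (by norm_num) (hz z (hIc z hz'))).1)
    (fun z hz' i => by
      have : ∀ x, pd i (fun y => psE e R φ y z) x = tau e R (R / 8) z * pd i (fun y => Pconv n (1/2) (e * (z - R)) φ y) x := by
        intro x
        exact pd_const_mul i _ ((hH.contx isOpen_Ioi (hz z (hIc z hz'))).differentiable (by simp) x)
      simp only [this]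
      exact w_cut (tau_abs _ _ _ _) ((hN (1/2) _ (by norm_num) (hz z (hIc z hz'))).2 i))
  have herr : (∫⁻ z in Ioc α β, ENNReal.ofReal (z ^ s) * ENNReal.ofReal (z ^ (1 - 2 * s) * (D / R * (e * (z - R)) ^ (s / 2 - 1) + D / R ^ 2)))
      ≤ ENNReal.ofReal (2 ^ (1 - s) * (D * (2 / s) + D) * R ^ (-(s / 2))) := by
    calc _ ≤ ∫⁻ z in Ioc α β, (ENNReal.ofReal ((2 * R) ^ (1 - s) * (D / R)) * ENNReal.ofReal ((e * (z - R)) ^ (s / 2 - 1))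
            + ENNReal.ofReal ((2 * R) ^ (1 - s) * (D / R ^ 2))) := by
          refine setLIntegral_mono' measurableSet_Ioc fun z hz' => ?_
          have hz0 : 0 < z := hα0.trans hz'.1
          have hez := hz z (hIc z hz')
          rw [← ENNReal.ofReal_mul (by positivity), ← mul_assoc, ← Real.rpow_add hz0, ← ENNReal.ofReal_mul (by positivity),
            ← ENNReal.ofReal_add (by positivity) (by positivity)]
          apply ENNReal.ofReal_le_ofReal
          rw [show s + (1 - 2 * s) = 1 - s by ring]
          calc _ ≤ (2 * R) ^ (1 - s) * (D / R * (e * (z - R)) ^ (s / 2 - 1) + D / R ^ 2) := by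
                gcongr
                linarith [hz'.2]
            _ = _ := by ring
      _ ≤ ENNReal.ofReal ((2 * R) ^ (1 - s) * (D / R)) * ENNReal.ofReal (R ^ (s / 2) / (s / 2))
            + ENNReal.ofReal ((2 * R) ^ (1 - s) * (D / R ^ 2)) * ENNReal.ofReal R := by
          rw [lintegral_add_right _ measurable_const, lintegral_const_mul' _ _ ENNReal.ofReal_ne_top]
          refine add_le_add (mul_le_mul' le_rfl (pow_int he hR0 (by linarith) hαβ h1 h2 hz)) ?_
          rw [setLIntegral_const, Real.volume_Ioc]
          refine mul_le_mul' le_rfl (ENNReal.ofReal_le_ofReal (by linarith))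
      _ = ENNReal.ofReal ((2 * R) ^ (1 - s) * (D / R) * (R ^ (s / 2) / (s / 2)) + (2 * R) ^ (1 - s) * (D / R ^ 2) * R) := by
          rw [← ENNReal.ofReal_mul (by positivity), ← ENNReal.ofReal_mul (by positivity), ← ENNReal.ofReal_add (by positivity) (by positivity)]
      _ ≤ _ := by
          apply ENNReal.ofReal_le_ofReal
          have a1 : (2 * R) ^ (1 - s) = 2 ^ (1 - s) * (R * R ^ (-s)) := by
            rw [Real.mul_rpow (by norm_num) hR0.le, sub_eq_add_neg, Real.rpow_add hR0, Real.rpow_one]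
          have a2 : R ^ (-s) * R ^ (s / 2) = R ^ (-(s / 2)) := by
            rw [← Real.rpow_add hR0]; congr 1; ring
          have a3 : R ^ (-s) ≤ R ^ (-(s / 2)) := Real.rpow_le_rpow_of_exponent_le hR (by linarith)
          rw [a1]
          calc _ = 2 ^ (1 - s) * (D * (2 / s) * (R ^ (-s) * R ^ (s / 2)) + D * R ^ (-s)) := by field_simp
            _ ≤ 2 ^ (1 - s) * (D * (2 / s) * R ^ (-(s / 2)) + D * R ^ (-(s / 2))) := by
                rw [a2]; gcongr
            _ = _ := by ring
  have h3 : C * N * β ^ (2 - s) / j ≤ C * N * (2 * R) ^ (2 - s) / j := by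
    have : 0 ≤ β := hα0.le.trans hαβ
    gcongr <;> linarith
  have := main.trans (add_le_add herr (ENNReal.ofReal_le_ofReal h3))
  rw [← ENNReal.ofReal_add (by positivity) (by positivity)] at this
  exact (ENNReal.ofReal_le_ofReal_iff (by positivity)).1 this

lemma GE_near {n : ℕ} {s : ℝ} {V : En n → ℝ → ℝ} {φ f : En n → ℝ}
    (hφ : ContDiff ℝ (⊤ : ℕ∞) φ) (hφc : HasCompactSupport φ) {j e R t : ℝ} (he : e * e = 1) (ht : 0 < t) (htR : t < R / 8) :
    GE s V f j e R φ (R + e * t) = ∫ x, f (j⁻¹ • x) * ((R + e * t) ^ (1 - 2 * s) * (deriv (V x) (R + e * t) * Pconv n (1/2) t φ x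
      - V x (R + e * t) * (e * deriv (fun r => Pconv n (1/2) r φ x) t))) := by
  have hH := Sm_Pconv (1/2) hφ hφc
  have h0 : e * (R + e * t - R) = t := by linear_combination t * he
  have hz : R + e * t ∈ Ie e R := ⟨by
    have : |e| ≤ 1 := by
      rw [← Real.sqrt_sq_eq_abs, pow_two, he]; simp
    have := neg_le_of_abs_le this
    nlinarith, by rw [h0]; exact ht⟩
  unfold GE
  congr 1; ext x
  have d : deriv (psE e R φ x) (R + e * t) = e * deriv (fun r => Pconv n (1/2) r φ x) t := by
    have := deriv_cut (Ie_open e R) (Sm_shift e R hH) (tau_contDiff e R (R / 8)) x hz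
    have d2 := (deriv_shift hH x hz.2).deriv
    rw [h0] at d2
    unfold psE
    rw [this, d2, dtau_zero (by linarith) (by rw [h0]; exact htR), tau_one (by linarith) (by rw [h0]; exact htR.le)]
    ring
  rw [d, psE, h0, tau_one (by linarith) (by rw [h0]; exact htR.le), one_mul]

lemma GE_far {n : ℕ} {s : ℝ} {V : En n → ℝ → ℝ} {φ f : En n → ℝ}
    (hφ : ContDiff ℝ (⊤ : ℕ∞) φ) (hφc : HasCompactSupport φ) {j e R z : ℝ} (hR : 0 < R) (hz0 : 0 < z) (hz : e * (z - R) = R / 2) :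
    GE s V f j e R φ z = 0 := by
  have hH := Sm_Pconv (1/2) hφ hφc
  have hzI : z ∈ Ie e R := ⟨hz0, by rw [hz]; linarith⟩
  have d : ∀ x, deriv (psE e R φ x) z = 0 := by
    intro x
    have := deriv_cut (Ie_open e R) (Sm_shift e R hH) (tau_contDiff e R (R / 8)) x hzI
    unfold psE
    rw [this, dtau_zero' (by linarith) (by linarith), tau_zero (by linarith) (by linarith)]
    ring
  have d' : ∀ x, psE e R φ x z = 0 := by
    intro x; rw [psE, tau_zero (by linarith) (by linarith), zero_mul]
  simp [GE, d, d']

lemma lim_GE {n : ℕ} {s : ℝ} {F V : En n → ℝ → ℝ} {w : En n → ℝ≥0∞} (H : Hyp n s F V w) {φ f : En n → ℝ}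
    (hφ : ContDiff ℝ (⊤ : ℕ∞) φ) (hφc : HasCompactSupport φ)
    (hf : ContDiff ℝ (⊤ : ℕ∞) f) (hfc : HasCompactSupport f) (hf1 : ∀ x, |f x| ≤ 1) {j R : ℝ} (hj : 1 ≤ j) (hR : 1 ≤ R)
    (hjφ : ∀ x, f (j⁻¹ • x) * φ x = φ x) :
    Tendsto (fun t => GE s V f j 1 R φ (R + 1 * t) + GE s V f j (-1) R φ (R + (-1) * t)) (𝓝[>] 0)
      (𝓝 (2 * ∫ x, R ^ (1 - 2 * s) * deriv (V x) R * φ x)) := by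
  have hH := Sm_Pconv (1/2) hφ hφc
  have hcs := scale_hcs hfc hj
  have hcf := (scale_cont hf j).continuous
  set K := tsupport (fun x => f (j⁻¹ • x)) with hKdef
  obtain ⟨M, hM, hb⟩ := phi_bdd hφ hφc
  obtain ⟨C2, hC2, h2⟩ := Pconv_deriv_sup (n := n) (s := 1/2) (by norm_num) (by norm_num) hφ hφc
  have hdH : ∀ x t, 0 < t → t ≤ 1 → |deriv (fun r => Pconv n (1/2) r φ x) t| ≤ C2 := by
    intro x t ht ht1
    have := h2 x t ht ht1
    rw [show (1:ℝ) - 2 * (1/2) = 0 by norm_num, Real.rpow_zero, one_mul] at this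
    exact this
  have W1 : Sm (Ioi 0) (fun x z => z ^ (1 - 2 * s) * deriv (V x) z) := (Sm.rp subset_rfl _).mul (H.hV'.dz isOpen_Ioi)
  have W2 : Sm (Ioi 0) (fun x z => z ^ (1 - 2 * s) * V x z) := (Sm.rp subset_rfl _).mul H.hV'
  have hsub : K ×ˢ Icc (R / 2) (3 * R / 2) ⊆ (univ : Set (En n)) ×ˢ Ioi 0 := by
    rintro p ⟨-, hp⟩
    exact ⟨mem_univ _, by have := hp.1; simp only [mem_Ioi]; linarith⟩
  obtain ⟨A1, hA1⟩ := (hcs.isCompact.prod isCompact_Icc).exists_bound_of_continuousOn (W1.contOn.mono hsub)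
  obtain ⟨A2, hA2⟩ := (hcs.isCompact.prod isCompact_Icc).exists_bound_of_continuousOn (W2.contOn.mono hsub)
  have key : ∀ e : ℝ, |e| = 1 → ∀ t, 0 < t → t < 1 / 8 →
    Integrable (fun x => f (j⁻¹ • x) * ((R + e * t) ^ (1 - 2 * s) * (deriv (V x) (R + e * t) * Pconv n (1/2) t φ x
      - V x (R + e * t) * (e * deriv (fun r => Pconv n (1/2) r φ x) t)))) ∧ ∀ x, |f (j⁻¹ • x) * ((R + e * t) ^ (1 - 2 * s) * (deriv (V x) (R + e * t) * Pconv n (1/2) t φ x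
      - V x (R + e * t) * (e * deriv (fun r => Pconv n (1/2) r φ x) t)))| ≤ K.indicator (fun _ => |A1| * M + |A2| * C2) x := by
    intro e he t ht ht8
    have het : |e * t| < 1 / 8 := by rw [abs_mul, he, one_mul, abs_of_pos ht]; exact ht8
    rw [abs_lt] at het
    have hz : 0 < R + e * t := by linarith
    constructor
    · have c1 := (H.hV'.contx isOpen_Ioi hz).continuous
      have c2 := ((H.hV'.dz isOpen_Ioi).contx isOpen_Ioi hz).continuous
      have c3 := (hH.contx isOpen_Ioi ht).continuous
      have c4 := ((hH.dz isOpen_Ioi).contx isOpen_Ioi ht).continuous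
      exact Continuous.integrable_of_hasCompactSupport (by fun_prop) hcs.mul_right
    · intro x
      by_cases hx : x ∈ K
      · rw [indicator_of_mem hx]
        have a1 := hA1 (x, R + e * t) ⟨hx, by constructor <;> simp only [] <;> linarith⟩
        have a2 := hA2 (x, R + e * t) ⟨hx, by constructor <;> simp only [] <;> linarith⟩
        rw [Real.norm_eq_abs] at a1 a2
        calc _ = |f (j⁻¹ • x)| * |((R + e * t) ^ (1 - 2 * s) * deriv (V x) (R + e * t)) * Pconv n (1/2) t φ x
              - ((R + e * t) ^ (1 - 2 * s) * V x (R + e * t)) * (e * deriv (fun r => Pconv n (1/2) r φ x) t)| := by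
              rw [abs_mul]; congr 2; ring
          _ ≤ 1 * (|A1| * M + |A2| * C2) := by
              refine mul_le_mul (hf1 _) ((abs_sub _ _).trans ?_) (abs_nonneg _) zero_le_one
              rw [abs_mul _ (Pconv n (1/2) t φ x), abs_mul _ (e * _), abs_mul e, he, one_mul]
              have b1 := hb (1/2) t (by norm_num) ht x
              have b2 := hdH x t ht (by linarith)
              have a1' := a1.trans (le_abs_self A1)
              have a2' := a2.trans (le_abs_self A2)
              gcongr
          _ = _ := one_mul _
      · have : f (j⁻¹ • x) = 0 := image_eq_zero_of_notMem_tsupport (f := fun x => f (j⁻¹ • x)) hx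
        rw [this, indicator_of_notMem hx]; simp
  have hlim : 2 * ∫ x, R ^ (1 - 2 * s) * deriv (V x) R * φ x = ∫ x, f (j⁻¹ • x) * (R ^ (1 - 2 * s) * deriv (V x) R * (2 * φ x)) := by
    rw [← integral_const_mul]
    congr 1; ext x
    conv_lhs => rw [← hjφ x]
    ring
  rw [hlim]
  have hev : ∀ᶠ t in 𝓝[>] (0:ℝ), t ∈ Ioo (0:ℝ) (1 / 8) := Ioo_mem_nhdsGT (by norm_num)
  have hT : Tendsto (fun t => ∫ x, (f (j⁻¹ • x) * ((R + 1 * t) ^ (1 - 2 * s) * (deriv (V x) (R + 1 * t) * Pconv n (1/2) t φ x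
      - V x (R + 1 * t) * (1 * deriv (fun r => Pconv n (1/2) r φ x) t)))
      + f (j⁻¹ • x) * ((R + (-1) * t) ^ (1 - 2 * s) * (deriv (V x) (R + (-1) * t) * Pconv n (1/2) t φ x
      - V x (R + (-1) * t) * ((-1) * deriv (fun r => Pconv n (1/2) r φ x) t))))) (𝓝[>] 0)
      (𝓝 (∫ x, f (j⁻¹ • x) * (R ^ (1 - 2 * s) * deriv (V x) R * (2 * φ x)))) := by
    refine tendsto_integral_filter_of_dominated_convergence
      (fun x => K.indicator (fun _ => |A1| * M + |A2| * C2) x + K.indicator (fun _ => |A1| * M + |A2| * C2) x) ?_ ?_ ?_ ?_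
    · filter_upwards [hev] with t ht
      exact ((key 1 (by simp) t ht.1 ht.2).1.add (key (-1) (by simp) t ht.1 ht.2).1).aestronglyMeasurable
    · filter_upwards [hev] with t ht
      refine Eventually.of_forall fun x => (abs_add_le _ _).trans ?_
      exact add_le_add ((key 1 (by simp) t ht.1 ht.2).2 x) ((key (-1) (by simp) t ht.1 ht.2).2 x)
    · have : Integrable (K.indicator (fun _ => |A1| * M + |A2| * C2)) (volume : Measure (En n)) :=
        (integrable_indicator_iff hcs.isCompact.measurableSet).2 (integrableOn_const (hcs.isCompact.measure_lt_top.ne))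
      exact this.add this
    · refine Eventually.of_forall fun x => ?_
      have hRI : R ∈ Ioi (0:ℝ) := by simp only [mem_Ioi]; linarith
      have tz : ∀ e : ℝ, Tendsto (fun t : ℝ => R + e * t) (𝓝[>] 0) (𝓝 R) := by
        intro e
        have : Tendsto (fun t : ℝ => R + e * t) (𝓝 0) (𝓝 (R + e * 0)) := Continuous.tendsto (by fun_prop) 0
        rw [mul_zero, add_zero] at this
        exact this.mono_left nhdsWithin_le_nhds
      have l1 : ∀ e : ℝ, Tendsto (fun t : ℝ => (R + e * t) ^ (1 - 2 * s) * deriv (V x) (R + e * t)) (𝓝[>] 0) (𝓝 (R ^ (1 - 2 * s) * deriv (V x) R)) :=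
        fun e => ((W1.contz isOpen_Ioi x hRI).continuousAt.tendsto).comp (tz e)
      have l2 : ∀ e : ℝ, Tendsto (fun t : ℝ => (R + e * t) ^ (1 - 2 * s) * V x (R + e * t)) (𝓝[>] 0) (𝓝 (R ^ (1 - 2 * s) * V x R)) :=
        fun e => ((W2.contz isOpen_Ioi x hRI).continuousAt.tendsto).comp (tz e)
      have l3 := Pconv_tendsto n H.hn (s := 1/2) (by norm_num) hφ.continuous hφc x
      have l4 : Tendsto (fun t : ℝ => ((R + (-1) * t) ^ (1 - 2 * s) * V x (R + (-1) * t) - (R + 1 * t) ^ (1 - 2 * s) * V x (R + 1 * t))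
          * deriv (fun r => Pconv n (1/2) r φ x) t) (𝓝[>] 0) (𝓝 0) := by
        have l5 := (l2 (-1)).sub (l2 1)
        rw [sub_self] at l5
        refine l5.zero_mul_isBoundedUnder_le ?_
        refine isBoundedUnder_of_eventually_le (a := C2) ?_
        filter_upwards [hev] with t ht
        exact hdH x t ht.1 (by linarith [ht.2])
      have l6 := ((((l1 1).add (l1 (-1))).mul l3).add l4).const_mul (f (j⁻¹ • x))
      have e1 : f (j⁻¹ • x) * (R ^ (1 - 2 * s) * deriv (V x) R * (2 * φ x)) = f (j⁻¹ • x) * ((R ^ (1 - 2 * s) * deriv (V x) R + R ^ (1 - 2 * s) * deriv (V x) R) * φ x + 0) := by ring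
      rw [e1]
      refine l6.congr fun t => ?_
      ring
  refine hT.congr' ?_
  filter_upwards [hev] with t ht
  have htR : t < R / 8 := by linarith [ht.2]
  rw [GE_near hφ hφc (by norm_num) ht.1 htR, GE_near hφ hφc (by norm_num) ht.1 htR]
  exact integral_add (key 1 (by simp) t ht.1 ht.2).1 (key (-1) (by simp) t ht.1 ht.2).1


lemma I_bound {n : ℕ} {s : ℝ} {F V : En n → ℝ → ℝ} {w : En n → ℝ≥0∞} (H : Hyp n s F V w) {φ f : En n → ℝ}
    {M : ℝ} (hM : 0 ≤ M) (hb : ∀ σ z : ℝ, 0 < σ → 0 < z → ∀ x, |Pconv n σ z φ x| ≤ M) (hf1 : ∀ x, |f x| ≤ 1)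
    {e R j α β : ℝ} (hR : 0 < R) (hα : R / 2 ≤ α) (hz : ∀ z ∈ Icc α β, 0 < e * (z - R)) :
    |∫ z in Ioc α β, ∫ x, f (j⁻¹ • x) * F x z * psE e R φ x z| ≤ M * ∫ z in Ioi (R / 2), ∫ x, |F x z| := by
  have h1 := H.hFi.abs
  have h2 : IntegrableOn (fun z => ∫ x, |F x z|) (Ioi 0) := h1.integral_prod_right
  have h3 : ∀ᵐ z ∂(volume.restrict (Ioi (0:ℝ))), Integrable (fun x => |F x z|) := h1.prod_left_ae
  have hsub : Ioc α β ⊆ Ioi (R / 2) := fun z hz => lt_of_le_of_lt hα hz.1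
  have hsub2 : Ioi (R / 2) ⊆ Ioi (0:ℝ) := Ioi_subset_Ioi (by linarith)
  have h4 : ∀ᵐ z ∂(volume.restrict (Ioc α β)), Integrable (fun x => |F x z|) := ae_restrict_of_ae_restrict_of_subset (hsub.trans hsub2) h3
  calc _ ≤ ∫ z in Ioc α β, M * ∫ x, |F x z| := by
        rw [← Real.norm_eq_abs]
        refine norm_integral_le_of_norm_le (f := fun z => ∫ x, f (j⁻¹ • x) * F x z * psE e R φ x z) ((h2.mono_set (hsub.trans hsub2)).const_mul M) ?_
        filter_upwards [h4, ae_restrict_mem measurableSet_Ioc] with z hi hz'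
        rw [← integral_const_mul]
        refine norm_integral_le_of_norm_le (f := fun x => f (j⁻¹ • x) * F x z * psE e R φ x z) (hi.const_mul M) (Eventually.of_forall fun x => ?_)
        have b := hb (1/2) _ (by norm_num) (hz z ⟨hz'.1.le, hz'.2⟩) x
        rw [Real.norm_eq_abs, abs_mul, abs_mul, psE, abs_mul]
        calc _ ≤ 1 * |F x z| * (1 * M) := by
              gcongr
              · exact hf1 _
              · exact tau_abs _ _ _ _
          _ = _ := by ring
    _ = M * ∫ z in Ioc α β, ∫ x, |F x z| := integral_const_mul _ _
    _ ≤ _ := by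
        refine mul_le_mul_of_nonneg_left ?_ hM
        refine setIntegral_mono_set (h2.mono_set hsub2) ?_ (LE.le.eventuallyLE hsub)
        exact Eventually.of_forall fun z => integral_nonneg fun x => abs_nonneg _

lemma tail_zero {n : ℕ} {s : ℝ} {F V : En n → ℝ → ℝ} {w : En n → ℝ≥0∞} (H : Hyp n s F V w) :
    Tendsto (fun R : ℝ => ∫ z in Ioi (R / 2), ∫ x, |F x z|) atTop (𝓝 0) := by
  have h2 : IntegrableOn (fun z => ∫ x, |F x z|) (Ioi 0) := H.hFi.abs.integral_prod_right
  have hT : Tendsto (fun R : ℝ => R / 2) atTop atTop := tendsto_id.atTop_div_const (by norm_num)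
  have h3 := intervalIntegral_tendsto_integral_Ioi 0 h2 hT
  have h4 := (tendsto_const_nhds (x := ∫ z in Ioi (0:ℝ), ∫ x, |F x z|)).sub h3
  rw [sub_self] at h4
  refine h4.congr' ?_
  filter_upwards [eventually_ge_atTop 0] with R hR
  have := intervalIntegral.integral_Ioi_sub_Ioi h2 (show (0:ℝ) ≤ R / 2 by linarith)
  linarith

lemma part2 {n : ℕ} {s : ℝ} {F V : En n → ℝ → ℝ} {w : En n → ℝ≥0∞} (H : Hyp n s F V w) {φ : En n → ℝ}
    (hφ : ContDiff ℝ (⊤ : ℕ∞) φ) (hφc : HasCompactSupport φ) :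
    Tendsto (fun R => ∫ x, R ^ (1 - 2 * s) * deriv (V x) R * φ x) atTop (𝓝 0) := by
  obtain ⟨f, hf, hfc, hf1, hf2⟩ := bump_exists n
  obtain ⟨D, C, hD, hC, hest⟩ := est2 H hφ hφc hf hfc hf1
  obtain ⟨r, hr⟩ := hφc.isCompact.isBounded.exists_norm_le
  obtain ⟨M, hM, hb⟩ := phi_bdd hφ hφc
  have bound : ∀ R : ℝ, 1 ≤ R → |∫ x, R ^ (1 - 2 * s) * deriv (V x) R * φ x| ≤ D * R ^ (-(s / 2)) + M * ∫ z in Ioi (R / 2), ∫ x, |F x z| := by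
    intro R hR
    have hR0 : 0 < R := by linarith
    have hj : ∀ j : ℝ, |r| + 1 ≤ j → |2 * ∫ x, R ^ (1 - 2 * s) * deriv (V x) R * φ x| ≤
        2 * ((D * R ^ (-(s / 2)) + C * (2 * R) ^ (2 - s) / j) + M * ∫ z in Ioi (R / 2), ∫ x, |F x z|) := by
      intro j hj
      have hj1 : 1 ≤ j := by linarith [abs_nonneg r]
      have hjφ : ∀ x, f (j⁻¹ • x) * φ x = φ x := by
        intro x
        by_cases hx : x ∈ tsupport φ
        · rw [hf2, one_mul]
          rw [norm_smul, norm_inv, Real.norm_eq_abs, abs_of_pos (by linarith), inv_mul_le_iff₀ (by linarith)]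
          linarith [hr x hx, le_abs_self r]
        · rw [image_eq_zero_of_notMem_tsupport hx, mul_zero]
      refine le_of_tendsto (lim_GE H hφ hφc hf hfc hf1 hj1 hR hjφ).abs ?_
      filter_upwards [Ioo_mem_nhdsGT (show (0:ℝ) < 1 / 8 by norm_num)] with t ht
      have p1 : ∀ z ∈ Icc (R + 1 * t) (3 * R / 2), 0 < 1 * (z - R) := fun z hz => by linarith [hz.1, ht.1]
      have p2 : ∀ z ∈ Icc (R / 2) (R + (-1) * t), 0 < (-1) * (z - R) := fun z hz => by linarith [hz.2, ht.1]
      have a1 := hest 1 R j (R + 1 * t) (3 * R / 2) (by simp) hR hj1 (by linarith [ht.2]) (by linarith [ht.1]) le_rfl p1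
      have a2 := hest (-1) R j (R / 2) (R + (-1) * t) (by simp) hR hj1 (by linarith [ht.2]) le_rfl (by linarith [ht.1]) p2
      have b1 := I_bound H hM hb hf1 (j := j) hR0 (by linarith [ht.1]) p1
      have b2 := I_bound H hM hb hf1 (j := j) hR0 le_rfl p2
      rw [GE_far hφ hφc hR0 (by linarith) (by ring)] at a1
      rw [GE_far hφ hφc hR0 (z := R / 2) (by linarith) (by ring)] at a2
      rw [abs_le] at *
      constructor <;> linarith [a1.1, a1.2, a2.1, a2.2, b1.1, b1.2, b2.1, b2.2]
    have hlim : Tendsto (fun j : ℝ => 2 * ((D * R ^ (-(s / 2)) + C * (2 * R) ^ (2 - s) / j) + M * ∫ z in Ioi (R / 2), ∫ x, |F x z|)) atTop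
        (𝓝 (2 * ((D * R ^ (-(s / 2)) + 0) + M * ∫ z in Ioi (R / 2), ∫ x, |F x z|))) :=
      ((tendsto_const_nhds.add (tendsto_const_nhds.div_atTop tendsto_id)).add tendsto_const_nhds).const_mul 2
    have := ge_of_tendsto hlim (eventually_atTop.2 ⟨_, hj⟩)
    rw [abs_mul, abs_two] at this
    linarith
  rw [tendsto_zero_iff_norm_tendsto_zero]
  have t1 : Tendsto (fun R : ℝ => D * R ^ (-(s / 2)) + M * ∫ z in Ioi (R / 2), ∫ x, |F x z|) atTop (𝓝 0) := by
    have := ((tendsto_rpow_neg_atTop (half_pos H.hs0)).const_mul D).add ((tail_zero H).const_mul M)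
    simpa using this
  refine tendsto_of_tendsto_of_tendsto_of_le_of_le' tendsto_const_nhds t1 (Eventually.of_forall fun _ => norm_nonneg _) ?_
  filter_upwards [eventually_ge_atTop 1] with R hR using bound R hR


lemma fub {n : ℕ} {s : ℝ} {F V : En n → ℝ → ℝ} {w : En n → ℝ≥0∞} (H : Hyp n s F V w) {φ : En n → ℝ}
    (hφ : ContDiff ℝ (⊤ : ℕ∞) φ) (hφc : HasCompactSupport φ) :
    (∫ p, F p.1 p.2 * Pconv n s p.2 φ p.1 ∂((volume : Measure (En n)).prod (volume.restrict (Ioi 0))))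
      = ∫ x, (∫ z in Ioi (0 : ℝ), Pconv n s z (fun y => F y z) x) * φ x := by
  set ν : Measure (En n × ℝ) := (volume : Measure (En n)).prod (volume.restrict (Ioi 0)) with hν
  have hs0 := H.hs0
  have hmem : ∀ᵐ p ∂ν, p.2 ∈ Ioi (0:ℝ) := by
    rw [hν, ← slab_meas]
    filter_upwards [ae_restrict_mem (MeasurableSet.univ.prod measurableSet_Ioi)] with p hp using hp.2
  -- the triple function, with the `p` variable first
  have hmeas : AEStronglyMeasurable (fun q : (En n × ℝ) × En n => F q.1.1 q.1.2 * (Pker n s q.1.2 (q.1.1 - q.2) * φ q.2)) (ν.prod volume) := by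
    refine (H.hFi.aestronglyMeasurable.comp_fst).mul (Measurable.aestronglyMeasurable ?_)
    have h1 := (Pker_measurable n s).comp (g := fun p : En n × ℝ => Pker n s p.2 p.1)
      (f := fun q : (En n × ℝ) × En n => (q.1.1 - q.2, q.1.2)) (by fun_prop)
    exact h1.mul (hφ.continuous.measurable.comp measurable_snd)
  have hker : ∀ p : En n × ℝ, 0 < p.2 → Integrable (fun x => Pker n s p.2 (p.1 - x) * φ x) := fun p hp =>
    Pconv_integrand_integrable n s hp hφ.continuous hφc p.1
  obtain ⟨M, hM0⟩ := hφc.exists_bound_of_continuous hφ.continuous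
  have hM : ∀ x, |φ x| ≤ |M| := fun x => (hM0 x).trans (le_abs_self M)
  have hInteg : Integrable (fun q : (En n × ℝ) × En n => F q.1.1 q.1.2 * (Pker n s q.1.2 (q.1.1 - q.2) * φ q.2)) (ν.prod volume) := by
    rw [integrable_prod_iff hmeas]
    constructor
    · filter_upwards [hmem] with p hp
      exact (hker p hp).const_mul _
    · refine Integrable.mono' (H.hFi.abs.mul_const |M|) hmeas.norm.integral_prod_right' ?_
      filter_upwards [hmem] with p hp
      rw [Real.norm_eq_abs, abs_of_nonneg (integral_nonneg fun _ => norm_nonneg _)]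
      simp only [norm_mul, Real.norm_eq_abs]
      rw [integral_const_mul]
      gcongr
      have := Pconv_le n hs0 hp hφ.continuous hφc hM p.1
      refine le_trans (le_of_eq ?_) this
      unfold Pconv
      congr 1; ext x
      rw [abs_of_nonneg (Pker_nonneg n hs0 hp _)]
  have e1 : ∫ p, F p.1 p.2 * Pconv n s p.2 φ p.1 ∂ν = ∫ p : En n × ℝ, (∫ x : En n, F p.1 p.2 * (Pker n s p.2 (p.1 - x) * φ x)) ∂ν := by
    congr 1; ext p
    rw [integral_const_mul]; rfl
  rw [e1, integral_integral_swap hInteg]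
  have hsw := hInteg.prod_left_ae
  refine integral_congr_ae ?_
  filter_upwards [hsw] with x hx
  by_cases h0 : φ x = 0
  · simp [h0]
  have hx' : Integrable (fun p : En n × ℝ => F p.1 p.2 * Pker n s p.2 (p.1 - x)) ν := by
    have := hx.mul_const (φ x)⁻¹
    refine this.congr (Eventually.of_forall fun p => ?_)
    simp only []
    field_simp
  have e2 : ∫ p, F p.1 p.2 * (Pker n s p.2 (p.1 - x) * φ x) ∂ν = (∫ p, F p.1 p.2 * Pker n s p.2 (p.1 - x) ∂ν) * φ x := by
    rw [← integral_mul_const]; congr 1; ext p; ring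
  rw [e2, hν, integral_prod_symm _ hx']
  congr 2; ext z
  unfold Pconv
  congr 1; ext y
  rw [mul_comm, Pker_symm]

/-- **Duhamel-type formula for the extension** (Proposition: Euclidean case).
If `V` solves `div_{x,z}(z^{1-2s} ∇̃V) = F` on `ℝⁿ×(0,∞)` with `V(·,0) = 0`, finite weighted
energy, and `F` absolutely integrable, then for every test function `φ`, the boundary-flux
difference converges (as `ε → 0⁺`, `R → ∞`) to `∬ F Φ`, which equals
`∫ (∫₀^∞ P_z^{(s)} ∗ F(·,z) dz) φ`. -/
theorem duhamel_formula (n : ℕ) (hn : 1 ≤ n) (s : ℝ) (hs0 : 0 < s) (hs1 : s < 1)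
    (F : En n → ℝ → ℝ) (V : En n → ℝ → ℝ)
    (hFsm : ContDiffOn ℝ (⊤ : ℕ∞) (fun p : En n × ℝ => F p.1 p.2) (univ ×ˢ Ioi 0))
    (hFint : ∫⁻ p in (univ : Set (En n)) ×ˢ Ioi (0 : ℝ),
      ENNReal.ofReal |F p.1 p.2| < ⊤)
    (hVsm : ContDiffOn ℝ (⊤ : ℕ∞) (fun p : En n × ℝ => V p.1 p.2) (univ ×ˢ Ici 0))
    (hVen : ∫⁻ p in (univ : Set (En n)) ×ˢ Ioi (0 : ℝ),
      ENNReal.ofReal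
        (((∑ i, (pd i (fun y => V y p.2) p.1) ^ 2) + (deriv (V p.1) p.2) ^ 2)
          * p.2 ^ (1 - 2 * s)) < ⊤)
    (hV0 : ∀ x, V x 0 = 0)
    (heq : ∀ x, ∀ z, 0 < z → LsOp s V x z = F x z)
    (φ : En n → ℝ) (hφ : ContDiff ℝ (⊤ : ℕ∞) φ) (hφc : HasCompactSupport φ) :
    Tendsto
      (fun p : ℝ × ℝ =>
        (∫ x, p.2 ^ (1 - 2 * s) * deriv (V x) p.2 * φ x)
          - ∫ x, p.1 ^ (1 - 2 * s) * deriv (V x) p.1 * φ x)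
      ((𝓝[>] (0 : ℝ)) ×ˢ atTop)
      (𝓝 (∫ p in (univ : Set (En n)) ×ˢ Ioi (0 : ℝ), F p.1 p.2 * Pconv n s p.2 φ p.1))
    ∧ (∫ p in (univ : Set (En n)) ×ˢ Ioi (0 : ℝ), F p.1 p.2 * Pconv n s p.2 φ p.1)
        = ∫ x, (∫ z in Ioi (0 : ℝ), Pconv n s z (fun y => F y z) x) * φ x := by
  have hE := eV_fin (s := s) (Sm.mono (I := Ici 0) (W := V) hVsm Ioi_subset_Ici_self) hVen
  have hFi : Integrable (fun p : En n × ℝ => F p.1 p.2) ((volume : Measure (En n)).prod (volume.restrict (Ioi 0))) := by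
    rw [← slab_meas]
    refine ⟨hFsm.continuousOn.aestronglyMeasurable (MeasurableSet.univ.prod measurableSet_Ioi), ?_⟩
    rw [hasFiniteIntegral_iff_norm]
    exact hFint
  have H : Hyp n s F V (fun x => ((Real.toNNReal (1/(2*s)):ℝ≥0):ℝ≥0∞) + eV s V x) :=
    { hn := hn, hs0 := hs0, hs1 := hs1, hV := hVsm, hF := hFsm, hV0 := hV0, heq := heq
      hwm := aemeasurable_const.add hE.1
      hw := WB_of _ hE.2
      hVw := fun x z hz => V_bound hs0 hVsm hV0 x hz
      hFi := hFi }
  rw [slab_meas]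
  refine ⟨?_, fub H hφ hφc⟩
  have h := ((part2 H hφ hφc).comp (tendsto_snd (f := 𝓝[>] (0:ℝ)) (g := atTop))).sub
    ((part1 H hφ hφc).comp (tendsto_fst (f := 𝓝[>] (0:ℝ)) (g := atTop)))
  rw [zero_sub, neg_neg] at h
  exact h
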